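/- arXiv:2403.09989 — 2 statements merged into one kernel-verified Lean document; each statement's English description precedes it below -/
import Mathlib

section
/- Fix 2 < r < 6. For any t ∈ ℝ, any interval I ⊆ [0, t], and any spacetime function F : I × ℝ³ → ℂ, one has ‖ ∫_I e^{i(t−s)Δ} F(s) ds ‖_{L^r_x(ℝ³)} ≤ C min{ ‖ |t−s|^{−3(1/2−1/r)} F(s) ‖_{L^1_s L^{r/(r−1)}_x(I×ℝ³)} , ‖ |t−s|^{−3(1/2−1/r)} F(s) ‖_{L^{r/(r−1)}_s L^{3r/(3r−1)}_x(I×ℝ³)} }, with C depending only on r. -/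
open MeasureTheory Set
open scoped ENNReal Real

noncomputable section

/-- The free Schrödinger propagator `e^{itΔ}` acting on functions on a `d`-dimensional space:
for `t ≠ 0`, `(e^{itΔ}f)(x) = (4πit)^{-d/2} ∫ e^{i|x-y|²/(4t)} f(y) dy`, and `e^{i0Δ}f = f`. -/
def schrod {E : Type*} [NormedAddCommGroup E] [MeasureSpace E] (d : ℕ) (t : ℝ) (f : E → ℂ) :
    E → ℂ :=
  if t = 0 then f
  else fun x =>
    (4 * (Real.pi : ℂ) * Complex.I * (t : ℂ)) ^ (-(d : ℂ) / 2) *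
      ∫ y, Complex.exp (Complex.I * ((‖x - y‖ ^ 2 : ℝ) : ℂ) / (4 * (t : ℂ))) * f y

/-- Mixed Lebesgue norm `‖u‖_{L^p_t L^q_x (I × space)}`. -/
def mixedNorm {α : Type*} [MeasurableSpace α] (ν : Measure α) (I : Set ℝ) (p q : ℝ≥0∞)
    (u : ℝ → α → ℂ) : ℝ≥0∞ :=
  if p = ∞ then essSup (fun t => eLpNorm (u t) q ν) (volume.restrict I)
  else (∫⁻ t in I, eLpNorm (u t) q ν ^ p.toReal) ^ (1 / p.toReal)

/-- Lorentz quasinorm `p^{1/q} ‖ λ · ν({g > λ})^{1/p} ‖_{L^q((0,∞), dλ/λ)}`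
for an `ℝ≥0∞`-valued function `g`. -/
def lorentzNorm {α : Type*} [MeasurableSpace α] (ν : Measure α) (p q : ℝ≥0∞)
    (g : α → ℝ≥0∞) : ℝ≥0∞ :=
  if q = ∞ then
    ⨆ l ∈ Set.Ioi (0 : ℝ), ENNReal.ofReal l * ν {x | ENNReal.ofReal l < g x} ^ p⁻¹.toReal
  else
    (p * ∫⁻ l in Set.Ioi (0 : ℝ),
        (ENNReal.ofReal l * ν {x | ENNReal.ofReal l < g x} ^ p⁻¹.toReal) ^ q.toReal /
          ENNReal.ofReal l) ^ q⁻¹.toReal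

/-- Lorentz quasinorm `‖f‖_{L^{p,q}}` of a scalar function. -/
def lorentzNormC {α : Type*} [MeasurableSpace α] (ν : Measure α) (p q : ℝ≥0∞)
    (f : α → ℂ) : ℝ≥0∞ :=
  lorentzNorm ν p q fun x => (‖f x‖₊ : ℝ≥0∞)

/-- Lorentz-in-time mixed norm `‖u‖_{L^{p,q}_t L^r_x (I × space)}`. -/
def lorentzMixedNorm {α : Type*} [MeasurableSpace α] (ν : Measure α) (I : Set ℝ)
    (p q r : ℝ≥0∞) (u : ℝ → α → ℂ) : ℝ≥0∞ :=
  lorentzNorm (volume.restrict I) p q fun t => eLpNorm (u t) r ν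

/-- The nonlinearity `|f|^a f`. -/
def nonlin {E : Type*} (a : ℝ) (f : E → ℂ) : E → ℂ := fun x => ((‖f x‖ ^ a : ℝ) : ℂ) * f x

abbrev E3 := EuclideanSpace ℝ (Fin 3)

def kerV (σ : ℝ) (ξ y : E3) : ℂ :=
  Complex.exp (Complex.I * ((σ * ‖y‖ ^ 2 - inner ℝ ξ y : ℝ) : ℂ))

def Vt (φ : E3 → ℂ) (σ : ℝ) (ξ : E3) : ℂ := ∫ y, kerV σ ξ y * φ y

lemma kerV_norm (σ : ℝ) (ξ y : E3) : ‖kerV σ ξ y‖ = 1 := by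
  unfold kerV
  rw [mul_comm]
  exact Complex.norm_exp_ofReal_mul_I _

lemma kerV_enorm (σ : ℝ) (ξ y : E3) : ‖kerV σ ξ y‖ₑ = 1 := by
  rw [← ofReal_norm, kerV_norm]; simp

lemma kerV_cont : Continuous (fun p : ℝ × E3 × E3 => kerV p.1 p.2.1 p.2.2) := by
  unfold kerV
  fun_prop

lemma bil (f g : E3 → ℂ) (hf : Integrable f) (hg : Integrable g) (b : ℂ) (hb : 0 < b.re) :
    ‖∫ y, Complex.exp (-b * ‖y‖ ^ 2) * (Vt f 0 y * (starRingEnd ℂ) (Vt g 0 y))‖ₑ ≤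
      ∫⁻ p : E3 × E3, ‖f p.1‖ₑ * ‖g p.2‖ₑ *
        ‖((π : ℂ) / b) ^ (3 / 2 : ℂ) * Complex.exp (-(‖p.2 - p.1‖ ^ 2 : ℝ) / (4 * b))‖ₑ := by
  have hcexp : Integrable (fun y : E3 => Complex.exp (-b * ‖y‖ ^ 2)) := by
    have := GaussianFourier.integrable_cexp_neg_mul_sq_norm_add (V := E3) hb 0 0
    simpa using this
  have hk0 : Continuous (fun p : E3 × E3 => kerV 0 p.1 p.2) := by
    unfold kerV; fun_prop
  have h1 : ∀ y, Complex.exp (-b * ‖y‖ ^ 2) * (Vt f 0 y * (starRingEnd ℂ) (Vt g 0 y)) =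
      ∫ p : E3 × E3, Complex.exp (-b * ‖y‖ ^ 2) *
        ((kerV 0 y p.1 * f p.1) * (starRingEnd ℂ) (kerV 0 y p.2 * g p.2)) := by
    intro y
    rw [integral_const_mul]
    congr 1
    unfold Vt
    rw [← integral_conj, ← integral_prod_mul]
    rfl
  simp_rw [h1]
  rw [integral_integral_swap]
  · refine (enorm_integral_le_lintegral_enorm _).trans (le_of_eq ?_)
    congr 1
    ext p
    have h2 : ∀ y, Complex.exp (-b * ‖y‖ ^ 2) *
        ((kerV 0 y p.1 * f p.1) * (starRingEnd ℂ) (kerV 0 y p.2 * g p.2)) =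
        (f p.1 * (starRingEnd ℂ) (g p.2)) *
          Complex.exp (-b * ‖y‖ ^ 2 + Complex.I * (inner ℝ (p.2 - p.1) y : ℝ)) := by
      intro y
      rw [Complex.exp_add]
      have : Complex.exp (Complex.I * (inner ℝ (p.2 - p.1) y : ℝ)) =
          kerV 0 y p.1 * (starRingEnd ℂ) (kerV 0 y p.2) := by
        unfold kerV
        rw [← Complex.exp_conj, ← Complex.exp_add]
        congr 1
        simp only [map_mul, Complex.conj_I, Complex.conj_ofReal]
        rw [inner_sub_left, real_inner_comm p.1 y, real_inner_comm p.2 y]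
        push_cast
        ring
      rw [this, map_mul]
      ring
    simp_rw [h2]
    rw [integral_const_mul, GaussianFourier.integral_cexp_neg_mul_sq_norm_add hb]
    rw [enorm_mul, enorm_mul]
    congr 2
    · simp
    · simp [Complex.I_sq]
  · have hprod : Integrable (fun p : E3 × E3 => ‖f p.1‖ * ‖g p.2‖) (volume.prod volume) :=
      hf.norm.mul_prod hg.norm
    have hh : Integrable (fun q : E3 × E3 × E3 => ‖Complex.exp (-b * ‖q.1‖ ^ 2)‖ *
        (‖f q.2.1‖ * ‖g q.2.2‖)) (volume.prod (volume.prod volume)) :=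
      hcexp.norm.mul_prod hprod
    refine hh.mono' ?_ ?_
    · have hf1 := hf.aestronglyMeasurable
      have hg1 := hg.aestronglyMeasurable
      have hF : AEStronglyMeasurable (fun q : E3 × E3 × E3 => f q.2.1)
          (volume.prod (volume.prod volume)) := (hf1.comp_fst (ν := volume)).comp_snd
      have hG : AEStronglyMeasurable (fun q : E3 × E3 × E3 => g q.2.2)
          (volume.prod (volume.prod volume)) := (hg1.comp_snd (μ := volume)).comp_snd
      have c1 : Continuous (fun q : E3 × E3 × E3 => kerV 0 q.1 q.2.1) := by unfold kerV; fun_prop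
      have c2 : Continuous (fun q : E3 × E3 × E3 => kerV 0 q.1 q.2.2) := by unfold kerV; fun_prop
      have c3 : Continuous (fun q : E3 × E3 × E3 => Complex.exp (-b * ‖q.1‖ ^ 2)) := by fun_prop
      exact c3.aestronglyMeasurable.mul ((c1.aestronglyMeasurable.mul hF).mul
        (Complex.continuous_conj.comp_aestronglyMeasurable (c2.aestronglyMeasurable.mul hG)))
    · refine Filter.Eventually.of_forall fun q => ?_
      simp [Function.uncurry, kerV_norm]

lemma gauss_real (ε : ℝ) (hε : 0 < ε) :
    ∫⁻ η : E3, ‖((π : ℂ) / (ε : ℂ)) ^ (3 / 2 : ℂ) *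
      Complex.exp (-(‖η‖ ^ 2 : ℝ) / (4 * (ε : ℂ)))‖ₑ = ENNReal.ofReal ((2 * π) ^ 3) := by
  have h0 : ∀ η : E3, ‖((π : ℂ) / (ε : ℂ)) ^ (3 / 2 : ℂ) *
      Complex.exp (-(‖η‖ ^ 2 : ℝ) / (4 * (ε : ℂ)))‖ₑ =
      ENNReal.ofReal ((π / ε) ^ (3 / 2 : ℝ) * Real.exp (-(1 / (4 * ε)) * ‖η‖ ^ 2)) := by
    intro η
    rw [← ofReal_norm, norm_mul]
    congr 2
    · have : ((3 / 2 : ℂ)) = ((3 / 2 : ℝ) : ℂ) := by push_cast; rfl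
      rw [this, Complex.norm_cpow_real]
      congr 1
      rw [← Complex.ofReal_div, Complex.norm_real, Real.norm_of_nonneg (by positivity)]
    · rw [Complex.norm_exp]
      congr 1
      have : (-((‖η‖ ^ 2 : ℝ) : ℂ) / (4 * (ε : ℂ))) = ((-(1 / (4 * ε)) * ‖η‖ ^ 2 : ℝ) : ℂ) := by
        push_cast; field_simp
      rw [this, Complex.ofReal_re]
  simp_rw [h0]
  have hb : 0 < 1 / (4 * ε) := by positivity
  have hint : Integrable (fun η : E3 => (π / ε) ^ (3 / 2 : ℝ) * Real.exp (-(1 / (4 * ε)) * ‖η‖ ^ 2)) := by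
    refine Integrable.const_mul ?_ _
    have := (GaussianFourier.integrable_cexp_neg_mul_sq_norm_add (V := E3)
      (b := ((1 / (4 * ε) : ℝ) : ℂ)) (by simpa using hb) 0 0).norm
    refine this.congr (Filter.Eventually.of_forall fun η => ?_)
    simp only [Complex.norm_exp]
    congr 1
    rw [zero_mul, add_zero, ← Complex.ofReal_pow, ← Complex.ofReal_neg, ← Complex.ofReal_mul, Complex.ofReal_re]
  rw [← ofReal_integral_eq_lintegral_ofReal hint (Filter.Eventually.of_forall fun η => by positivity)]
  congr 1
  rw [integral_const_mul, GaussianFourier.integral_rexp_neg_mul_sq_norm hb]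
  rw [finrank_euclideanSpace_fin, Nat.cast_ofNat,
    ← Real.mul_rpow (by positivity) (by positivity)]
  have : π / ε * (π / (1 / (4 * ε))) = (2 * π) ^ (2 : ℝ) := by
    rw [Real.rpow_two]; field_simp; ring
  rw [this, ← Real.rpow_mul (by positivity)]
  norm_num

lemma gauss_osc (ε δ : ℝ) (hε : 0 < ε) (hδ : δ ≠ 0) (η : E3) :
    ‖((π : ℂ) / (ε + δ * Complex.I : ℂ)) ^ (3 / 2 : ℂ) *
      Complex.exp (-(‖η‖ ^ 2 : ℝ) / (4 * (ε + δ * Complex.I : ℂ)))‖ₑ ≤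
      ENNReal.ofReal ((π / |δ|) ^ (3 / 2 : ℝ)) := by
  rw [← ofReal_norm, norm_mul]
  apply ENNReal.ofReal_le_ofReal
  have h1 : ((3 / 2 : ℂ)) = ((3 / 2 : ℝ) : ℂ) := by push_cast; rfl
  rw [h1, Complex.norm_cpow_real]
  have h2 : ‖Complex.exp (-(‖η‖ ^ 2 : ℝ) / (4 * (ε + δ * Complex.I : ℂ)))‖ ≤ 1 := by
    rw [Complex.norm_exp]
    rw [Real.exp_le_one_iff]
    have hq : 0 ≤ ‖η‖ ^ 2 := by positivity
    generalize ‖η‖ ^ 2 = q at hq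
    rw [Complex.div_re]
    simp only [Complex.neg_re, Complex.neg_im, Complex.ofReal_re, Complex.ofReal_im, neg_zero,
      zero_mul, zero_div, add_zero]
    have h4 : (4 * (ε + δ * Complex.I : ℂ)).re = 4 * ε := by simp
    rw [h4, neg_mul, neg_div, neg_nonpos]
    exact div_nonneg (by positivity) (Complex.normSq_nonneg _)
  have h3 : |δ| ≤ ‖(ε + δ * Complex.I : ℂ)‖ := by
    simpa using Complex.abs_im_le_norm (ε + δ * Complex.I : ℂ)
  have hd : 0 < |δ| := abs_pos.mpr hδ
  calc _ ≤ ‖(π : ℂ) / (ε + δ * Complex.I : ℂ)‖ ^ (3 / 2 : ℝ) * 1 := by gcongr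
    _ ≤ _ := by
      rw [mul_one, norm_div, Complex.norm_real, Real.norm_of_nonneg Real.pi_pos.le]
      gcongr

lemma Vt_cont (φ : E3 → ℂ) (hφ : Integrable φ) :
    Continuous (fun p : ℝ × E3 => Vt φ p.1 p.2) := by
  unfold Vt
  refine continuous_of_dominated (bound := fun y => ‖φ y‖) ?_ ?_ hφ.norm ?_
  · intro p
    have : Continuous (fun y => kerV p.1 p.2 y) := by unfold kerV; fun_prop
    exact this.aestronglyMeasurable.mul hφ.aestronglyMeasurable
  · intro p
    refine Filter.Eventually.of_forall fun y => ?_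
    simp [kerV_norm]
  · refine Filter.Eventually.of_forall fun y => ?_
    have : Continuous (fun p : ℝ × E3 => kerV p.1 p.2 y) := by unfold kerV; fun_prop
    fun_prop

lemma Vt_enorm_le (φ : E3 → ℂ) (σ : ℝ) (ξ : E3) : ‖Vt φ σ ξ‖ₑ ≤ ∫⁻ y, ‖φ y‖ₑ := by
  refine (enorm_integral_le_lintegral_enorm _).trans (le_of_eq ?_)
  simp [kerV_enorm]

lemma Vt_norm_le (φ : E3 → ℂ) (σ : ℝ) (ξ : E3) : ‖Vt φ σ ξ‖ ≤ ∫ y, ‖φ y‖ := by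
  refine (norm_integral_le_integral_norm _).trans (le_of_eq ?_)
  simp [kerV_norm]

lemma gauss_cint (b : ℂ) (hb : 0 < b.re) :
    Integrable (fun y : E3 => Complex.exp (-b * ‖y‖ ^ 2)) := by
  have := GaussianFourier.integrable_cexp_neg_mul_sq_norm_add (V := E3) hb 0 0
  simpa using this

lemma gauss_rint (ε : ℝ) (hε : 0 < ε) :
    Integrable (fun y : E3 => Real.exp (-ε * ‖y‖ ^ 2)) := by
  have := (gauss_cint (ε : ℂ) (by simpa using hε)).norm
  refine this.congr (Filter.Eventually.of_forall fun η => ?_)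
  simp only [Complex.norm_exp]
  congr 1
  rw [← Complex.ofReal_pow, ← Complex.ofReal_neg, ← Complex.ofReal_mul, Complex.ofReal_re]

lemma ennreal_mul_le_sq (a b : ℝ≥0∞) : a * b ≤ a ^ 2 + b ^ 2 := by
  rcases le_total a b with h | h
  · calc a * b ≤ b * b := by gcongr
      _ = b ^ 2 := by ring
      _ ≤ _ := le_add_self
  · calc a * b ≤ a * a := by gcongr
      _ = a ^ 2 := by ring
      _ ≤ _ := le_self_add

lemma planch_eps (f : E3 → ℂ) (hf : Integrable f) (ε : ℝ) (hε : 0 < ε) :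
    ∫⁻ y, ENNReal.ofReal (Real.exp (-ε * ‖y‖ ^ 2)) * ‖Vt f 0 y‖ₑ ^ 2 ≤
      ENNReal.ofReal (2 * (2 * π) ^ 3) * ∫⁻ y, ‖f y‖ₑ ^ 2 := by
  have hV : Continuous (fun y => Vt f 0 y) :=
    (Vt_cont f hf).comp (f := fun y : E3 => ((0 : ℝ), y)) (by fun_prop)
  have hint : Integrable (fun y => Real.exp (-ε * ‖y‖ ^ 2) * ‖Vt f 0 y‖ ^ 2) := by
    refine ((gauss_rint ε hε).mul_const ((∫ y, ‖f y‖) ^ 2)).mono' ?_ ?_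
    · exact Continuous.aestronglyMeasurable (by fun_prop)
    · refine Filter.Eventually.of_forall fun y => ?_
      rw [Real.norm_of_nonneg (by positivity)]
      gcongr
      exact Vt_norm_le f 0 y
  have key := bil f f hf hf (ε : ℂ) (by simpa using hε)
  have e1 : ∫ y, Complex.exp (-(ε : ℂ) * ‖y‖ ^ 2) * (Vt f 0 y * (starRingEnd ℂ) (Vt f 0 y)) =
      ((∫ y, Real.exp (-ε * ‖y‖ ^ 2) * ‖Vt f 0 y‖ ^ 2 : ℝ) : ℂ) := by
    rw [← integral_complex_ofReal]
    congr 1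
    ext y
    rw [Complex.mul_conj, Complex.normSq_eq_norm_sq]
    push_cast
    rfl
  have e2 : ∫⁻ y, ENNReal.ofReal (Real.exp (-ε * ‖y‖ ^ 2)) * ‖Vt f 0 y‖ₑ ^ 2 =
      ‖∫ y, Complex.exp (-(ε : ℂ) * ‖y‖ ^ 2) * (Vt f 0 y * (starRingEnd ℂ) (Vt f 0 y))‖ₑ := by
    rw [e1, ← ofReal_norm, Complex.norm_real,
      Real.norm_of_nonneg (integral_nonneg fun y => by positivity),
      ofReal_integral_eq_lintegral_ofReal hint (Filter.Eventually.of_forall fun y => by positivity)]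
    congr 1
    ext y
    rw [ENNReal.ofReal_mul (by positivity), ENNReal.ofReal_pow (by positivity), ofReal_norm]
  rw [e2]
  refine key.trans ?_
  set k : E3 → ℝ≥0∞ := fun η => ‖((π : ℂ) / (ε : ℂ)) ^ (3 / 2 : ℂ) *
      Complex.exp (-(‖η‖ ^ 2 : ℝ) / (4 * (ε : ℂ)))‖ₑ with hk
  have hkm : Measurable k := by
    refine Measurable.enorm (Continuous.measurable ?_)
    fun_prop
  have hkm2 : Measurable (fun p : E3 × E3 => k (p.2 - p.1)) := hkm.comp (by fun_prop)
  have hfm := hf.aestronglyMeasurable.enorm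
  calc ∫⁻ p : E3 × E3, ‖f p.1‖ₑ * ‖f p.2‖ₑ * k (p.2 - p.1)
      ≤ ∫⁻ p : E3 × E3, (‖f p.1‖ₑ ^ 2 * k (p.2 - p.1) + ‖f p.2‖ₑ ^ 2 * k (p.2 - p.1)) := by
        refine lintegral_mono fun p => ?_
        rw [← add_mul]
        gcongr
        exact ennreal_mul_le_sq _ _
    _ = (∫⁻ p : E3 × E3, ‖f p.1‖ₑ ^ 2 * k (p.2 - p.1)) +
          ∫⁻ p : E3 × E3, ‖f p.2‖ₑ ^ 2 * k (p.2 - p.1) := by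
        refine lintegral_add_right' _ ?_
        exact ((hfm.comp_snd).pow_const 2).mul hkm2.aemeasurable
    _ = (ENNReal.ofReal ((2 * π) ^ 3) * ∫⁻ y, ‖f y‖ₑ ^ 2) +
          ENNReal.ofReal ((2 * π) ^ 3) * ∫⁻ y, ‖f y‖ₑ ^ 2 := by
        congr 1
        · have hm : AEMeasurable (fun p : E3 × E3 => ‖f p.1‖ₑ ^ 2 * k (p.2 - p.1))
              (volume.prod volume) := ((hfm.comp_fst).pow_const 2).mul hkm2.aemeasurable
          rw [Measure.volume_eq_prod, lintegral_prod _ hm]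
          rw [← lintegral_const_mul'' _ (hfm.pow_const 2)]
          congr 1
          ext x
          have hk3 : Measurable (fun y : E3 => k (y - x)) := hkm.comp (by fun_prop)
          dsimp only
          rw [lintegral_const_mul _ hk3]
          rw [lintegral_sub_right_eq_self (μ := volume) k x, mul_comm]
          congr 1
          exact gauss_real ε hε
        · have hm : AEMeasurable (fun p : E3 × E3 => ‖f p.2‖ₑ ^ 2 * k (p.2 - p.1))
              (volume.prod volume) := ((hfm.comp_snd).pow_const 2).mul hkm2.aemeasurable
          rw [Measure.volume_eq_prod, lintegral_prod_symm _ hm]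
          rw [← lintegral_const_mul'' _ (hfm.pow_const 2)]
          congr 1
          ext x
          have hk3 : Measurable (fun y : E3 => k (x - y)) := hkm.comp (by fun_prop)
          dsimp only
          rw [lintegral_const_mul _ hk3]
          rw [lintegral_sub_left_eq_self (μ := volume) k x, mul_comm]
          congr 1
          exact gauss_real ε hε
    _ = _ := by
        rw [two_mul (_ ^ 3), ENNReal.ofReal_add (by positivity) (by positivity), add_mul]

lemma Vt_shift (φ : E3 → ℂ) (σ : ℝ) (ξ : E3) :
    Vt φ σ ξ = Vt (fun y => kerV σ 0 y * φ y) 0 ξ := by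
  unfold Vt
  congr 1
  ext y
  rw [← mul_assoc]
  congr 1
  unfold kerV
  rw [← Complex.exp_add]
  congr 1
  simp
  ring

lemma kerV_int (φ : E3 → ℂ) (hφ : Integrable φ) (σ : ℝ) (ξ : E3) :
    Integrable (fun y => kerV σ ξ y * φ y) := by
  refine hφ.norm.mono' ?_ ?_
  · have : Continuous (fun y => kerV σ ξ y) := by unfold kerV; fun_prop
    exact this.aestronglyMeasurable.mul hφ.aestronglyMeasurable
  · refine Filter.Eventually.of_forall fun y => ?_
    simp [kerV_norm]

lemma planch (φ : E3 → ℂ) (hφ : Integrable φ) (σ : ℝ) :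
    ∫⁻ ξ, ‖Vt φ σ ξ‖ₑ ^ 2 ≤ ENNReal.ofReal (2 * (2 * π) ^ 3) * ∫⁻ y, ‖φ y‖ₑ ^ 2 := by
  set f : E3 → ℂ := fun y => kerV σ 0 y * φ y with hf
  have hfi : Integrable f := kerV_int φ hφ σ 0
  have h1 : ∀ ξ, Vt φ σ ξ = Vt f 0 ξ := Vt_shift φ σ
  have h2 : ∫⁻ y, ‖φ y‖ₑ ^ 2 = ∫⁻ y, ‖f y‖ₑ ^ 2 := by simp [hf, kerV_enorm]
  simp_rw [h1, h2]
  have hV : Continuous (fun y => Vt f 0 y) :=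
    (Vt_cont f hfi).comp (f := fun y : E3 => ((0 : ℝ), y)) (by fun_prop)
  set u : ℕ → E3 → ℝ≥0∞ := fun n y =>
    ENNReal.ofReal (Real.exp (-(1 / ((n : ℝ) + 1)) * ‖y‖ ^ 2)) * ‖Vt f 0 y‖ₑ ^ 2
  have hlim : ∀ y, Filter.Tendsto (fun n => u n y) Filter.atTop (nhds (‖Vt f 0 y‖ₑ ^ 2)) := by
    intro y
    have a1 : Filter.Tendsto (fun n : ℕ => Real.exp (-(1 / ((n : ℝ) + 1)) * ‖y‖ ^ 2))
        Filter.atTop (nhds 1) := by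
      have := (tendsto_one_div_add_atTop_nhds_zero_nat (𝕜 := ℝ)).neg.mul_const (‖y‖ ^ 2)
      have := (Real.continuous_exp.tendsto _).comp this
      simpa [Function.comp_def] using this
    have a2 := ENNReal.tendsto_ofReal a1
    have a3 := ENNReal.Tendsto.mul_const (b := ‖Vt f 0 y‖ₑ ^ 2) a2 (Or.inr (by simp))
    simpa [u] using a3
  calc ∫⁻ y, ‖Vt f 0 y‖ₑ ^ 2 = ∫⁻ y, Filter.liminf (fun n => u n y) Filter.atTop := by
        congr 1; ext y; exact ((hlim y).liminf_eq).symm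
    _ ≤ Filter.liminf (fun n => ∫⁻ y, u n y) Filter.atTop := by
        refine lintegral_liminf_le fun n => ?_
        have m1 : Measurable (fun y : E3 =>
          ENNReal.ofReal (Real.exp (-(1 / ((n : ℝ) + 1)) * ‖y‖ ^ 2))) := by fun_prop
        exact m1.mul ((hV.measurable.enorm).pow_const 2)
    _ ≤ _ := by
        refine Filter.liminf_le_of_frequently_le' (Filter.Frequently.of_forall fun n => ?_)
        exact planch_eps f hfi _ (by positivity)

def gF (e τ : ℝ) : ℝ := min (|τ| ^ (-(1 / 2) : ℝ)) (e ^ 2 * |τ| ^ (-(3 / 2) : ℝ))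

lemma gF_nonneg (e τ : ℝ) : 0 ≤ gF e τ := le_min (by positivity) (by positivity)

lemma gF_meas : Measurable (fun p : ℝ × ℝ => gF p.1 p.2) := by
  unfold gF
  fun_prop

lemma gF_int_half (e : ℝ) (he : 0 < e) :
    ∫⁻ τ in Ioi (0 : ℝ), ENNReal.ofReal (gF e τ) ≤ ENNReal.ofReal (4 * e) := by
  have he2 : 0 < e ^ 2 := by positivity
  have hsplit : Ioi (0 : ℝ) = Ioc 0 (e ^ 2) ∪ Ioi (e ^ 2) := (Ioc_union_Ioi_eq_Ioi he2.le).symm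
  rw [hsplit]
  refine (lintegral_union_le _ _ _).trans ?_
  have h1 : ∫⁻ τ in Ioc (0 : ℝ) (e ^ 2), ENNReal.ofReal (gF e τ) ≤ ENNReal.ofReal (2 * e) := by
    have hi : IntervalIntegrable (fun x : ℝ => x ^ (-(1 / 2) : ℝ)) volume 0 (e ^ 2) :=
      intervalIntegral.intervalIntegrable_rpow' (by norm_num)
    have hi' := (intervalIntegrable_iff_integrableOn_Ioc_of_le he2.le).1 hi
    calc _ ≤ ∫⁻ τ in Ioc (0 : ℝ) (e ^ 2), ENNReal.ofReal (τ ^ (-(1 / 2) : ℝ)) := by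
          refine setLIntegral_mono' measurableSet_Ioc fun τ hτ => ?_
          apply ENNReal.ofReal_le_ofReal
          refine (min_le_left _ _).trans ?_
          rw [abs_of_pos hτ.1]
      _ = ENNReal.ofReal (∫ τ in Ioc (0 : ℝ) (e ^ 2), τ ^ (-(1 / 2) : ℝ)) := by
          rw [ofReal_integral_eq_lintegral_ofReal hi']
          refine (ae_restrict_iff' measurableSet_Ioc).2 (Filter.Eventually.of_forall fun τ hτ => ?_)
          exact Real.rpow_nonneg hτ.1.le _
      _ ≤ _ := by
          apply ENNReal.ofReal_le_ofReal
          rw [← intervalIntegral.integral_of_le he2.le, integral_rpow (by left; norm_num)]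
          have : (e ^ 2) ^ (-(1 / 2) + 1 : ℝ) = e := by
            rw [← Real.rpow_natCast, ← Real.rpow_mul he.le]; norm_num
          rw [this, Real.zero_rpow (by norm_num)]
          norm_num
          linarith
  have h2 : ∫⁻ τ in Ioi (e ^ 2), ENNReal.ofReal (gF e τ) ≤ ENNReal.ofReal (2 * e) := by
    have hi : IntegrableOn (fun x : ℝ => x ^ (-(3 / 2) : ℝ)) (Ioi (e ^ 2)) :=
      integrableOn_Ioi_rpow_of_lt (by norm_num) he2
    calc _ ≤ ∫⁻ τ in Ioi (e ^ 2), ENNReal.ofReal (e ^ 2 * τ ^ (-(3 / 2) : ℝ)) := by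
          refine setLIntegral_mono' measurableSet_Ioi fun τ hτ => ?_
          apply ENNReal.ofReal_le_ofReal
          refine (min_le_right _ _).trans ?_
          rw [abs_of_pos (he2.trans hτ)]
      _ = ENNReal.ofReal (∫ τ in Ioi (e ^ 2), e ^ 2 * τ ^ (-(3 / 2) : ℝ)) := by
          rw [ofReal_integral_eq_lintegral_ofReal (hi.const_mul _)]
          refine (ae_restrict_iff' measurableSet_Ioi).2 (Filter.Eventually.of_forall fun τ hτ => ?_)
          exact mul_nonneg he2.le (Real.rpow_nonneg (he2.trans hτ).le _)
      _ ≤ _ := by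
          apply ENNReal.ofReal_le_ofReal
          rw [integral_const_mul, integral_Ioi_rpow_of_lt (by norm_num) he2]
          have : (e ^ 2) ^ (-(3 / 2) + 1 : ℝ) = e⁻¹ := by
            rw [← Real.rpow_natCast, ← Real.rpow_mul he.le, ← Real.rpow_neg_one]; norm_num
          rw [this]
          apply le_of_eq
          field_simp
          norm_num
  calc _ ≤ ENNReal.ofReal (2 * e) + ENNReal.ofReal (2 * e) := add_le_add h1 h2
    _ = _ := by rw [← ENNReal.ofReal_add (by positivity) (by positivity)]; ring_nf

lemma gF_int (e : ℝ) (he : 0 ≤ e) :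
    ∫⁻ τ, ENNReal.ofReal (gF e τ) ≤ ENNReal.ofReal (8 * e) := by
  rcases he.eq_or_lt with h0 | hpos
  · subst h0
    have : ∀ τ, gF 0 τ = 0 := fun τ => le_antisymm ((min_le_right _ _).trans (by simp)) (gF_nonneg _ _)
    simp [this]
  have hneg : ∫⁻ τ in Iio (0 : ℝ), ENNReal.ofReal (gF e τ) =
      ∫⁻ τ in Ioi (0 : ℝ), ENNReal.ofReal (gF e τ) := by
    rw [← lintegral_indicator measurableSet_Iio, ← lintegral_indicator measurableSet_Ioi,
      ← lintegral_neg_eq_self]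
    congr 1
    ext τ
    simp [indicator, gF]
  have : (univ : Set ℝ) =ᵐ[volume] (Iio (0 : ℝ) ∪ Ioi 0 : Set ℝ) := by
    have : (Iio (0 : ℝ) ∪ Ioi 0 : Set ℝ) = {0}ᶜ := by ext x; simp [lt_or_lt_iff_ne]
    rw [this]
    exact (ae_eq_univ.2 (by simp)).symm
  rw [← setLIntegral_univ, setLIntegral_congr this]
  refine (lintegral_union_le _ _ _).trans ?_
  rw [hneg]
  calc _ ≤ ENNReal.ofReal (4 * e) + ENNReal.ofReal (4 * e) :=
        add_le_add (gF_int_half e hpos) (gF_int_half e hpos)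
    _ = _ := by rw [← ENNReal.ofReal_add (by positivity) (by positivity)]; ring_nf

lemma gF_min_aux (e e' τ : ℝ) (he' : 0 < e') (hle : e' ≤ e) (hτ : 0 < τ) :
    min (√(e⁻¹) * √(e'⁻¹)) (e * e' * τ ^ (-(3 / 2) : ℝ)) ≤ gF e τ := by
  have he : 0 < e := he'.trans_le hle
  unfold gF
  rw [abs_of_pos hτ]
  refine le_min ?_ ?_
  · rcases le_total (e * e') τ with h | h
    · refine (min_le_right _ _).trans ?_
      calc e * e' * τ ^ (-(3 / 2) : ℝ) ≤ τ ^ (1 : ℝ) * τ ^ (-(3 / 2) : ℝ) := by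
            rw [Real.rpow_one]; gcongr
        _ = _ := by rw [← Real.rpow_add hτ]; norm_num
    · refine (min_le_left _ _).trans ?_
      rw [← Real.sqrt_mul (by positivity), ← mul_inv, Real.rpow_neg hτ.le, ← Real.sqrt_eq_rpow,
        Real.sqrt_inv]
      gcongr
  · refine (min_le_right _ _).trans ?_
    rw [sq]
    gcongr

lemma gF_min (e e' τ : ℝ) (he : 0 < e) (he' : 0 < e') (hτ : 0 < τ) :
    min (√(e⁻¹) * √(e'⁻¹)) (e * e' * τ ^ (-(3 / 2) : ℝ)) ≤ gF e τ + gF e' τ := by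
  rcases le_total e' e with h | h
  · exact (gF_min_aux e e' τ he' h hτ).trans (le_add_of_nonneg_right (gF_nonneg _ _))
  · have := gF_min_aux e' e τ he h hτ
    rw [mul_comm (√_), mul_comm e'] at this
    exact this.trans (le_add_of_nonneg_left (gF_nonneg _ _))

lemma wcs {w a b : E3 → ℝ≥0∞} (ha : AEMeasurable (fun y => w y * a y ^ 2))
    (K x y : ℝ) (hK : 0 ≤ K) (hx : 0 < x) (hy : 0 < y)
    (h1 : ∫⁻ z, w z * a z ^ 2 ≤ ENNReal.ofReal (K * x ^ 2))
    (h2 : ∫⁻ z, w z * b z ^ 2 ≤ ENNReal.ofReal (K * y ^ 2)) :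
    ∫⁻ z, w z * (a z * b z) ≤ ENNReal.ofReal (2 * K * (x * y)) := by
  have hx' : ENNReal.ofReal x ≠ 0 := by simpa using hx
  have hy' : ENNReal.ofReal y ≠ 0 := by simpa using hy
  have key : ∀ z, w z * (a z * b z) ≤ ENNReal.ofReal (x⁻¹ * y) * (w z * a z ^ 2) +
      ENNReal.ofReal (x * y⁻¹) * (w z * b z ^ 2) := by
    intro z
    have e1 : a z * b z = ENNReal.ofReal (x * y) *
        ((ENNReal.ofReal x⁻¹ * a z) * (ENNReal.ofReal y⁻¹ * b z)) := by
      have : ENNReal.ofReal (x * y) * ENNReal.ofReal x⁻¹ * ENNReal.ofReal y⁻¹ = 1 := by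
        rw [← ENNReal.ofReal_mul (by positivity), ← ENNReal.ofReal_mul (by positivity)]
        have : x * y * x⁻¹ * y⁻¹ = 1 := by field_simp
        rw [this]; simp
      calc a z * b z = (ENNReal.ofReal (x * y) * ENNReal.ofReal x⁻¹ * ENNReal.ofReal y⁻¹) *
            (a z * b z) := by rw [this, one_mul]
        _ = _ := by ring
    have e2 : ENNReal.ofReal (x⁻¹ * y) = ENNReal.ofReal (x * y) * ENNReal.ofReal x⁻¹ ^ 2 := by
      rw [← ENNReal.ofReal_pow (by positivity), ← ENNReal.ofReal_mul (by positivity)]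
      congr 1; field_simp
    have e3 : ENNReal.ofReal (x * y⁻¹) = ENNReal.ofReal (x * y) * ENNReal.ofReal y⁻¹ ^ 2 := by
      rw [← ENNReal.ofReal_pow (by positivity), ← ENNReal.ofReal_mul (by positivity)]
      congr 1; field_simp
    rw [e1, e2, e3]
    calc w z * (ENNReal.ofReal (x * y) *
        ((ENNReal.ofReal x⁻¹ * a z) * (ENNReal.ofReal y⁻¹ * b z)))
        ≤ w z * (ENNReal.ofReal (x * y) *
        ((ENNReal.ofReal x⁻¹ * a z) ^ 2 + (ENNReal.ofReal y⁻¹ * b z) ^ 2)) := by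
          gcongr; exact ennreal_mul_le_sq _ _
      _ = _ := by ring
  calc _ ≤ ∫⁻ z, (ENNReal.ofReal (x⁻¹ * y) * (w z * a z ^ 2) +
      ENNReal.ofReal (x * y⁻¹) * (w z * b z ^ 2)) := lintegral_mono key
    _ = ENNReal.ofReal (x⁻¹ * y) * (∫⁻ z, w z * a z ^ 2) +
      ENNReal.ofReal (x * y⁻¹) * ∫⁻ z, w z * b z ^ 2 := by
        rw [lintegral_add_left' (ha.const_mul _), lintegral_const_mul' _ _ ENNReal.ofReal_ne_top,
          lintegral_const_mul' _ _ ENNReal.ofReal_ne_top]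
    _ ≤ ENNReal.ofReal (x⁻¹ * y) * ENNReal.ofReal (K * x ^ 2) +
      ENNReal.ofReal (x * y⁻¹) * ENNReal.ofReal (K * y ^ 2) := by gcongr
    _ = _ := by
      rw [← ENNReal.ofReal_mul (by positivity), ← ENNReal.ofReal_mul (by positivity),
        ← ENNReal.ofReal_add (by positivity) (by positivity)]
      congr 1; field_simp; ring

def KB : ℝ := 4 * (2 * π) ^ 3 + π ^ (3 / 2 : ℝ)

lemma KB_pos : 0 < KB := by unfold KB; positivity

lemma Bbound (f g : E3 → ℂ) (hf : Integrable f) (hg : Integrable g) (e e' : ℝ) (he : 0 ≤ e)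
    (he' : 0 ≤ e') (hf1 : ∫⁻ y, ‖f y‖ₑ ≤ ENNReal.ofReal e) (hg1 : ∫⁻ y, ‖g y‖ₑ ≤ ENNReal.ofReal e')
    (hf2 : ∫⁻ y, ‖f y‖ₑ ^ 2 ≤ ENNReal.ofReal e⁻¹) (hg2 : ∫⁻ y, ‖g y‖ₑ ^ 2 ≤ ENNReal.ofReal e'⁻¹)
    (ε δ : ℝ) (hε : 0 < ε) (hδ : δ ≠ 0) :
    ‖∫ y, Complex.exp (-(ε + δ * Complex.I : ℂ) * ‖y‖ ^ 2) *
      (Vt f 0 y * (starRingEnd ℂ) (Vt g 0 y))‖ₑ ≤ ENNReal.ofReal (KB * (gF e δ + gF e' δ)) := by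
  set B := ‖∫ y, Complex.exp (-(ε + δ * Complex.I : ℂ) * ‖y‖ ^ 2) *
      (Vt f 0 y * (starRingEnd ℂ) (Vt g 0 y))‖ₑ with hB
  have hd : 0 < |δ| := abs_pos.mpr hδ
  have b1 : B ≤ ENNReal.ofReal (π ^ (3 / 2 : ℝ) * (e * e' * |δ| ^ (-(3 / 2) : ℝ))) := by
    refine (bil f g hf hg (ε + δ * Complex.I : ℂ) (by simpa using hε)).trans ?_
    calc _ ≤ ∫⁻ p : E3 × E3, ‖f p.1‖ₑ * ‖g p.2‖ₑ * ENNReal.ofReal ((π / |δ|) ^ (3 / 2 : ℝ)) := by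
          refine lintegral_mono fun p => ?_
          gcongr
          exact gauss_osc ε δ hε hδ _
      _ = (∫⁻ y, ‖f y‖ₑ) * (∫⁻ y, ‖g y‖ₑ) * ENNReal.ofReal ((π / |δ|) ^ (3 / 2 : ℝ)) := by
          rw [lintegral_mul_const' _ _ ENNReal.ofReal_ne_top, Measure.volume_eq_prod,
            lintegral_prod_mul hf.aestronglyMeasurable.enorm hg.aestronglyMeasurable.enorm]
      _ ≤ ENNReal.ofReal e * ENNReal.ofReal e' * ENNReal.ofReal ((π / |δ|) ^ (3 / 2 : ℝ)) := by
          gcongr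
      _ = _ := by
          rw [← ENNReal.ofReal_mul he, ← ENNReal.ofReal_mul (by positivity)]
          congr 1
          rw [Real.div_rpow Real.pi_pos.le hd.le, Real.rpow_neg hd.le]
          ring
  rcases he.eq_or_lt with h0 | hp
  · rw [← h0] at b1; simp only [zero_mul, mul_zero, ENNReal.ofReal_zero] at b1
    exact b1.trans (zero_le)
  rcases he'.eq_or_lt with h0 | hp'
  · rw [← h0] at b1; simp only [zero_mul, mul_zero, ENNReal.ofReal_zero] at b1
    exact b1.trans (zero_le)
  have b2 : B ≤ ENNReal.ofReal (4 * (2 * π) ^ 3 * (√(e⁻¹) * √(e'⁻¹))) := by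
    have h3 : B ≤ ∫⁻ y, ENNReal.ofReal (Real.exp (-ε * ‖y‖ ^ 2)) *
        (‖Vt f 0 y‖ₑ * ‖Vt g 0 y‖ₑ) := by
      refine (enorm_integral_le_lintegral_enorm _).trans (lintegral_mono fun y => ?_)
      rw [enorm_mul, enorm_mul]
      gcongr
      · rw [← ofReal_norm, Complex.norm_exp]
        apply ENNReal.ofReal_le_ofReal
        apply le_of_eq
        congr 1
        rw [← Complex.ofReal_pow, Complex.re_mul_ofReal]
        simp
      · simp
    have hVf : Continuous (fun y => Vt f 0 y) :=
      (Vt_cont f hf).comp (f := fun y : E3 => ((0 : ℝ), y)) (by fun_prop)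
    refine h3.trans ((wcs ?_ (2 * (2 * π) ^ 3) (√e⁻¹) (√e'⁻¹) (by positivity) (by positivity)
      (by positivity) ?_ ?_).trans (le_of_eq ?_))
    · have m1 : Measurable (fun y : E3 => ENNReal.ofReal (Real.exp (-ε * ‖y‖ ^ 2))) := by fun_prop
      exact (m1.mul (hVf.measurable.enorm.pow_const 2)).aemeasurable
    · refine (planch_eps f hf ε hε).trans ?_
      rw [Real.sq_sqrt (by positivity), ENNReal.ofReal_mul (p := 2 * (2 * π) ^ 3) (by positivity)]
      gcongr
    · refine (planch_eps g hg ε hε).trans ?_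
      rw [Real.sq_sqrt (by positivity), ENNReal.ofReal_mul (p := 2 * (2 * π) ^ 3) (by positivity)]
      gcongr
    · congr 1; ring
  have b3 := gF_min e e' |δ| hp hp' hd
  have g1 : ∀ e, gF e |δ| = gF e δ := fun e => by simp [gF]
  rw [g1, g1] at b3
  rcases min_le_iff.1 b3 with h | h
  · refine b2.trans (ENNReal.ofReal_le_ofReal ?_)
    refine mul_le_mul ?_ h (by positivity) KB_pos.le
    unfold KB
    have : 0 < π ^ (3 / 2 : ℝ) := by positivity
    linarith
  · refine b1.trans (ENNReal.ofReal_le_ofReal ?_)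
    refine mul_le_mul ?_ h (by positivity) KB_pos.le
    unfold KB
    have : 0 < (2 * π) ^ 3 := by positivity
    linarith

/-- Bilinear form bound for `W`. -/
lemma W_bound (F : ℝ × E3 → ℂ) (hFm : Measurable F) (e : ℝ → ℝ) (hem : Measurable e)
    (he : ∀ σ, 0 ≤ e σ) (hei : Integrable e)
    (hF1 : ∀ σ, ∫⁻ ξ, ‖F (σ, ξ)‖ₑ ≤ ENNReal.ofReal (e σ))
    (hF2 : ∀ σ, ∫⁻ ξ, ‖F (σ, ξ)‖ₑ ^ 2 ≤ ENNReal.ofReal (e σ)⁻¹)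
    (ε : ℝ) (hε : 0 < ε) :
    ∫⁻ y, ENNReal.ofReal (Real.exp (-ε * ‖y‖ ^ 2)) *
      ‖∫ p : ℝ × E3, kerV p.1 p.2 y * F p‖ₑ ^ 2 ≤
      ENNReal.ofReal (16 * KB) * ∫⁻ σ, ENNReal.ofReal (e σ) := by
  have hfi : ∀ σ, Integrable (fun ξ => F (σ, ξ)) := by
    intro σ
    refine ⟨(hFm.comp (by fun_prop)).aestronglyMeasurable, ?_⟩
    exact (hF1 σ).trans_lt ENNReal.ofReal_lt_top
  have hFi : Integrable F (volume.prod volume) := by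
    refine ⟨hFm.aestronglyMeasurable, ?_⟩
    unfold HasFiniteIntegral
    rw [lintegral_prod _ hFm.enorm.aemeasurable]
    refine (lintegral_mono hF1).trans_lt ?_
    rw [← ofReal_integral_eq_lintegral_ofReal hei (Filter.Eventually.of_forall he)]
    exact ENNReal.ofReal_lt_top
  set w : ℝ → E3 → ℂ := fun σ y => kerV σ 0 y * Vt (fun ξ => F (σ, ξ)) 0 y with hw
  have hwk : ∀ σ y, ∫ ξ, kerV σ ξ y * F (σ, ξ) = w σ y := by
    intro σ y
    simp only [hw, Vt]
    rw [← integral_const_mul]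
    congr 1
    ext ξ
    rw [← mul_assoc]
    congr 1
    unfold kerV
    rw [← Complex.exp_add]
    congr 1
    rw [real_inner_comm]
    simp
    ring
  have hwm : Measurable (fun p : ℝ × E3 => w p.1 p.2) := by
    have h1 : StronglyMeasurable (fun p : ℝ × E3 => ∫ ξ, kerV p.1 ξ p.2 * F (p.1, ξ)) := by
      refine StronglyMeasurable.integral_prod_right
        (f := fun (p : ℝ × E3) (ξ : E3) => kerV p.1 ξ p.2 * F (p.1, ξ)) ?_
      refine Measurable.stronglyMeasurable ?_
      have c : Continuous (fun q : (ℝ × E3) × E3 => kerV q.1.1 q.2 q.1.2) := by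
        unfold kerV; fun_prop
      exact c.measurable.mul (hFm.comp (by fun_prop))
    simp_rw [hwk] at h1
    exact h1.measurable
  have hwe : ∀ σ y, ‖w σ y‖ ≤ e σ := by
    intro σ y
    simp only [hw, norm_mul, kerV_norm, one_mul]
    have := (Vt_enorm_le (fun ξ => F (σ, ξ)) 0 y).trans (hF1 σ)
    rw [← ofReal_norm] at this
    exact (ENNReal.ofReal_le_ofReal_iff (he σ)).1 this
  have hW : ∀ y, ∫ p : ℝ × E3, kerV p.1 p.2 y * F p = ∫ σ, w σ y := by
    intro y
    rw [Measure.volume_eq_prod, integral_prod]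
    · simp_rw [← hwk]
    · refine hFi.norm.mono' ?_ ?_
      · have c : Continuous (fun q : ℝ × E3 => kerV q.1 q.2 y) := by
          unfold kerV; fun_prop
        exact (c.measurable.mul hFm).aestronglyMeasurable
      · refine Filter.Eventually.of_forall fun p => ?_
        simp [kerV_norm]
  simp_rw [hW]
  have hWm : Measurable (fun y => ∫ σ, w σ y) := by
    refine StronglyMeasurable.measurable ?_
    refine StronglyMeasurable.integral_prod_right (f := fun (y : E3) (σ : ℝ) => w σ y) ?_
    exact (hwm.comp measurable_swap).stronglyMeasurable
  have hWb : ∀ y, ‖∫ σ, w σ y‖ ≤ ∫ σ, e σ := fun y =>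
    norm_integral_le_of_norm_le hei (Filter.Eventually.of_forall fun σ => hwe σ y)
  have hint : Integrable (fun y => Real.exp (-ε * ‖y‖ ^ 2) * ‖∫ σ, w σ y‖ ^ 2) := by
    refine ((gauss_rint ε hε).mul_const ((∫ σ, e σ) ^ 2)).mono' ?_ ?_
    · have m1 : Measurable (fun y : E3 => Real.exp (-ε * ‖y‖ ^ 2)) := by fun_prop
      exact (m1.mul (hWm.norm.pow_const 2)).aestronglyMeasurable
    · refine Filter.Eventually.of_forall fun y => ?_
      rw [Real.norm_of_nonneg (by positivity)]
      gcongr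
      exact hWb y
  have e1 : ∫ y, Complex.exp (-(ε : ℂ) * ‖y‖ ^ 2) *
        ((∫ σ, w σ y) * (starRingEnd ℂ) (∫ σ, w σ y)) =
      ((∫ y, Real.exp (-ε * ‖y‖ ^ 2) * ‖∫ σ, w σ y‖ ^ 2 : ℝ) : ℂ) := by
    rw [← integral_complex_ofReal]
    congr 1
    ext y
    rw [Complex.mul_conj, Complex.normSq_eq_norm_sq]
    push_cast
    rfl
  have e2 : ∫⁻ y, ENNReal.ofReal (Real.exp (-ε * ‖y‖ ^ 2)) * ‖∫ σ, w σ y‖ₑ ^ 2 =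
      ‖∫ y, Complex.exp (-(ε : ℂ) * ‖y‖ ^ 2) *
        ((∫ σ, w σ y) * (starRingEnd ℂ) (∫ σ, w σ y))‖ₑ := by
    rw [e1, ← ofReal_norm, Complex.norm_real,
      Real.norm_of_nonneg (integral_nonneg fun y => by positivity),
      ofReal_integral_eq_lintegral_ofReal hint (Filter.Eventually.of_forall fun y => by positivity)]
    congr 1
    ext y
    rw [ENNReal.ofReal_mul (by positivity), ENNReal.ofReal_pow (by positivity), ofReal_norm]
  rw [e2]
  have h1 : ∀ y, Complex.exp (-(ε : ℂ) * ‖y‖ ^ 2) *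
        ((∫ σ, w σ y) * (starRingEnd ℂ) (∫ σ, w σ y)) =
      ∫ p : ℝ × ℝ, Complex.exp (-(ε : ℂ) * ‖y‖ ^ 2) *
        (w p.1 y * (starRingEnd ℂ) (w p.2 y)) := by
    intro y
    rw [integral_const_mul]
    congr 1
    rw [← integral_conj, ← integral_prod_mul]
    rfl
  simp_rw [h1]
  rw [integral_integral_swap]
  swap
  · have hprod : Integrable (fun p : ℝ × ℝ => e p.1 * e p.2) (volume.prod volume) :=
      hei.mul_prod hei
    have hh : Integrable (fun q : E3 × ℝ × ℝ => Real.exp (-ε * ‖q.1‖ ^ 2) *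
        (e q.2.1 * e q.2.2)) (volume.prod (volume.prod volume)) :=
      (gauss_rint ε hε).mul_prod hprod
    refine hh.mono' ?_ ?_
    · have c3 : Measurable (fun q : E3 × ℝ × ℝ => Complex.exp (-(ε : ℂ) * ‖q.1‖ ^ 2)) := by fun_prop
      have c1 : Measurable (fun q : E3 × ℝ × ℝ => w q.2.1 q.1) :=
        hwm.comp (g := fun p : ℝ × E3 => w p.1 p.2) (f := fun q : E3 × ℝ × ℝ => (q.2.1, q.1))
          (by fun_prop)
      have c2 : Measurable (fun q : E3 × ℝ × ℝ => w q.2.2 q.1) :=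
        hwm.comp (g := fun p : ℝ × E3 => w p.1 p.2) (f := fun q : E3 × ℝ × ℝ => (q.2.2, q.1))
          (by fun_prop)
      exact (c3.mul (c1.mul (Complex.continuous_conj.measurable.comp c2))).aestronglyMeasurable
    · refine Filter.Eventually.of_forall fun q => ?_
      simp only [Function.uncurry, norm_mul, RCLike.norm_conj]
      have : ‖Complex.exp (-(ε : ℂ) * ‖q.1‖ ^ 2)‖ = Real.exp (-ε * ‖q.1‖ ^ 2) := by
        rw [Complex.norm_exp, ← Complex.ofReal_pow, Complex.re_mul_ofReal]; simp
      rw [this]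
      gcongr
      · exact he _
      · exact hwe _ _
      · exact hwe _ _
  refine (enorm_integral_le_lintegral_enorm _).trans ?_
  have hB : ∀ᵐ p : ℝ × ℝ, ‖∫ y, Complex.exp (-(ε : ℂ) * ‖y‖ ^ 2) *
        (w p.1 y * (starRingEnd ℂ) (w p.2 y))‖ₑ ≤
        ENNReal.ofReal (KB * (gF (e p.1) (p.2 - p.1) + gF (e p.2) (p.2 - p.1))) := by
    have hne : ∀ᵐ p : ℝ × ℝ, p.2 - p.1 ≠ 0 := by
      rw [Measure.volume_eq_prod]
      refine (Measure.ae_prod_iff_ae_ae (p := fun p : ℝ × ℝ => p.2 - p.1 ≠ 0) ?_).2 ?_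
      · exact (measurableSet_eq_fun (by fun_prop) (by fun_prop)).compl
      · refine Filter.Eventually.of_forall fun x => ?_
        have : ∀ᵐ y : ℝ, y ≠ x := by simp [ae_iff]
        filter_upwards [this] with y hy
        exact sub_ne_zero.2 hy
    filter_upwards [hne] with p hp
    have hh := Bbound _ _ (hfi p.1) (hfi p.2) (e p.1) (e p.2) (he _) (he _) (hF1 _) (hF1 _)
      (hF2 _) (hF2 _) ε (p.2 - p.1) hε hp
    refine le_trans (le_of_eq ?_) hh
    congr 2
    ext y
    simp only [hw, map_mul]
    have : Complex.exp (-(ε + (p.2 - p.1 : ℝ) * Complex.I : ℂ) * ‖y‖ ^ 2) =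
        Complex.exp (-(ε : ℂ) * ‖y‖ ^ 2) * (kerV p.1 0 y * (starRingEnd ℂ) (kerV p.2 0 y)) := by
      unfold kerV
      rw [← Complex.exp_conj, ← Complex.exp_add, ← Complex.exp_add]
      congr 1
      simp only [map_mul, Complex.conj_I, Complex.conj_ofReal]
      simp
      ring
    rw [this]
    ring
  refine (lintegral_mono_ae hB).trans ?_
  have m1 : Measurable (fun p : ℝ × ℝ => ENNReal.ofReal (KB * gF (e p.1) (p.2 - p.1))) :=
    ((gF_meas.comp (f := fun p : ℝ × ℝ => (e p.1, p.2 - p.1)) (by fun_prop)).const_mul _).ennreal_ofReal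
  have m2 : Measurable (fun p : ℝ × ℝ => ENNReal.ofReal (KB * gF (e p.2) (p.2 - p.1))) :=
    ((gF_meas.comp (f := fun p : ℝ × ℝ => (e p.2, p.2 - p.1)) (by fun_prop)).const_mul _).ennreal_ofReal
  have hKB := KB_pos
  have i1 : ∀ a, 0 ≤ a → ∫⁻ τ, ENNReal.ofReal (KB * gF a τ) ≤
      ENNReal.ofReal (8 * KB) * ENNReal.ofReal a := by
    intro a ha
    simp_rw [ENNReal.ofReal_mul KB_pos.le]
    rw [lintegral_const_mul' _ _ ENNReal.ofReal_ne_top]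
    calc _ ≤ ENNReal.ofReal KB * ENNReal.ofReal (8 * a) := by gcongr; exact gF_int a ha
      _ = _ := by
        rw [← ENNReal.ofReal_mul KB_pos.le, ← ENNReal.ofReal_mul (by positivity)]; congr 1; ring
  calc _ = ∫⁻ p : ℝ × ℝ, (ENNReal.ofReal (KB * gF (e p.1) (p.2 - p.1)) +
        ENNReal.ofReal (KB * gF (e p.2) (p.2 - p.1))) := by
        congr 1; ext p
        rw [mul_add, ENNReal.ofReal_add (mul_nonneg KB_pos.le (gF_nonneg _ _))
          (mul_nonneg KB_pos.le (gF_nonneg _ _))]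
    _ = (∫⁻ p : ℝ × ℝ, ENNReal.ofReal (KB * gF (e p.1) (p.2 - p.1))) +
        ∫⁻ p : ℝ × ℝ, ENNReal.ofReal (KB * gF (e p.2) (p.2 - p.1)) := lintegral_add_left m1 _
    _ ≤ (∫⁻ σ, ENNReal.ofReal (8 * KB) * ENNReal.ofReal (e σ)) +
        ∫⁻ σ, ENNReal.ofReal (8 * KB) * ENNReal.ofReal (e σ) := by
        gcongr
        · rw [Measure.volume_eq_prod, lintegral_prod _ m1.aemeasurable]
          refine lintegral_mono fun x => ?_
          dsimp only
          rw [lintegral_sub_right_eq_self (μ := volume)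
            (fun τ => ENNReal.ofReal (KB * gF (e x) τ)) x]
          exact i1 _ (he x)
        · rw [Measure.volume_eq_prod, lintegral_prod_symm _ m2.aemeasurable]
          refine lintegral_mono fun x => ?_
          dsimp only
          rw [lintegral_sub_left_eq_self (μ := volume)
            (fun τ => ENNReal.ofReal (KB * gF (e x) τ)) x]
          exact i1 _ (he x)
    _ = _ := by
        rw [lintegral_const_mul' _ _ ENNReal.ofReal_ne_top, ← add_mul,
          ← ENNReal.ofReal_add (by positivity) (by positivity)]
        congr 2; ring

def KW : ℝ := 16 * KB

lemma KW_pos : 0 < KW := by unfold KW; linarith [KB_pos]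

lemma W2_trunc (φ : E3 → ℂ) (hφ : Integrable φ) (ρ : ℝ) (hρ : ∀ y, ρ < ‖y‖ → φ y = 0)
    (l : ℝ) (hl : 0 < l) (R : ℝ) :
    ∫⁻ σ, (volume {ξ : E3 | |σ| ≤ R ∧ ‖ξ‖ ≤ R ∧ l < ‖Vt φ σ ξ‖}) ^ (1 / 3 : ℝ) ≤
      ENNReal.ofReal (12 * KW / l ^ 2) * ∫⁻ y, ‖φ y‖ₑ ^ 2 := by
  have hVc := Vt_cont φ hφ
  set S : Set (ℝ × E3) := {p | |p.1| ≤ R ∧ ‖p.2‖ ≤ R ∧ l < ‖Vt φ p.1 p.2‖} with hS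
  have hSm : MeasurableSet S := by
    have h1 : MeasurableSet {p : ℝ × E3 | |p.1| ≤ R} :=
      measurableSet_le (by fun_prop) measurable_const
    have h2 : MeasurableSet {p : ℝ × E3 | ‖p.2‖ ≤ R} :=
      measurableSet_le (by fun_prop) measurable_const
    have h3 : MeasurableSet {p : ℝ × E3 | l < ‖Vt φ p.1 p.2‖} :=
      measurableSet_lt measurable_const hVc.measurable.norm
    exact h1.inter (h2.inter h3)
  set v : ℝ → ℝ≥0∞ := fun σ => volume (Prod.mk σ ⁻¹' S) with hv
  have hvm : Measurable v := measurable_measure_prodMk_left hSm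
  have hvR : ∀ σ, v σ ≤ volume (Metric.closedBall (0 : E3) R) := by
    intro σ
    refine measure_mono fun ξ hξ => ?_
    simpa using hξ.2.1
  have hBfin : volume (Metric.closedBall (0 : E3) R) < ∞ := measure_closedBall_lt_top
  have hvf : ∀ σ, v σ ≠ ∞ := fun σ => ((hvR σ).trans_lt hBfin).ne
  set e : ℝ → ℝ := fun σ => (v σ).toReal ^ (1 / 3 : ℝ) with he
  have he0 : ∀ σ, 0 ≤ e σ := fun σ => by positivity
  have hem : Measurable e := hvm.ennreal_toReal.pow_const _
  have he3 : ∀ σ, v σ = ENNReal.ofReal (e σ ^ 3) := by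
    intro σ
    have : e σ ^ 3 = (v σ).toReal := by
      simp only [he]
      rw [← Real.rpow_natCast, ← Real.rpow_mul ENNReal.toReal_nonneg]; norm_num
    rw [this, ENNReal.ofReal_toReal (hvf σ)]
  have hev : ∀ σ, v σ ^ (1 / 3 : ℝ) = ENNReal.ofReal (e σ) := by
    intro σ
    simp only [he]
    rw [ENNReal.toReal_rpow, ENNReal.ofReal_toReal]
    exact ENNReal.rpow_ne_top_of_nonneg (by norm_num) (hvf σ)
  have hsupp : ∀ σ, R < |σ| → e σ = 0 := by
    intro σ hσ
    have : v σ = 0 := by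
      have : Prod.mk σ ⁻¹' S = ∅ := by
        ext ξ
        simp only [hS, mem_preimage, mem_ofPred_eq, mem_empty_iff_false, iff_false]
        exact fun h => absurd h.1 (not_le.2 hσ)
      simp [hv, this]
    simp [he, this]
  have hei : Integrable e := by
    have hc : IntegrableOn (fun _ : ℝ =>
        (volume (Metric.closedBall (0 : E3) R)).toReal ^ (1 / 3 : ℝ)) (Icc (-R) R) := by
      simp
    have hc' := hc.integrable_indicator measurableSet_Icc
    refine hc'.mono' hem.aestronglyMeasurable (Filter.Eventually.of_forall fun σ => ?_)
    rw [Real.norm_of_nonneg (he0 σ)]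
    by_cases h : |σ| ≤ R
    · rw [indicator_of_mem (mem_Icc.2 (abs_le.1 h))]
      simp only [he]
      exact Real.rpow_le_rpow ENNReal.toReal_nonneg
        (ENNReal.toReal_mono hBfin.ne (hvR σ)) (by norm_num)
    · rw [hsupp σ (not_le.1 h)]
      exact indicator_nonneg (fun _ _ => by positivity) _
  set F : ℝ × E3 → ℂ := S.indicator fun p => (((e p.1)⁻¹ ^ 2 / ‖Vt φ p.1 p.2‖ : ℝ) : ℂ) *
    (starRingEnd ℂ) (Vt φ p.1 p.2) with hF
  have hFm : Measurable F := by
    refine Measurable.indicator ?_ hSm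
    refine Measurable.mul ?_ ?_
    · refine Complex.measurable_ofReal.comp ?_
      exact (((hem.comp measurable_fst).inv).pow_const 2).div hVc.measurable.norm
    · exact (Complex.continuous_conj.comp hVc).measurable
  have hFn : ∀ σ ξ, ‖F (σ, ξ)‖ₑ = (Prod.mk σ ⁻¹' S).indicator
      (fun _ => ENNReal.ofReal ((e σ)⁻¹ ^ 2)) ξ := by
    intro σ ξ
    by_cases h : (σ, ξ) ∈ S
    · rw [indicator_of_mem (by exact h), hF, indicator_of_mem h, ← ofReal_norm]
      have hpos : 0 < ‖Vt φ σ ξ‖ := hl.trans h.2.2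
      congr 1
      rw [norm_mul, RCLike.norm_conj, Complex.norm_real, Real.norm_of_nonneg (by positivity)]
      field_simp
    · rw [indicator_of_notMem (by exact h), hF, indicator_of_notMem h]; simp
  have hSσ : ∀ σ, MeasurableSet (Prod.mk σ ⁻¹' S) := fun σ => measurable_prodMk_left hSm
  have hF1 : ∀ σ, ∫⁻ ξ, ‖F (σ, ξ)‖ₑ = ENNReal.ofReal (e σ) := by
    intro σ
    simp_rw [hFn]
    rw [lintegral_indicator (hSσ σ), setLIntegral_const, show volume (Prod.mk σ ⁻¹' S) = v σ from rfl,
      he3, ← ENNReal.ofReal_mul (by positivity)]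
    congr 1
    rcases eq_or_ne (e σ) 0 with h | h
    · simp [h]
    · field_simp
  have hF2 : ∀ σ, ∫⁻ ξ, ‖F (σ, ξ)‖ₑ ^ 2 ≤ ENNReal.ofReal (e σ)⁻¹ := by
    intro σ
    apply le_of_eq
    have : ∀ ξ, ‖F (σ, ξ)‖ₑ ^ 2 = (Prod.mk σ ⁻¹' S).indicator
      (fun _ => ENNReal.ofReal ((e σ)⁻¹ ^ 4)) ξ := by
      intro ξ
      rw [hFn]
      by_cases h : ξ ∈ (Prod.mk σ ⁻¹' S)
      · rw [indicator_of_mem h, indicator_of_mem h, ← ENNReal.ofReal_pow (by positivity)]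
        congr 1; ring
      · rw [indicator_of_notMem h, indicator_of_notMem h]; simp
    simp_rw [this]
    rw [lintegral_indicator (hSσ σ), setLIntegral_const, show volume (Prod.mk σ ⁻¹' S) = v σ from rfl,
      he3, ← ENNReal.ofReal_mul (by positivity)]
    congr 1
    rcases eq_or_ne (e σ) 0 with h | h
    · simp [h]
    · field_simp
  have hFi : Integrable F (volume.prod volume) := by
    refine ⟨hFm.aestronglyMeasurable, ?_⟩
    unfold HasFiniteIntegral
    rw [lintegral_prod _ hFm.enorm.aemeasurable]
    simp_rw [hF1]
    rw [← ofReal_integral_eq_lintegral_ofReal hei (Filter.Eventually.of_forall he0)]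
    exact ENNReal.ofReal_lt_top
  set M := ∫⁻ σ, ENNReal.ofReal (e σ) with hM
  have hMf : M ≠ ∞ := by
    rw [hM, ← ofReal_integral_eq_lintegral_ofReal hei (Filter.Eventually.of_forall he0)]
    exact ENNReal.ofReal_ne_top
  have hFM : ∫⁻ p, ‖F p‖ₑ ∂(volume.prod volume) = M := by
    rw [lintegral_prod _ hFm.enorm.aemeasurable]
    simp_rw [hF1]; rfl
  set N := ∫⁻ y, ‖φ y‖ₑ ^ 2 with hN
  have goal1 : M ≤ ENNReal.ofReal (12 * KW / l ^ 2) * N := by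
    have hK := KW_pos
    -- step 1
    have s1 : ENNReal.ofReal l * M ≤ ‖∫ p : ℝ × E3, Vt φ p.1 p.2 * F p‖ₑ := by
      set g : ℝ × E3 → ℝ := S.indicator fun p => (e p.1)⁻¹ ^ 2 * ‖Vt φ p.1 p.2‖ with hg
      have hgF : ∀ p, Vt φ p.1 p.2 * F p = ((g p : ℝ) : ℂ) := by
        intro p
        by_cases h : p ∈ S
        · have hpos : 0 < ‖Vt φ p.1 p.2‖ := hl.trans h.2.2
          rw [hF, hg, indicator_of_mem h, indicator_of_mem h]
          rw [mul_left_comm, Complex.mul_conj, Complex.normSq_eq_norm_sq, ← Complex.ofReal_mul]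
          congr 1
          field_simp
        · rw [hF, hg, indicator_of_notMem h, indicator_of_notMem h]; simp
      have hg0 : ∀ p, 0 ≤ g p := fun p => indicator_nonneg (fun _ _ => by positivity) _
      have hgi : Integrable g := by
        have hm : Measurable g := by
          refine Measurable.indicator ?_ hSm
          exact (((hem.comp measurable_fst).inv).pow_const 2).mul hVc.measurable.norm
        refine (hFi.norm.const_mul (∫ y, ‖φ y‖)).mono' hm.aestronglyMeasurable
          (Filter.Eventually.of_forall fun p => ?_)
        have : ‖g p‖ = ‖Vt φ p.1 p.2 * F p‖ := by rw [hgF]; simp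
        rw [this, norm_mul]
        gcongr
        exact Vt_norm_le _ _ _
      simp_rw [hgF]
      rw [integral_complex_ofReal, ← ofReal_norm, Complex.norm_real,
        Real.norm_of_nonneg (integral_nonneg hg0), ofReal_integral_eq_lintegral_ofReal hgi
          (Filter.Eventually.of_forall hg0), ← hFM, ← lintegral_const_mul _ hFm.enorm]
      refine lintegral_mono fun p => ?_
      have h1 : ENNReal.ofReal (g p) = ‖Vt φ p.1 p.2 * F p‖ₑ := by
        rw [hgF, ← ofReal_norm, Complex.norm_real, Real.norm_of_nonneg (hg0 p)]
      rw [h1, enorm_mul]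
      by_cases h : p ∈ S
      · gcongr
        rw [← ofReal_norm]
        exact ENNReal.ofReal_le_ofReal h.2.2.le
      · rw [hF, indicator_of_notMem h]; simp
    set Wf : E3 → ℂ := fun y => ∫ p : ℝ × E3, kerV p.1 p.2 y * F p with hWf
    have s2 : ∫ p : ℝ × E3, Vt φ p.1 p.2 * F p = ∫ y, φ y * Wf y := by
      have h1 : ∀ p : ℝ × E3, Vt φ p.1 p.2 * F p = ∫ y, kerV p.1 p.2 y * φ y * F p := by
        intro p
        rw [integral_mul_const]; rfl
      have h2 : ∀ y, φ y * Wf y = ∫ p : ℝ × E3, kerV p.1 p.2 y * φ y * F p := by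
        intro y
        rw [hWf, ← integral_const_mul]
        congr 1; ext p; ring
      simp_rw [h1, h2]
      refine integral_integral_swap ?_
      have hp : Integrable (fun z : (ℝ × E3) × E3 => F z.1 * φ z.2)
        ((volume : Measure (ℝ × E3)).prod volume) := Integrable.mul_prod hFi hφ
      refine hp.norm.mono' ?_ (Filter.Eventually.of_forall fun z => ?_)
      · have hk : Continuous (fun z : (ℝ × E3) × E3 => kerV z.1.1 z.1.2 z.2) := by
          unfold kerV; fun_prop
        refine (hk.aestronglyMeasurable.mul hp.aestronglyMeasurable).congr
          (Filter.Eventually.of_forall fun z => ?_)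
        simp only [Function.uncurry, Pi.mul_apply]
        ring
      · simp only [Function.uncurry, norm_mul, kerV_norm]
        apply le_of_eq; ring
    have s3 : ‖∫ y, φ y * Wf y‖ₑ ≤ ENNReal.ofReal (6 * KW / l) * N +
        ENNReal.ofReal (l / (6 * KW)) * (3 * (ENNReal.ofReal KW * M)) := by
      set ε : ℝ := 1 / (ρ ^ 2 + 1) with hε
      have hε0 : 0 < ε := by positivity
      have hWb := W_bound F hFm e hem he0 hei (fun σ => (hF1 σ).le) hF2 ε hε0
      refine (enorm_integral_le_lintegral_enorm _).trans ?_
      have hpt : ∀ y, ‖φ y * Wf y‖ₑ ≤ ENNReal.ofReal (6 * KW / l) * ‖φ y‖ₑ ^ 2 +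
          ENNReal.ofReal (l / (6 * KW)) * (3 *
            (ENNReal.ofReal (Real.exp (-ε * ‖y‖ ^ 2)) * ‖Wf y‖ₑ ^ 2)) := by
        intro y
        by_cases hy : ρ < ‖y‖
        · rw [hρ y hy]; simp
        · have hyy : ‖y‖ ^ 2 ≤ ρ ^ 2 := by
            have := norm_nonneg y
            gcongr; exact not_lt.1 hy
          have h3 : 1 ≤ 3 * ENNReal.ofReal (Real.exp (-ε * ‖y‖ ^ 2)) := by
            rw [← ENNReal.ofReal_ofNat, ← ENNReal.ofReal_mul (by norm_num), ENNReal.one_le_ofReal]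
            have : ε * ‖y‖ ^ 2 ≤ 1 := by
              rw [hε, div_mul_eq_mul_div, one_mul, div_le_one (by positivity)]; linarith
            have h5 : Real.exp (-1) ≤ Real.exp (-ε * ‖y‖ ^ 2) := Real.exp_le_exp.2 (by linarith)
            have h6 : 1 ≤ 3 * Real.exp (-1) := by
              rw [Real.exp_neg, ← div_eq_mul_inv, one_le_div (Real.exp_pos 1)]
              linarith [Real.exp_one_lt_d9]
            linarith
          rw [enorm_mul]
          have e1 : ENNReal.ofReal (6 * KW / l) = ENNReal.ofReal (√(6 * KW / l)) ^ 2 := by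
            rw [← ENNReal.ofReal_pow (by positivity), Real.sq_sqrt (by positivity)]
          have e2 : ENNReal.ofReal (l / (6 * KW)) = ENNReal.ofReal (√(l / (6 * KW))) ^ 2 := by
            rw [← ENNReal.ofReal_pow (by positivity), Real.sq_sqrt (by positivity)]
          have e3 : ENNReal.ofReal (√(6 * KW / l)) * ENNReal.ofReal (√(l / (6 * KW))) = 1 := by
            rw [← ENNReal.ofReal_mul (by positivity), ← Real.sqrt_mul (by positivity)]
            have : 6 * KW / l * (l / (6 * KW)) = 1 := by field_simp
            rw [this]; simp
          calc ‖φ y‖ₑ * ‖Wf y‖ₑ = (ENNReal.ofReal (√(6 * KW / l)) * ‖φ y‖ₑ) *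
                (ENNReal.ofReal (√(l / (6 * KW))) * ‖Wf y‖ₑ) := by
                rw [mul_mul_mul_comm, e3, one_mul]
            _ ≤ _ := ennreal_mul_le_sq _ _
            _ = ENNReal.ofReal (6 * KW / l) * ‖φ y‖ₑ ^ 2 +
                ENNReal.ofReal (l / (6 * KW)) * (1 * ‖Wf y‖ₑ ^ 2) := by
                rw [e1, e2]; ring
            _ ≤ ENNReal.ofReal (6 * KW / l) * ‖φ y‖ₑ ^ 2 +
                ENNReal.ofReal (l / (6 * KW)) *
                  ((3 * ENNReal.ofReal (Real.exp (-ε * ‖y‖ ^ 2))) * ‖Wf y‖ₑ ^ 2) := by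
                gcongr
            _ = _ := by rw [mul_assoc 3]
      refine (lintegral_mono hpt).trans ?_
      rw [lintegral_add_left' ((hφ.aestronglyMeasurable.enorm.pow_const 2).const_mul _),
        lintegral_const_mul' _ _ ENNReal.ofReal_ne_top,
        lintegral_const_mul' _ _ ENNReal.ofReal_ne_top,
        lintegral_const_mul' _ _ (by norm_num)]
      gcongr
      exact hWb
    have s4 : ENNReal.ofReal l * M ≤ ENNReal.ofReal (6 * KW / l) * N +
        ENNReal.ofReal (l / (6 * KW)) * (3 * (ENNReal.ofReal KW * M)) := by
      refine s1.trans ?_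
      rw [s2]
      exact s3
    by_cases hNf : N = ∞
    · rw [hNf, ENNReal.mul_top]
      · exact le_top
      · simp; positivity
    · rw [← ENNReal.ofReal_toReal hNf, ← ENNReal.ofReal_toReal hMf] at s4 ⊢
      have hn : 0 ≤ N.toReal := ENNReal.toReal_nonneg
      have hm : 0 ≤ M.toReal := ENNReal.toReal_nonneg
      generalize N.toReal = n at *
      generalize M.toReal = m at *
      rw [← ENNReal.ofReal_ofNat, ← ENNReal.ofReal_mul (by positivity),
        ← ENNReal.ofReal_mul (by positivity), ← ENNReal.ofReal_mul (by positivity),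
        ← ENNReal.ofReal_mul (by positivity), ← ENNReal.ofReal_mul (by positivity),
        ← ENNReal.ofReal_add (by positivity) (by positivity),
        ENNReal.ofReal_le_ofReal_iff (by positivity)] at s4
      rw [← ENNReal.ofReal_mul (by positivity)]
      apply ENNReal.ofReal_le_ofReal
      have h1 : l / (6 * KW) * (3 * (KW * m)) = l * m / 2 := by field_simp; ring
      rw [h1] at s4
      have h2 : l * m ≤ 12 * KW / l * n := by
        have : 12 * KW / l * n = 2 * (6 * KW / l * n) := by ring
        rw [this]; linarith
      have h3 : m = l⁻¹ * (l * m) := by field_simp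
      rw [h3]
      calc l⁻¹ * (l * m) ≤ l⁻¹ * (12 * KW / l * n) := by gcongr
        _ = _ := by field_simp
  calc _ = ∫⁻ σ, v σ ^ (1 / 3 : ℝ) := rfl
    _ = M := by simp_rw [hev]; rfl
    _ ≤ _ := goal1

lemma W2 (φ : E3 → ℂ) (hφ : Integrable φ) (ρ : ℝ) (hρ : ∀ y, ρ < ‖y‖ → φ y = 0)
    (l : ℝ) (hl : 0 < l) :
    ∫⁻ σ, (volume {ξ : E3 | l < ‖Vt φ σ ξ‖}) ^ (1 / 3 : ℝ) ≤
      ENNReal.ofReal (12 * KW / l ^ 2) * ∫⁻ y, ‖φ y‖ₑ ^ 2 := by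
  have hVc := Vt_cont φ hφ
  have hlim : ∀ σ : ℝ, (volume {ξ : E3 | l < ‖Vt φ σ ξ‖}) ^ (1 / 3 : ℝ) =
      ⨆ n : ℕ, (volume {ξ : E3 | |σ| ≤ n ∧ ‖ξ‖ ≤ n ∧ l < ‖Vt φ σ ξ‖}) ^ (1 / 3 : ℝ) := by
    intro σ
    have hU : {ξ : E3 | l < ‖Vt φ σ ξ‖} =
        ⋃ n : ℕ, {ξ : E3 | |σ| ≤ n ∧ ‖ξ‖ ≤ n ∧ l < ‖Vt φ σ ξ‖} := by
      ext ξ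
      simp only [mem_ofPred_eq, mem_iUnion]
      constructor
      · intro h
        obtain ⟨n, hn⟩ := exists_nat_ge (max |σ| ‖ξ‖)
        exact ⟨n, (le_max_left _ _).trans hn, (le_max_right _ _).trans hn, h⟩
      · rintro ⟨n, h⟩; exact h.2.2
    have hmono : Monotone fun n : ℕ => {ξ : E3 | |σ| ≤ n ∧ ‖ξ‖ ≤ n ∧ l < ‖Vt φ σ ξ‖} := by
      intro n m hnm ξ h
      have : (n : ℝ) ≤ m := by exact_mod_cast hnm
      exact ⟨h.1.trans this, h.2.1.trans this, h.2.2⟩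
    rw [hU, hmono.measure_iUnion]
    exact (ENNReal.orderIsoRpow (1 / 3) (by norm_num)).map_iSup _
  simp_rw [hlim]
  rw [lintegral_iSup]
  · exact iSup_le fun n => W2_trunc φ hφ ρ hρ l hl n
  · intro n
    have hSm : MeasurableSet {p : ℝ × E3 | |p.1| ≤ n ∧ ‖p.2‖ ≤ n ∧ l < ‖Vt φ p.1 p.2‖} := by
      have h1 : MeasurableSet {p : ℝ × E3 | |p.1| ≤ n} :=
        measurableSet_le (by fun_prop) measurable_const
      have h2 : MeasurableSet {p : ℝ × E3 | ‖p.2‖ ≤ n} :=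
        measurableSet_le (by fun_prop) measurable_const
      have h3 : MeasurableSet {p : ℝ × E3 | l < ‖Vt φ p.1 p.2‖} :=
        measurableSet_lt measurable_const hVc.measurable.norm
      exact h1.inter (h2.inter h3)
    exact (measurable_measure_prodMk_left hSm).pow_const _
  · intro n m hnm σ
    refine ENNReal.rpow_le_rpow (measure_mono fun ξ h => ?_) (by norm_num)
    have : (n : ℝ) ≤ m := by exact_mod_cast hnm
    exact ⟨h.1.trans this, h.2.1.trans this, h.2.2⟩

lemma W1 (φ : E3 → ℂ) (hφ : Integrable φ) (σ l : ℝ) (hl : 0 < l) :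
    volume {ξ : E3 | l < ‖Vt φ σ ξ‖} ≤
      ENNReal.ofReal (2 * (2 * π) ^ 3 / l ^ 2) * ∫⁻ y, ‖φ y‖ₑ ^ 2 := by
  have hV : Continuous (fun y => Vt φ σ y) :=
    (Vt_cont φ hφ).comp (f := fun y : E3 => (σ, y)) (by fun_prop)
  have h := mul_meas_ge_le_lintegral (μ := (volume : Measure E3))
    (hV.measurable.enorm.pow_const 2) (ENNReal.ofReal (l ^ 2))
  have h2 : ENNReal.ofReal (l ^ 2) * volume {ξ : E3 | l < ‖Vt φ σ ξ‖} ≤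
      ENNReal.ofReal (2 * (2 * π) ^ 3) * ∫⁻ y, ‖φ y‖ₑ ^ 2 := by
    refine le_trans ?_ (h.trans (planch φ hφ σ))
    gcongr
    intro hx
    rw [← ofReal_norm, ← ENNReal.ofReal_pow (norm_nonneg _)]
    apply ENNReal.ofReal_le_ofReal
    have : l < _ := hx
    gcongr
  rw [div_eq_inv_mul, ENNReal.ofReal_mul (by positivity), mul_assoc]
  calc _ = ENNReal.ofReal (l ^ 2)⁻¹ * (ENNReal.ofReal (l ^ 2) *
        volume {ξ : E3 | l < ‖Vt φ σ ξ‖}) := by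
        rw [← mul_assoc, ← ENNReal.ofReal_mul (by positivity), inv_mul_cancel₀ (by positivity)]
        simp
    _ ≤ _ := by gcongr

lemma geo_sum (α c : ℝ) (hα : 0 < α) (hc : 0 < c) :
    ∑' k : ℤ, (if (2 : ℝ) ^ k ≤ c then ENNReal.ofReal (((2 : ℝ) ^ k) ^ α) else 0) ≤
      ENNReal.ofReal ((1 - 2 ^ (-α))⁻¹ * c ^ α) := by
  obtain ⟨n, hn1, hn2⟩ := exists_mem_Ico_zpow hc (one_lt_two : (1 : ℝ) < 2)
  have hq : (2 : ℝ) ^ (-α) < 1 := Real.rpow_lt_one_of_one_lt_of_neg one_lt_two (by linarith)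
  have hinj : Function.Injective (fun j : ℕ => n - (j : ℤ)) := by
    intro a b h; simpa using h
  rw [← hinj.tsum_eq]
  · calc _ ≤ ∑' j : ℕ, ENNReal.ofReal (c ^ α) * ENNReal.ofReal (2 ^ (-α)) ^ j := by
          refine ENNReal.tsum_le_tsum fun j => ?_
          split_ifs with h
          · rw [← ENNReal.ofReal_pow (by positivity), ← ENNReal.ofReal_mul (by positivity)]
            apply ENNReal.ofReal_le_ofReal
            have : ((2 : ℝ) ^ (n - (j : ℤ))) = 2 ^ n * (2 : ℝ) ^ (-(j : ℝ)) := by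
              rw [zpow_sub₀ two_ne_zero, Real.rpow_neg zero_le_two, Real.rpow_natCast]
              simp [div_eq_mul_inv]
            rw [this, Real.mul_rpow (by positivity) (by positivity), ← Real.rpow_mul zero_le_two,
              ← Real.rpow_natCast, ← Real.rpow_mul zero_le_two]
            have e : -(j : ℝ) * α = -α * j := by ring
            rw [e]
            gcongr
          · exact zero_le
      _ = _ := by
          rw [ENNReal.tsum_mul_left, ENNReal.tsum_geometric, mul_comm, ENNReal.ofReal_mul
            (by have := sub_pos.2 hq; positivity), ENNReal.ofReal_inv_of_pos (sub_pos.2 hq),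
            ENNReal.ofReal_sub _ (by positivity)]
          simp
  · intro k hk
    have hk' : (2 : ℝ) ^ k ≤ c := by
      by_contra h
      simp [h] at hk
    have : k ≤ n := by
      have h3 := hk'.trans_lt hn2
      have := (zpow_lt_zpow_iff_right₀ (one_lt_two : (1 : ℝ) < 2)).1 h3
      omega
    exact ⟨(n - k).toNat, by simp; omega⟩

lemma layer (q a : ℝ) (hq : 0 < q) (ha : 0 ≤ a) :
    ENNReal.ofReal (a ^ q) ≤
      ∑' k : ℤ, (if (2 : ℝ) ^ k < a then ENNReal.ofReal (((2 : ℝ) ^ (k + 1)) ^ q) else 0) := by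
  rcases ha.eq_or_lt with h | h
  · rw [← h, Real.zero_rpow hq.ne']; simp
  obtain ⟨n, hn1, hn2⟩ := exists_mem_Ioc_zpow h (one_lt_two : (1 : ℝ) < 2)
  refine le_trans ?_ (ENNReal.le_tsum n)
  rw [if_pos hn1]
  gcongr

lemma rpow_tsum_le {ι : Type*} (a : ι → ℝ≥0∞) (p : ℝ) (hp : 0 < p) (hp1 : p ≤ 1) :
    (∑' i, a i) ^ p ≤ ∑' i, a i ^ p := by
  rw [ENNReal.tsum_eq_iSup_sum]
  have := (ENNReal.orderIsoRpow p hp).map_iSup (fun s : Finset ι => ∑ i ∈ s, a i)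
  simp only [ENNReal.orderIsoRpow_apply] at this
  rw [this]
  refine iSup_le fun s => ?_
  refine le_trans ?_ (ENNReal.sum_le_tsum s)
  classical
  induction s using Finset.induction_on with
  | empty => simp [hp]
  | insert i s hi ih =>
    rw [Finset.sum_insert hi, Finset.sum_insert hi]
    exact (ENNReal.rpow_add_le_add_rpow _ _ hp.le hp1).trans (by gcongr)

structure Nice (φ : E3 → ℂ) : Prop where
  meas : Measurable φ
  bdd : ∃ B : ℝ, ∀ y, ‖φ y‖ ≤ B
  supp : ∃ ρ : ℝ, ∀ y, ρ < ‖y‖ → φ y = 0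

lemma Nice.indicator {φ : E3 → ℂ} (h : Nice φ) {S : Set E3} (hS : MeasurableSet S) :
    Nice (S.indicator φ) := by
  refine ⟨h.meas.indicator hS, ?_, ?_⟩
  · obtain ⟨B, hB⟩ := h.bdd
    exact ⟨B, fun y => (norm_indicator_le_norm_self _ _).trans (hB y)⟩
  · obtain ⟨ρ, hρ⟩ := h.supp
    refine ⟨ρ, fun y hy => ?_⟩
    by_cases hm : y ∈ S
    · rw [indicator_of_mem hm, hρ y hy]
    · rw [indicator_of_notMem hm]

lemma Nice.lint {φ : E3 → ℂ} (h : Nice φ) (q : ℝ) (hq : 0 < q) :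
    ∫⁻ y, ‖φ y‖ₑ ^ q < ∞ := by
  obtain ⟨B, hB⟩ := h.bdd
  obtain ⟨ρ, hρ⟩ := h.supp
  calc _ ≤ ∫⁻ y, (Metric.closedBall (0 : E3) ρ).indicator (fun _ => ENNReal.ofReal B ^ q) y := by
        refine lintegral_mono fun y => ?_
        by_cases hy : ρ < ‖y‖
        · simp [hρ y hy, hq]
        · rw [indicator_of_mem (by simpa using hy)]
          gcongr
          rw [← ofReal_norm]
          exact ENNReal.ofReal_le_ofReal (hB y)
    _ < ∞ := by
        rw [lintegral_indicator Metric.isClosed_closedBall.measurableSet, setLIntegral_const]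
        exact ENNReal.mul_lt_top (ENNReal.rpow_lt_top_of_nonneg hq.le ENNReal.ofReal_ne_top)
          measure_closedBall_lt_top

lemma Nice.int {φ : E3 → ℂ} (h : Nice φ) : Integrable φ := by
  refine ⟨h.meas.aestronglyMeasurable, ?_⟩
  have := h.lint 1 one_pos
  simpa [HasFiniteIntegral] using this

lemma enorm_rpow (z : ℂ) (q : ℝ) (hq : 0 ≤ q) : ‖z‖ₑ ^ q = ENNReal.ofReal (‖z‖ ^ q) := by
  rw [← ofReal_norm, ENNReal.ofReal_rpow_of_nonneg (norm_nonneg _) hq]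

def CM (r : ℝ) : ℝ := 4 * 2 ^ r * (1 - 2 ^ (-(r - 2)))⁻¹ * 2 ^ (r - 2)

lemma CM_pos (r : ℝ) (hr : 2 < r) : 0 < CM r := by
  have hq : (2 : ℝ) ^ (-(r - 2)) < 1 :=
    Real.rpow_lt_one_of_one_lt_of_neg one_lt_two (by linarith)
  have := sub_pos.2 hq
  unfold CM
  positivity

lemma marc (r K : ℝ) (hr : 2 < r) (hK : 0 < K) (Wf : (E3 → ℂ) → ℝ → ℝ≥0∞)
    (h1 : ∀ φ, Nice φ → ∀ l, 0 < l → Wf φ l ≤ ENNReal.ofReal (K / l ^ 2) * ∫⁻ y, ‖φ y‖ₑ ^ 2)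
    (h2 : ∀ φ0 φ1, Nice φ0 → Nice φ1 → ∀ l, 0 < l → ∫⁻ y, ‖φ1 y‖ₑ ≤ ENNReal.ofReal (l / 2) →
      Wf (fun y => φ0 y + φ1 y) l ≤ Wf φ0 (l / 2))
    (φ : E3 → ℂ) (hφ : Nice φ) :
    ∑' k : ℤ, ENNReal.ofReal (((2 : ℝ) ^ (k + 1)) ^ r) * Wf φ (2 ^ k) ≤
      ENNReal.ofReal (K * CM r) * (∫⁻ y, ‖φ y‖ₑ ^ (r / (r - 1))) ^ (r - 1) := by
  have hr1 : 0 < r - 1 := by linarith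
  set q := r / (r - 1) with hq
  have hq0 : 0 < q := by positivity
  set P := ∫⁻ y, ‖φ y‖ₑ ^ q with hP
  have hPf : P < ∞ := hφ.lint q hq0
  set p := P.toReal with hp
  have hPp : P = ENNReal.ofReal p := (ENNReal.ofReal_toReal hPf.ne).symm
  rcases (ENNReal.toReal_nonneg : 0 ≤ P.toReal).eq_or_lt with h0 | hp0
  · have hP0 : P = 0 := by rw [hPp, hp, ← h0]; simp
    have hae := (lintegral_eq_zero_iff (hφ.meas.enorm.pow_const q)).1 hP0
    have : ∫⁻ y, ‖φ y‖ₑ ^ 2 = 0 := by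
      rw [lintegral_eq_zero_iff (hφ.meas.enorm.pow_const 2)]
      filter_upwards [hae] with y hy
      have : φ y = 0 := by
        simpa [hq0, hq0.not_gt] using hy
      simp [this]
    have hz : ∀ k : ℤ, Wf φ (2 ^ k) = 0 := by
      intro k
      have := h1 φ hφ (2 ^ k) (by positivity)
      simpa [‹∫⁻ y, ‖φ y‖ₑ ^ 2 = 0›] using this
    simp [hz]
  have hp0' : 0 < p := hp0
  -- the pointwise cutoff
  have hW : ∀ k : ℤ, ENNReal.ofReal (((2 : ℝ) ^ (k + 1)) ^ r) * Wf φ (2 ^ k) ≤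
      ∫⁻ y, ENNReal.ofReal (4 * 2 ^ r * K) * (‖φ y‖ₑ ^ 2 *
        (if (2 : ℝ) ^ k ≤ 2 * p * ‖φ y‖ ^ (-(r - 1)⁻¹) then
          ENNReal.ofReal (((2 : ℝ) ^ k) ^ (r - 2)) else 0)) := by
    intro k
    set l : ℝ := 2 ^ k with hl
    have hl0 : 0 < l := by positivity
    set h : ℝ := (2 * p / l) ^ (r - 1) with hh
    have hh0 : 0 < h := by positivity
    set S : Set E3 := {y | ‖φ y‖ ≤ h} with hS
    have hSm : MeasurableSet S := measurableSet_le hφ.meas.norm measurable_const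
    have hdec : (fun y => S.indicator φ y + Sᶜ.indicator φ y) = φ := by
      ext y; exact congrFun (indicator_self_add_compl S φ) y
    have hsm : ∫⁻ y, ‖Sᶜ.indicator φ y‖ₑ ≤ ENNReal.ofReal (l / 2) := by
      calc _ ≤ ∫⁻ y, ENNReal.ofReal (h ^ (1 - q)) * ‖φ y‖ₑ ^ q := by
            refine lintegral_mono fun y => ?_
            by_cases hy : y ∈ S
            · rw [indicator_of_notMem (by simpa using hy)]; simp
            · rw [indicator_of_mem (by simpa using hy)]
              have hy' : h < ‖φ y‖ := not_le.1 hy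
              have hpos := hh0.trans hy'
              rw [enorm_rpow _ _ hq0.le, ← ENNReal.ofReal_mul (by positivity), ← ofReal_norm]
              apply ENNReal.ofReal_le_ofReal
              have h1q : 1 - q ≤ 0 := by
                rw [hq, sub_nonpos, one_le_div hr1]; linarith
              calc ‖φ y‖ = ‖φ y‖ ^ (1 - q) * ‖φ y‖ ^ q := by
                    rw [← Real.rpow_add hpos]; simp
                _ ≤ _ := by
                    gcongr ?_ * _
                    exact Real.rpow_le_rpow_of_nonpos hh0 hy'.le h1q
        _ = ENNReal.ofReal (h ^ (1 - q)) * P := by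
            rw [lintegral_const_mul' _ _ ENNReal.ofReal_ne_top]
        _ = _ := by
            rw [hPp, ← ENNReal.ofReal_mul (by positivity)]
            congr 1
            rw [hh, ← Real.rpow_mul (by positivity)]
            have : (r - 1) * (1 - q) = -1 := by rw [hq]; field_simp; ring
            rw [this, Real.rpow_neg_one]
            field_simp
    have hb := (h2 _ _ (hφ.indicator hSm) (hφ.indicator hSm.compl) l hl0 hsm).trans
      (h1 _ (hφ.indicator hSm) (l / 2) (by positivity))
    rw [hdec] at hb
    calc _ ≤ ENNReal.ofReal (((2 : ℝ) ^ (k + 1)) ^ r) * (ENNReal.ofReal (K / (l / 2) ^ 2) *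
          ∫⁻ y, ‖S.indicator φ y‖ₑ ^ 2) := by gcongr
      _ = ENNReal.ofReal (4 * 2 ^ r * K) * ∫⁻ y, ENNReal.ofReal (l ^ (r - 2)) *
          ‖S.indicator φ y‖ₑ ^ 2 := by
          rw [lintegral_const_mul' _ _ ENNReal.ofReal_ne_top, ← mul_assoc, ← mul_assoc,
            ← ENNReal.ofReal_mul (by positivity), ← ENNReal.ofReal_mul (by positivity)]
          congr 2
          rw [zpow_add_one₀ two_ne_zero, ← hl, Real.mul_rpow hl0.le zero_le_two,
            Real.rpow_sub hl0]
          rw [Real.rpow_two]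
          field_simp
          norm_num
      _ ≤ _ := by
          conv_rhs => rw [lintegral_const_mul' _ _ ENNReal.ofReal_ne_top]
          refine mul_le_mul_right (lintegral_mono fun y => ?_) _
          rw [mul_comm]
          by_cases hy : y ∈ S
          · rw [indicator_of_mem hy]
            rcases (norm_nonneg (φ y)).eq_or_lt with h0 | hpos
            · have : φ y = 0 := norm_eq_zero.1 h0.symm
              simp [this]
            have hy' : ‖φ y‖ ≤ (2 * p / l) ^ (r - 1) := hy
            rw [if_pos]
            have h5 : ‖φ y‖ ^ (r - 1)⁻¹ ≤ 2 * p / l := by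
              calc _ ≤ ((2 * p / l) ^ (r - 1)) ^ (r - 1)⁻¹ := by gcongr
                _ = _ := by rw [← Real.rpow_mul (by positivity), mul_inv_cancel₀ hr1.ne',
                    Real.rpow_one]
            rw [Real.rpow_neg hpos.le, ← div_eq_mul_inv, le_div_iff₀ (by positivity)]
            rw [le_div_iff₀ hl0] at h5
            linarith
          · rw [indicator_of_notMem hy]; simp
  calc _ ≤ ∑' k : ℤ, ∫⁻ y, ENNReal.ofReal (4 * 2 ^ r * K) * (‖φ y‖ₑ ^ 2 *
        (if (2 : ℝ) ^ k ≤ 2 * p * ‖φ y‖ ^ (-(r - 1)⁻¹) then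
          ENNReal.ofReal (((2 : ℝ) ^ k) ^ (r - 2)) else 0)) := ENNReal.tsum_le_tsum hW
    _ = ∫⁻ y, ENNReal.ofReal (4 * 2 ^ r * K) * (‖φ y‖ₑ ^ 2 *
        ∑' k : ℤ, (if (2 : ℝ) ^ k ≤ 2 * p * ‖φ y‖ ^ (-(r - 1)⁻¹) then
          ENNReal.ofReal (((2 : ℝ) ^ k) ^ (r - 2)) else 0)) := by
        rw [← lintegral_tsum]
        · simp_rw [ENNReal.tsum_mul_left]
        · intro k
          refine Measurable.aemeasurable ?_
          refine Measurable.const_mul (Measurable.mul (hφ.meas.enorm.pow_const 2) ?_) _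
          refine Measurable.ite ?_ measurable_const measurable_const
          exact measurableSet_le measurable_const ((hφ.meas.norm.pow_const _).const_mul _)
    _ ≤ ∫⁻ y, ENNReal.ofReal (K * CM r * p ^ (r - 2)) * ‖φ y‖ₑ ^ q := by
        refine lintegral_mono fun y => ?_
        rcases (norm_nonneg (φ y)).eq_or_lt with h0 | hpos
        · have : φ y = 0 := norm_eq_zero.1 h0.symm
          simp [this]
        have hq1 : (2 : ℝ) ^ (-(r - 2)) < 1 :=
          Real.rpow_lt_one_of_one_lt_of_neg one_lt_two (by linarith)
        have hq2 := sub_pos.2 hq1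
        calc _ ≤ ENNReal.ofReal (4 * 2 ^ r * K) * (‖φ y‖ₑ ^ 2 * ENNReal.ofReal
              ((1 - 2 ^ (-(r - 2)))⁻¹ * (2 * p * ‖φ y‖ ^ (-(r - 1)⁻¹)) ^ (r - 2))) := by
              gcongr
              exact geo_sum _ _ (by linarith) (by positivity)
          _ = _ := by
              rw [enorm_rpow _ _ hq0.le, ← ofReal_norm, ← ENNReal.ofReal_pow (norm_nonneg _),
                ← ENNReal.ofReal_mul (by positivity), ← ENNReal.ofReal_mul (by positivity),
                ← ENNReal.ofReal_mul (by have := CM_pos r hr; positivity)]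
              congr 1
              have e1 : ‖φ y‖ ^ q = ‖φ y‖ ^ 2 * (‖φ y‖ ^ (-(r - 1)⁻¹)) ^ (r - 2) := by
                rw [← Real.rpow_mul hpos.le, ← Real.rpow_two, ← Real.rpow_add hpos]
                congr 1
                rw [hq]; field_simp; ring
              rw [e1, Real.mul_rpow (by positivity) (by positivity),
                Real.mul_rpow zero_le_two hp0'.le]
              unfold CM
              ring
    _ = _ := by
        have := CM_pos r hr
        rw [lintegral_const_mul' _ _ ENNReal.ofReal_ne_top]
        change _ * P = _
        rw [hPp, ENNReal.ofReal_rpow_of_nonneg hp0'.le hr1.le, ← ENNReal.ofReal_mul (by positivity),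
          ← ENNReal.ofReal_mul (by positivity)]
        congr 1
        have : p ^ (r - 1) = p ^ (r - 2) * p := by
          rw [← Real.rpow_add_one hp0'.ne']; congr 1; ring
        rw [this]; ring

lemma Vt_level (φ0 φ1 : E3 → ℂ) (h0 : Nice φ0) (h1 : Nice φ1) (l : ℝ) (hl : 0 < l)
    (h : ∫⁻ y, ‖φ1 y‖ₑ ≤ ENNReal.ofReal (l / 2)) (σ : ℝ) :
    {ξ : E3 | l < ‖Vt (fun y => φ0 y + φ1 y) σ ξ‖} ⊆ {ξ : E3 | l / 2 < ‖Vt φ0 σ ξ‖} := by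
  intro ξ hξ
  have hξ' : l < ‖Vt (fun y => φ0 y + φ1 y) σ ξ‖ := hξ
  have e : Vt (fun y => φ0 y + φ1 y) σ ξ = Vt φ0 σ ξ + Vt φ1 σ ξ := by
    unfold Vt
    rw [← integral_add (kerV_int _ h0.int σ ξ) (kerV_int _ h1.int σ ξ)]
    congr 1; ext y; ring
  have h2 : ‖Vt φ1 σ ξ‖ ≤ l / 2 := by
    have := (Vt_enorm_le φ1 σ ξ).trans h
    rw [← ofReal_norm] at this
    exact (ENNReal.ofReal_le_ofReal_iff (by positivity)).1 this
  rw [e] at hξ'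
  have := norm_add_le (Vt φ0 σ ξ) (Vt φ1 σ ξ)
  change l / 2 < _
  linarith

lemma Vt_lint_le (φ : E3 → ℂ) (hφ : Nice φ) (q : ℝ) (hq : 0 < q) (σ : ℝ) :
    ∫⁻ ξ, ‖Vt φ σ ξ‖ₑ ^ q ≤ ∑' k : ℤ, ENNReal.ofReal (((2 : ℝ) ^ (k + 1)) ^ q) *
      volume {ξ : E3 | (2 : ℝ) ^ k < ‖Vt φ σ ξ‖} := by
  have hV : Continuous (fun y => Vt φ σ y) :=
    (Vt_cont φ hφ.int).comp (f := fun y : E3 => (σ, y)) (by fun_prop)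
  have hm : ∀ k : ℤ, MeasurableSet {ξ : E3 | (2 : ℝ) ^ k < ‖Vt φ σ ξ‖} := fun k =>
    measurableSet_lt measurable_const hV.measurable.norm
  calc _ ≤ ∫⁻ ξ, ∑' k : ℤ, {ξ : E3 | (2 : ℝ) ^ k < ‖Vt φ σ ξ‖}.indicator
        (fun _ => ENNReal.ofReal (((2 : ℝ) ^ (k + 1)) ^ q)) ξ := by
        refine lintegral_mono fun ξ => ?_
        rw [enorm_rpow _ _ hq.le]
        refine (layer q _ hq (norm_nonneg _)).trans (le_of_eq ?_)
        congr 1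
    _ = _ := by
        rw [lintegral_tsum]
        · congr 1; ext k
          rw [lintegral_indicator (hm k), setLIntegral_const]
        · intro k
          exact (measurable_const.indicator (hm k)).aemeasurable

lemma HY (r : ℝ) (hr : 2 < r) (φ : E3 → ℂ) (hφ : Nice φ) (σ : ℝ) :
    ∫⁻ ξ, ‖Vt φ σ ξ‖ₑ ^ r ≤ ENNReal.ofReal (2 * (2 * π) ^ 3 * CM r) *
      (∫⁻ y, ‖φ y‖ₑ ^ (r / (r - 1))) ^ (r - 1) := by
  refine (Vt_lint_le φ hφ r (by linarith) σ).trans ?_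
  exact marc r (2 * (2 * π) ^ 3) hr (by positivity)
    (fun φ l => volume {ξ : E3 | l < ‖Vt φ σ ξ‖})
    (fun φ hφ l hl => W1 φ hφ.int σ l hl)
    (fun φ0 φ1 h0 h1 l hl h => measure_mono (Vt_level φ0 φ1 h0 h1 l hl h σ)) φ hφ

lemma Vlev_meas (φ : E3 → ℂ) (hφ : Nice φ) (l : ℝ) :
    Measurable fun σ : ℝ => volume {ξ : E3 | l < ‖Vt φ σ ξ‖} := by
  have h3 : MeasurableSet {p : ℝ × E3 | l < ‖Vt φ p.1 p.2‖} :=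
    measurableSet_lt measurable_const (Vt_cont φ hφ.int).measurable.norm
  exact measurable_measure_prodMk_left h3

lemma SE (r : ℝ) (hr : 2 < r) (φ : E3 → ℂ) (hφ : Nice φ) :
    ∫⁻ σ, (∫⁻ ξ, ‖Vt φ σ ξ‖ₑ ^ (3 * r)) ^ (1 / 3 : ℝ) ≤ ENNReal.ofReal (12 * KW * CM r) *
      (∫⁻ y, ‖φ y‖ₑ ^ (r / (r - 1))) ^ (r - 1) := by
  have h13 : (0 : ℝ) ≤ 1 / 3 := by norm_num
  calc _ ≤ ∫⁻ σ, ∑' k : ℤ, ENNReal.ofReal (((2 : ℝ) ^ (k + 1)) ^ r) *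
        volume {ξ : E3 | (2 : ℝ) ^ k < ‖Vt φ σ ξ‖} ^ (1 / 3 : ℝ) := by
        refine lintegral_mono fun σ => ?_
        refine (ENNReal.rpow_le_rpow (Vt_lint_le φ hφ (3 * r) (by linarith) σ) h13).trans ?_
        refine (rpow_tsum_le _ _ (by norm_num) (by norm_num)).trans (le_of_eq ?_)
        congr 1; ext k
        rw [ENNReal.mul_rpow_of_nonneg _ _ h13, ENNReal.ofReal_rpow_of_nonneg (by positivity) h13,
          ← Real.rpow_mul (by positivity)]
        congr 3
        ring
    _ = ∑' k : ℤ, ENNReal.ofReal (((2 : ℝ) ^ (k + 1)) ^ r) *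
        ∫⁻ σ, volume {ξ : E3 | (2 : ℝ) ^ k < ‖Vt φ σ ξ‖} ^ (1 / 3 : ℝ) := by
        rw [lintegral_tsum]
        · congr 1; ext k
          rw [lintegral_const_mul' _ _ ENNReal.ofReal_ne_top]
        · intro k
          exact (((Vlev_meas φ hφ _).pow_const _).const_mul _).aemeasurable
    _ ≤ _ := marc r (12 * KW) hr (by have := KW_pos; positivity)
        (fun φ l => ∫⁻ σ, volume {ξ : E3 | l < ‖Vt φ σ ξ‖} ^ (1 / 3 : ℝ))
        (fun φ hφ l hl => by
          obtain ⟨ρ, hρ⟩ := hφ.supp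
          exact W2 φ hφ.int ρ hρ l hl)
        (fun φ0 φ1 h0 h1 l hl h => lintegral_mono fun σ =>
          ENNReal.rpow_le_rpow (measure_mono (Vt_level φ0 φ1 h0 h1 l hl h σ)) h13) φ hφ

def Zt (φ : E3 → ℂ) (τ : ℝ) (y : E3) : ℂ :=
  ∫ x, Complex.exp (Complex.I * ((‖x - y‖ ^ 2 : ℝ) : ℂ) / (4 * (τ : ℂ))) * φ x

lemma Zt_enorm (φ : E3 → ℂ) (τ : ℝ) (hτ : 0 < τ) (y : E3) :
    ‖Zt φ τ y‖ₑ = ‖Vt φ (1 / (4 * τ)) ((2 * τ)⁻¹ • y)‖ₑ := by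
  have hτc : (τ : ℂ) ≠ 0 := by exact_mod_cast hτ.ne'
  have h : Zt φ τ y = Complex.exp (((‖y‖ ^ 2 / (4 * τ) : ℝ) : ℂ) * Complex.I) *
      Vt φ (1 / (4 * τ)) ((2 * τ)⁻¹ • y) := by
    unfold Zt Vt
    rw [← integral_const_mul]
    congr 1; ext x
    rw [← mul_assoc]
    congr 1
    unfold kerV
    rw [← Complex.exp_add]
    congr 1
    rw [norm_sub_sq_real, real_inner_smul_left, real_inner_comm]
    push_cast
    field_simp
    ring
  rw [h, enorm_mul, ← ofReal_norm, Complex.norm_exp_ofReal_mul_I]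
  simp

lemma Zt_lint (φ : E3 → ℂ) (hφ : Nice φ) (τ : ℝ) (hτ : 0 < τ) (q : ℝ) :
    ∫⁻ y, ‖Zt φ τ y‖ₑ ^ q = ENNReal.ofReal ((2 * τ) ^ 3) *
      ∫⁻ ξ, ‖Vt φ (1 / (4 * τ)) ξ‖ₑ ^ q := by
  have hV : Continuous (fun y => Vt φ (1 / (4 * τ)) y) :=
    (Vt_cont φ hφ.int).comp (f := fun y : E3 => (1 / (4 * τ), y)) (by fun_prop)
  simp_rw [Zt_enorm φ τ hτ]
  have h := Measure.map_addHaar_smul (volume : Measure E3) (r := (2 * τ)⁻¹) (by positivity)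
  rw [← lintegral_map (f := fun ξ => ‖Vt φ (1 / (4 * τ)) ξ‖ₑ ^ q) (g := fun y => (2 * τ)⁻¹ • y)
    (hV.measurable.enorm.pow_const q) (by fun_prop), h, lintegral_smul_measure, smul_eq_mul]
  congr 2
  rw [finrank_euclideanSpace_fin, inv_pow, inv_inv, abs_of_pos (by positivity)]

def J0 (r : ℝ) (φ : E3 → ℂ) (σ : ℝ) : ℝ≥0∞ := ∫⁻ ξ, ‖Vt φ σ ξ‖ₑ ^ (3 * r)

lemma J0_meas (r : ℝ) (φ : E3 → ℂ) (hφ : Nice φ) : Measurable (J0 r φ) := by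
  have : Measurable (fun p : ℝ × E3 => ‖Vt φ p.1 p.2‖ₑ ^ (3 * r)) :=
    (Vt_cont φ hφ.int).measurable.enorm.pow_const _
  exact this.lintegral_prod_right'

def kf (r : ℝ) (φ : E3 → ℂ) (τ : ℝ) : ℝ≥0∞ :=
  ENNReal.ofReal (τ ^ (3 * (1 / 2 - 1 / r)) * (4 * π * τ) ^ (-(3 / 2) : ℝ) * (2 * τ) ^ (1 / r)) *
    J0 r φ (1 / (4 * τ)) ^ (1 / (3 * r))

lemma kf_meas (r : ℝ) (φ : E3 → ℂ) (hφ : Nice φ) : Measurable (kf r φ) := by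
  unfold kf
  refine Measurable.mul ?_ (((J0_meas r φ hφ).comp (by fun_prop)).pow_const _)
  refine ENNReal.measurable_ofReal.comp ?_
  exact ((measurable_id.pow_const _).mul ((measurable_id.const_mul _).pow_const _)).mul
    ((measurable_id.const_mul _).pow_const _)

lemma kf_eq (r : ℝ) (hr : 2 < r) (φ : E3 → ℂ) (hφ : Nice φ) (τ : ℝ) (hτ : 0 < τ) :
    ENNReal.ofReal ((4 * π * τ) ^ (-(3 / 2) : ℝ)) *
      (∫⁻ y, ‖Zt φ τ y‖ₑ ^ (3 * r)) ^ (1 / (3 * r)) =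
      ENNReal.ofReal (τ ^ (-(3 * (1 / 2 - 1 / r)))) * kf r φ τ := by
  have h3 : 0 ≤ 1 / (3 * r) := by positivity
  rw [Zt_lint φ hφ τ hτ, ENNReal.mul_rpow_of_nonneg _ _ h3,
    ENNReal.ofReal_rpow_of_nonneg (by positivity) h3]
  unfold kf J0
  rw [← mul_assoc, ← mul_assoc, ← ENNReal.ofReal_mul (by positivity),
    ← ENNReal.ofReal_mul (by positivity)]
  congr 2
  rw [Real.rpow_neg hτ.le, ← Real.rpow_natCast, ← Real.rpow_mul (by positivity)]
  have : ((3 : ℕ) : ℝ) * (1 / (3 * r)) = 1 / r := by push_cast; field_simp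
  rw [this]
  have hne : τ ^ (3 * (1 / 2 - 1 / r)) ≠ 0 := by positivity
  field_simp

def CK (r : ℝ) : ℝ := 8 * (4 * π) ^ (-(3 / 2) * r) * (12 * KW * CM r)

lemma CK_pos (r : ℝ) (hr : 2 < r) : 0 < CK r := by
  have := CM_pos r hr
  have := KW_pos
  unfold CK
  positivity

lemma kf_int (r : ℝ) (hr : 2 < r) (φ : E3 → ℂ) (hφ : Nice φ) :
    ∫⁻ τ in Ioi (0 : ℝ), kf r φ τ ^ r ≤ ENNReal.ofReal (CK r) *
      (∫⁻ y, ‖φ y‖ₑ ^ (r / (r - 1))) ^ (r - 1) := by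
  have hr0 : 0 < r := by linarith
  have hCM := CM_pos r hr
  have hKW := KW_pos
  calc _ = ∫⁻ τ in Ioi (0 : ℝ), ENNReal.ofReal (8 * (4 * π) ^ (-(3 / 2) * r)) *
        (ENNReal.ofReal |(-(4 / (4 * τ) ^ 2))| * J0 r φ (1 / (4 * τ)) ^ (1 / 3 : ℝ)) := by
        refine setLIntegral_congr_fun measurableSet_Ioi fun τ hτ => ?_
        have hτ : 0 < τ := hτ
        simp only [kf]
        rw [ENNReal.mul_rpow_of_nonneg _ _ hr0.le,
          ENNReal.ofReal_rpow_of_nonneg (by positivity) hr0.le, ← ENNReal.rpow_mul, ← mul_assoc,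
          ← ENNReal.ofReal_mul (by positivity)]
        have e1 : 1 / (3 * r) * r = 1 / 3 := by field_simp
        rw [e1]
        congr 2
        rw [abs_neg, abs_of_pos (by positivity), Real.mul_rpow (by positivity) (by positivity),
          Real.mul_rpow (by positivity) (by positivity), ← Real.rpow_mul hτ.le,
          ← Real.rpow_mul (by positivity), ← Real.rpow_mul (by positivity),
          Real.mul_rpow (x := 4 * π) (by positivity) (by positivity)]
        have e2 : 1 / r * r = 1 := by field_simp
        rw [e2, Real.rpow_one]
        have e3 : τ ^ (3 * (1 / 2 - 1 / r) * r) * τ ^ (-(3 / 2) * r) * τ ^ (3 : ℝ) = 1 := by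
          rw [← Real.rpow_add hτ, ← Real.rpow_add hτ]
          have : 3 * (1 / 2 - 1 / r) * r + -(3 / 2) * r + 3 = 0 := by field_simp; ring
          rw [this, Real.rpow_zero]
        have e4 : τ ^ (3 : ℝ) = τ ^ 3 := by
          rw [← Real.rpow_natCast]; norm_num
        rw [e4] at e3
        calc _ = 2 * (4 * π) ^ (-(3 / 2) * r) * (τ ^ (3 * (1 / 2 - 1 / r) * r) *
              τ ^ (-(3 / 2) * r) * τ ^ 3) / τ ^ 2 := by field_simp
          _ = _ := by rw [e3]; field_simp; norm_num
    _ = ENNReal.ofReal (8 * (4 * π) ^ (-(3 / 2) * r)) *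
        ∫⁻ σ in (fun τ : ℝ => 1 / (4 * τ)) '' Ioi 0, J0 r φ σ ^ (1 / 3 : ℝ) := by
        rw [lintegral_const_mul' _ _ ENNReal.ofReal_ne_top]
        congr 1
        rw [lintegral_image_eq_lintegral_abs_deriv_mul measurableSet_Ioi
          (f' := fun τ : ℝ => -(4 / (4 * τ) ^ 2))]
        · intro τ hτ
          have hτ : 0 < τ := hτ
          have h1 : HasDerivAt (fun τ : ℝ => 4 * τ) 4 τ := by
            simpa using (hasDerivAt_id τ).const_mul (4 : ℝ)
          have := (h1.inv (by positivity)).hasDerivWithinAt (s := Ioi 0)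
          have e : (fun τ : ℝ => 1 / (4 * τ)) = (fun τ : ℝ => 4 * τ)⁻¹ := by
            ext τ; simp [one_div]
          rw [e]
          simpa only [neg_div] using this
        · intro a ha b hb hab
          have ha : 0 < a := ha
          have hb : 0 < b := hb
          simp only [one_div, inv_inj] at hab
          linarith
    _ ≤ ENNReal.ofReal (8 * (4 * π) ^ (-(3 / 2) * r)) * (ENNReal.ofReal (12 * KW * CM r) *
      (∫⁻ y, ‖φ y‖ₑ ^ (r / (r - 1))) ^ (r - 1)) := by
        gcongr
        exact (setLIntegral_le_lintegral _ _).trans (SE r hr φ hφ)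
    _ = _ := by
        rw [← mul_assoc, ← ENNReal.ofReal_mul (by positivity)]; rfl

def CH (r : ℝ) : ℝ := (4 * π) ^ (-(3 / 2) : ℝ) * 2 ^ (3 / r) * (2 * (2 * π) ^ 3 * CM r) ^ (1 / r)

lemma CH_pos (r : ℝ) (hr : 2 < r) : 0 < CH r := by
  have := CM_pos r hr
  unfold CH
  positivity

lemma HY_est (r : ℝ) (hr : 2 < r) (φ : E3 → ℂ) (hφ : Nice φ) (τ : ℝ) (hτ : 0 < τ) :
    ENNReal.ofReal ((4 * π * τ) ^ (-(3 / 2) : ℝ)) *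
      (∫⁻ y, ‖Zt φ τ y‖ₑ ^ r) ^ (1 / r) ≤
      ENNReal.ofReal (CH r) * ENNReal.ofReal (τ ^ (-(3 * (1 / 2 - 1 / r)))) *
        (∫⁻ y, ‖φ y‖ₑ ^ (r / (r - 1))) ^ ((r - 1) / r) := by
  have h3 : 0 ≤ 1 / r := by positivity
  have hCM := CM_pos r hr
  rw [Zt_lint φ hφ τ hτ]
  calc _ ≤ ENNReal.ofReal ((4 * π * τ) ^ (-(3 / 2) : ℝ)) * (ENNReal.ofReal ((2 * τ) ^ 3) *
      (ENNReal.ofReal (2 * (2 * π) ^ 3 * CM r) *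
      (∫⁻ y, ‖φ y‖ₑ ^ (r / (r - 1))) ^ (r - 1))) ^ (1 / r) := by
        gcongr
        exact HY r hr φ hφ _
    _ = _ := by
        rw [ENNReal.mul_rpow_of_nonneg _ _ h3, ENNReal.mul_rpow_of_nonneg _ _ h3,
          ENNReal.ofReal_rpow_of_nonneg (by positivity) h3,
          ENNReal.ofReal_rpow_of_nonneg (by positivity) h3, ← ENNReal.rpow_mul,
          ← mul_assoc, ← mul_assoc, ← ENNReal.ofReal_mul (by positivity),
          ← ENNReal.ofReal_mul (by positivity), ← ENNReal.ofReal_mul (CH_pos r hr).le]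
        have e0 : (r - 1) * (1 / r) = (r - 1) / r := by ring
        rw [e0]
        congr 2
        unfold CH
        rw [← Real.rpow_natCast, ← Real.rpow_mul (by positivity),
          Real.mul_rpow (x := 4 * π) (by positivity) (by positivity),
          Real.mul_rpow (x := 2) (y := τ) (by positivity) (by positivity)]
        have e2 : ((3 : ℕ) : ℝ) * (1 / r) = 3 / r := by push_cast; field_simp
        have e3 : τ ^ (-(3 * (1 / 2 - 1 / r))) = τ ^ (-(3 / 2) : ℝ) * τ ^ (3 / r) := by
          rw [← Real.rpow_add hτ]; congr 1; field_simp; ring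
        rw [e2, e3]
        ring

open Classical in
lemma reg (t : ℝ) (I : Set ℝ) (hI : MeasurableSet I) (G : ℝ → E3 → ℂ)
    (hc : ∀ s ∈ I, s ≠ t → Continuous (G s)) :
    ∃ (K : Set E3) (T : Set ℝ), MeasurableSet T ∧ T ⊆ I ∧ t ∉ T ∧
      Measurable (fun p : E3 × ℝ => if p.1 ∈ K ∧ p.2 ∈ T then G p.2 p.1 else 0) ∧
      (∀ x, ∫ s in I, G s x = ∫ s, if x ∈ K ∧ s ∈ T then G s x else 0) := by
  set D : Set E3 := {x | IntegrableOn (fun s => G s x) I} with hD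
  obtain ⟨D0, hD0D, hD0c, hDD0⟩ :=
    (TopologicalSpace.IsSeparable.of_separableSpace D).exists_countable_dense_subset
  set K := closure D0 with hK
  have hmk : ∀ d ∈ D0, ∃ m : ℝ → ℂ, Measurable m ∧ (fun s => G s d) =ᵐ[volume.restrict I] m := by
    intro d hd
    have h : IntegrableOn (fun s => G s d) I := hD0D hd
    exact ⟨h.aestronglyMeasurable.mk _, h.aestronglyMeasurable.stronglyMeasurable_mk.measurable,
      h.aestronglyMeasurable.ae_eq_mk⟩
  choose! m hm hmG using hmk
  have hae : ∀ᵐ s ∂(volume.restrict I), ∀ d ∈ D0, G s d = m d s :=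
    (ae_ball_iff hD0c).2 fun d hd => hmG d hd
  obtain ⟨N, hBN, hNm, hN0⟩ := exists_measurable_superset_of_null (ae_iff.1 hae)
  set T : Set ℝ := (I \ N) \ {t} with hT
  have hTm : MeasurableSet T := (hI.diff hNm).diff (measurableSet_singleton t)
  have hTI : T ⊆ I := fun s hs => hs.1.1
  have hTt : ∀ s ∈ T, s ≠ t := fun s hs => hs.2
  have hTG : ∀ s ∈ T, ∀ d ∈ D0, G s d = m d s := by
    intro s hs
    by_contra h
    exact hs.1.2 (hBN h)
  have hTI' : T =ᵐ[volume] I := by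
    have h1 : volume (I \ T) = 0 := by
      have : I \ T ⊆ (N ∩ I) ∪ {t} := by
        intro s hs
        by_contra h
        simp only [mem_union, mem_inter_iff, not_or, not_and, mem_singleton_iff] at h
        exact hs.2 ⟨⟨hs.1, fun hN => h.1 hN hs.1⟩, h.2⟩
      refine measure_mono_null this (measure_union_null ?_ (by simp))
      rwa [Measure.restrict_apply hNm] at hN0
    refine Filter.EventuallyLE.antisymm (Filter.Eventually.of_forall hTI) ?_
    rw [ae_le_set]; exact h1
  -- measurability in s for each x in K
  have hxm : ∀ x ∈ K, Measurable (fun s => if s ∈ T then G s x else 0) := by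
    have h0 : ∀ d ∈ D0, Measurable (fun s => if s ∈ T then G s d else 0) := by
      intro d hd
      have : (fun s => if s ∈ T then G s d else 0) = fun s => if s ∈ T then m d s else 0 := by
        ext s
        split_ifs with h
        · exact hTG s h d hd
        · rfl
      rw [this]
      exact Measurable.ite hTm (hm d hd) measurable_const
    intro x hx
    obtain ⟨d, hd, hlim⟩ := mem_closure_iff_seq_limit.1 hx
    refine measurable_of_tendsto_metrizable (fun n => h0 (d n) (hd n)) ?_
    rw [tendsto_pi_nhds]
    intro s
    split_ifs with h
    · exact ((hc s (hTI h) (hTt s h)).tendsto x).comp hlim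
    · exact tendsto_const_nhds
  refine ⟨K, T, hTm, hTI, fun h => hTt t h rfl, ?_, ?_⟩
  · set U : K → ℝ → ℂ := fun x s => if s ∈ T then G s x else 0 with hU
    have hUm : Measurable (Function.uncurry U) := by
      refine measurable_uncurry_of_continuous_of_measurable ?_ ?_
      · intro s
        simp only [hU]
        split_ifs with h
        · exact (hc s (hTI h) (hTt s h)).comp continuous_subtype_val
        · exact continuous_const
      · intro x
        exact hxm x x.2
    have hKm : MeasurableSet (Prod.fst ⁻¹' K : Set (E3 × ℝ)) :=
      measurable_fst isClosed_closure.measurableSet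
    refine measurable_of_restrict_of_restrict_compl hKm ?_ ?_
    · have : Measurable (fun z : (Prod.fst ⁻¹' K : Set (E3 × ℝ)) =>
          ((⟨z.1.1, z.2⟩ : K), z.1.2)) := by
        refine Measurable.prodMk ?_ (by fun_prop)
        exact Measurable.subtype_mk (by fun_prop)
      convert hUm.comp this using 1
      ext z
      have hz : z.1.1 ∈ K := z.2
      simp [hU, Function.uncurry, hz]
    · convert measurable_const (a := (0 : ℂ)) using 1
      ext z
      have hz : z.1.1 ∉ K := z.2
      simp [hz]
  · intro x
    by_cases hx : x ∈ K
    · rw [← setIntegral_congr_set hTI', ← integral_indicator hTm]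
      congr 1; ext s
      simp [indicator, hx]
    · have hxD : ¬ IntegrableOn (fun s => G s x) I := fun h => hx (hDD0 h)
      rw [integral_undef hxD]
      simp [hx]

lemma dual (r : ℝ) (hr : 2 < r) (H : E3 × ℝ → ℂ) (hH : Measurable H) (u : E3 → ℂ)
    (hu : ∀ x, u x = ∫ s, H (x, s)) (A : ℝ≥0∞)
    (hA : ∀ φ, Nice φ → (∀ x, u x = 0 → φ x = 0) →
      ∫⁻ s, ‖∫ x, φ x * H (x, s)‖ₑ ≤ A * (∫⁻ x, ‖φ x‖ₑ ^ (r / (r - 1))) ^ ((r - 1) / r)) :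
    (∫⁻ x, ‖u x‖ₑ ^ r) ^ (1 / r) ≤ A := by
  have hr0 : 0 < r := by linarith
  have hr1 : 0 < r - 1 := by linarith
  have hum : Measurable u := by
    have : u = fun x => ∫ s, H (x, s) := funext hu
    rw [this]
    exact hH.stronglyMeasurable.integral_prod_right'.measurable
  set a : E3 → ℝ≥0∞ := fun x => ∫⁻ s, ‖H (x, s)‖ₑ with ha
  have ham : Measurable a := hH.enorm.lintegral_prod_right'
  have hua : ∀ x, ‖u x‖ₑ ≤ a x := fun x => by
    rw [hu]; exact enorm_integral_le_lintegral_enorm _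
  set X : ℕ → Set E3 := fun n => {x | ‖x‖ ≤ n ∧ a x ≤ n} with hX
  have hXm : ∀ n, MeasurableSet (X n) := fun n =>
    (measurableSet_le measurable_norm measurable_const).inter
      (measurableSet_le ham measurable_const)
  have hXmono : Monotone X := by
    intro n m hnm x hx
    refine ⟨hx.1.trans (by exact_mod_cast hnm), hx.2.trans (by exact_mod_cast hnm)⟩
  have hlim : ∀ x, ‖u x‖ₑ ^ r = ⨆ n, (X n).indicator (fun x => ‖u x‖ₑ ^ r) x := by
    intro x
    refine le_antisymm ?_ (iSup_le fun n => indicator_le_self _ _ _)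
    by_cases h0 : u x = 0
    · simp [h0, hr0]
    · have hint : Integrable (fun s => H (x, s)) := by
        by_contra h
        exact h0 (by rw [hu, integral_undef h])
      have hfin : a x ≠ ∞ := hint.2.ne
      obtain ⟨n, hn⟩ := exists_nat_ge (max ‖x‖ (a x).toReal)
      refine le_iSup_of_le n ?_
      rw [indicator_of_mem]
      refine ⟨(le_max_left _ _).trans hn, ?_⟩
      rw [← ENNReal.ofReal_toReal hfin, ← ENNReal.ofReal_natCast]
      exact ENNReal.ofReal_le_ofReal ((le_max_right _ _).trans hn)
  suffices hs : ∀ n, (∫⁻ x in X n, ‖u x‖ₑ ^ r) ^ (1 / r) ≤ A by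
    have : ∫⁻ x, ‖u x‖ₑ ^ r ≤ A ^ r := by
      rw [lintegral_congr hlim]
      rw [lintegral_iSup (fun n => (hum.enorm.pow_const r).indicator (hXm n))]
      · refine iSup_le fun n => ?_
        rw [lintegral_indicator (hXm n)]
        have := hs n
        rwa [one_div, ENNReal.rpow_inv_le_iff hr0] at this
      · intro n m hnm x
        exact indicator_le_indicator_of_subset (hXmono hnm) (fun _ => zero_le) x
    rwa [one_div, ENNReal.rpow_inv_le_iff hr0]
  intro n
  set φ : E3 → ℂ := (X n).indicator fun x => ((‖u x‖ ^ (r - 2) : ℝ) : ℂ) * (starRingEnd ℂ) (u x)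
    with hφ
  have hub : ∀ x ∈ X n, ‖u x‖ ≤ n := by
    intro x hx
    have := (hua x).trans hx.2
    rw [← ofReal_norm, ← ENNReal.ofReal_natCast] at this
    exact (ENNReal.ofReal_le_ofReal_iff (by positivity)).1 this
  have hφn : ∀ x ∈ X n, ‖φ x‖ = ‖u x‖ ^ (r - 1) := by
    intro x hx
    rw [hφ, indicator_of_mem hx, norm_mul, RCLike.norm_conj, Complex.norm_real,
      Real.norm_of_nonneg (by positivity)]
    rcases (norm_nonneg (u x)).eq_or_lt with h | h
    · rw [← h, Real.zero_rpow (x := r - 1) hr1.ne']; simp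
    · rw [← Real.rpow_add_one h.ne']; congr 1; ring
  have hφ0 : ∀ x, x ∉ X n → φ x = 0 := fun x hx => indicator_of_notMem hx _
  have hφm : Measurable φ := by
    refine Measurable.indicator ?_ (hXm n)
    refine Measurable.mul ?_ (Complex.continuous_conj.measurable.comp hum)
    exact Complex.measurable_ofReal.comp (hum.norm.pow_const _)
  have hN : Nice φ := by
    refine ⟨hφm, ⟨(n : ℝ) ^ (r - 1), fun x => ?_⟩, ⟨n, fun x hx => hφ0 x fun h => ?_⟩⟩
    · by_cases hx : x ∈ X n
      · rw [hφn x hx]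
        have := hub x hx
        gcongr
      · rw [hφ0 x hx]; simp; positivity
    · exact absurd h.1 (not_le.2 hx)
  set B := ∫⁻ x in X n, ‖u x‖ₑ ^ r with hB
  have hP : ∫⁻ x, ‖φ x‖ₑ ^ (r / (r - 1)) = B := by
    rw [hB, ← lintegral_indicator (hXm n)]
    congr 1; ext x
    have hq : 0 < r / (r - 1) := by positivity
    by_cases hx : x ∈ X n
    · rw [indicator_of_mem hx, enorm_rpow _ _ hq.le, enorm_rpow _ _ hr0.le, hφn x hx,
        ← Real.rpow_mul (norm_nonneg _)]
      congr 2; field_simp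
    · rw [indicator_of_notMem hx, hφ0 x hx]; simp [hq]
  have hBf : B < ∞ := by rw [← hP]; exact hN.lint _ (by positivity)
  have hBle : B ≤ A * B ^ ((r - 1) / r) := by
    have h1 := hA φ hN (fun x hx => by
      by_cases h : x ∈ X n
      · rw [hφ, indicator_of_mem h, hx]; simp
      · exact hφ0 x h)
    rw [hP] at h1
    refine le_trans ?_ h1
    have hmeasP : Measurable (fun p : E3 × ℝ => φ p.1 * H p) := (hφm.comp measurable_fst).mul hH
    have hint : Integrable (fun p : E3 × ℝ => φ p.1 * H p) (volume.prod volume) := by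
      refine ⟨hmeasP.aestronglyMeasurable, ?_⟩
      unfold HasFiniteIntegral
      rw [lintegral_prod _ hmeasP.enorm.aemeasurable]
      calc _ ≤ ∫⁻ x, ‖φ x‖ₑ * (n : ℝ≥0∞) := by
            refine lintegral_mono fun x => ?_
            simp only [enorm_mul]
            rw [lintegral_const_mul' _ _ (by simp)]
            by_cases hx : x ∈ X n
            · gcongr; exact hx.2
            · rw [hφ0 x hx]; simp
        _ < ∞ := by
            rw [lintegral_mul_const' _ _ (by simp)]
            exact ENNReal.mul_lt_top hN.int.2 (by simp)
    have e1 : B = ‖∫ x, φ x * u x‖ₑ := by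
      set g : E3 → ℝ := (X n).indicator fun x => ‖u x‖ ^ r with hg
      have hgg : ∀ x, φ x * u x = ((g x : ℝ) : ℂ) := by
        intro x
        by_cases h : x ∈ X n
        · rw [hφ, hg, indicator_of_mem h, indicator_of_mem h, mul_assoc, Complex.conj_mul',
            ← Complex.ofReal_pow, ← Complex.ofReal_mul]
          congr 1
          rcases (norm_nonneg (u x)).eq_or_lt with h | h
          · rw [← h, Real.zero_rpow hr0.ne']; simp
          · rw [← Real.rpow_two, ← Real.rpow_add h]; congr 1; ring
        · rw [hφ, hg, indicator_of_notMem h, indicator_of_notMem h]; simp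
      have hg0 : ∀ x, 0 ≤ g x := fun p => indicator_nonneg (fun _ _ => by positivity) _
      have hge : B = ∫⁻ x, ENNReal.ofReal (g x) := by
        rw [hB, ← lintegral_indicator (hXm n)]
        congr 1; ext x
        by_cases hx : x ∈ X n
        · rw [hg, indicator_of_mem hx, indicator_of_mem hx, enorm_rpow _ _ hr0.le]
        · rw [hg, indicator_of_notMem hx, indicator_of_notMem hx]; simp
      have hgm : Measurable g := (hum.norm.pow_const r).indicator (hXm n)
      have hgi : Integrable g := by
        refine ⟨hgm.aestronglyMeasurable, ?_⟩
        rw [hasFiniteIntegral_iff_ofReal (Filter.Eventually.of_forall hg0), ← hge]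
        exact hBf
      simp_rw [hgg]
      rw [integral_complex_ofReal, ← ofReal_norm, Complex.norm_real,
        Real.norm_of_nonneg (integral_nonneg hg0), ofReal_integral_eq_lintegral_ofReal hgi
          (Filter.Eventually.of_forall hg0), hge]
    have e2 : ∫ x, φ x * u x = ∫ s, ∫ x, φ x * H (x, s) := by
      rw [← integral_integral_swap (f := fun x s => φ x * H (x, s)) hint]
      congr 1; ext x
      rw [integral_const_mul, hu]
    rw [e1, e2]
    exact enorm_integral_le_lintegral_enorm _
  rcases eq_or_ne B 0 with h0 | h0
  · rw [h0, ENNReal.zero_rpow_of_pos (by positivity)]; exact zero_le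
  · have hne : B ^ ((r - 1) / r) ≠ 0 := by
      simp [h0, hBf.ne]
    have hnt : B ^ ((r - 1) / r) ≠ ∞ := ENNReal.rpow_ne_top_of_nonneg (by positivity) hBf.ne
    have : B ^ (1 / r) * B ^ ((r - 1) / r) = B := by
      rw [← ENNReal.rpow_add _ _ h0 hBf.ne]
      have : 1 / r + (r - 1) / r = 1 := by field_simp; ring
      rw [this, ENNReal.rpow_one]
    have h2 : B ^ (1 / r) * B ^ ((r - 1) / r) ≤ A * B ^ ((r - 1) / r) := by
      rw [this]; exact hBle
    exact (ENNReal.mul_le_mul_iff_left hne hnt).1 h2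

lemma kerE_norm (τ : ℝ) (x y : E3) :
    ‖Complex.exp (Complex.I * ((‖x - y‖ ^ 2 : ℝ) : ℂ) / (4 * (τ : ℂ)))‖ = 1 := by
  have : Complex.I * ((‖x - y‖ ^ 2 : ℝ) : ℂ) / (4 * (τ : ℂ)) =
      ((‖x - y‖ ^ 2 / (4 * τ) : ℝ) : ℂ) * Complex.I := by push_cast; ring
  rw [this, Complex.norm_exp_ofReal_mul_I]

lemma kerE_cont (τ : ℝ) : Continuous (fun p : E3 × E3 =>
    Complex.exp (Complex.I * ((‖p.1 - p.2‖ ^ 2 : ℝ) : ℂ) / (4 * (τ : ℂ)))) := by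
  simp only [div_eq_mul_inv]
  fun_prop

lemma kerE_int (τ : ℝ) (x : E3) (f : E3 → ℂ) :
    Integrable (fun y =>
      Complex.exp (Complex.I * ((‖x - y‖ ^ 2 : ℝ) : ℂ) / (4 * (τ : ℂ))) * f y) ↔
      Integrable f := by
  have hm : Continuous (fun y : E3 =>
    Complex.exp (Complex.I * ((‖x - y‖ ^ 2 : ℝ) : ℂ) / (4 * (τ : ℂ)))) :=
    by simp only [div_eq_mul_inv]; fun_prop
  constructor
  · intro h
    have h2 : f = fun y => (Complex.exp (Complex.I * ((‖x - y‖ ^ 2 : ℝ) : ℂ) / (4 * (τ : ℂ))))⁻¹ *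
        (Complex.exp (Complex.I * ((‖x - y‖ ^ 2 : ℝ) : ℂ) / (4 * (τ : ℂ))) * f y) := by
      ext y
      rw [← mul_assoc, inv_mul_cancel₀ (Complex.exp_ne_zero _), one_mul]
    rw [h2]
    refine h.bdd_mul (c := 1) ?_ (Filter.Eventually.of_forall fun y => ?_)
    · exact (hm.inv₀ fun y => Complex.exp_ne_zero _).aestronglyMeasurable
    · rw [norm_inv, kerE_norm]; simp
  · intro h
    refine h.bdd_mul (c := 1) hm.aestronglyMeasurable (Filter.Eventually.of_forall fun y => ?_)
    rw [kerE_norm]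

lemma schrod_zero (τ : ℝ) (hτ : τ ≠ 0) (f : E3 → ℂ) (hf : ¬ Integrable f) :
    schrod 3 τ f = fun _ => 0 := by
  unfold schrod
  rw [if_neg hτ]
  ext x
  rw [integral_undef (by rwa [kerE_int]), mul_zero]

lemma schrod_cont (τ : ℝ) (hτ : τ ≠ 0) (f : E3 → ℂ) : Continuous (schrod 3 τ f) := by
  by_cases hf : Integrable f
  · unfold schrod
    rw [if_neg hτ]
    refine continuous_const.mul ?_
    refine continuous_of_dominated (bound := fun y => ‖f y‖) ?_ ?_ hf.norm ?_
    · intro x; exact ((kerE_int τ x f).2 hf).aestronglyMeasurable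
    · intro x; refine Filter.Eventually.of_forall fun y => ?_
      rw [norm_mul, kerE_norm, one_mul]
    · refine Filter.Eventually.of_forall fun y => ?_
      exact ((kerE_cont τ).comp (by fun_prop : Continuous fun x : E3 => (x, y))).mul
        continuous_const
  · rw [schrod_zero τ hτ f hf]; exact continuous_const

lemma Zt_meas (φ : E3 → ℂ) (hφ : Measurable φ) (τ : ℝ) : Measurable (Zt φ τ) := by
  unfold Zt
  have : Measurable (fun p : E3 × E3 =>
      Complex.exp (Complex.I * ((‖p.2 - p.1‖ ^ 2 : ℝ) : ℂ) / (4 * (τ : ℂ))) * φ p.2) :=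
    ((kerE_cont τ).comp continuous_swap).measurable.mul (hφ.comp measurable_snd)
  exact this.stronglyMeasurable.integral_prod_right'.measurable

lemma sch_bound (τ : ℝ) (hτ : 0 < τ) (f φ : E3 → ℂ) (hf : Integrable f) (hφ : Nice φ) :
    ‖∫ x, φ x * schrod 3 τ f x‖ₑ ≤
      ENNReal.ofReal ((4 * π * τ) ^ (-(3 / 2) : ℝ)) * ∫⁻ y, ‖f y‖ₑ * ‖Zt φ τ y‖ₑ := by
  set c : ℂ := (4 * (π : ℂ) * Complex.I * (τ : ℂ)) ^ (-((3 : ℕ) : ℂ) / 2) with hc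
  have hcn : ‖c‖ₑ = ENNReal.ofReal ((4 * π * τ) ^ (-(3 / 2) : ℝ)) := by
    have hne : (4 * (π : ℂ) * Complex.I * (τ : ℂ)) ≠ 0 := by
      simp [hτ.ne', Real.pi_ne_zero]
    rw [← ofReal_norm, hc, Complex.norm_cpow_of_ne_zero hne]
    have h1 : (-((3 : ℕ) : ℂ) / 2) = ((-(3 / 2) : ℝ) : ℂ) := by push_cast; ring
    rw [h1, Complex.ofReal_re, Complex.ofReal_im]
    have h2 : ‖(4 * (π : ℂ) * Complex.I * (τ : ℂ))‖ = 4 * π * τ := by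
      simp [abs_of_pos hτ, abs_of_pos Real.pi_pos]
    rw [h2]; simp
  have hint : Integrable (fun p : E3 × E3 => φ p.1 *
      (Complex.exp (Complex.I * ((‖p.1 - p.2‖ ^ 2 : ℝ) : ℂ) / (4 * (τ : ℂ))) * f p.2))
      (volume.prod volume) := by
    have h0 : Integrable (fun p : E3 × E3 => φ p.1 * f p.2) (volume.prod volume) :=
      hφ.int.mul_prod hf
    have h1 := h0.bdd_mul (c := 1) (kerE_cont τ).aestronglyMeasurable
      (Filter.Eventually.of_forall fun p => (kerE_norm τ p.1 p.2).le)
    refine h1.congr (Filter.Eventually.of_forall fun p => ?_)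
    simp only; ring
  have e : ∫ x, φ x * schrod 3 τ f x = c * ∫ y, f y * Zt φ τ y := by
    have : ∀ x, φ x * schrod 3 τ f x = c * ∫ y, φ x *
      (Complex.exp (Complex.I * ((‖x - y‖ ^ 2 : ℝ) : ℂ) / (4 * (τ : ℂ))) * f y) := by
      intro x
      unfold schrod
      rw [if_neg hτ.ne', integral_const_mul]
      ring
    simp_rw [this]
    rw [integral_const_mul, integral_integral_swap (f := fun x y => φ x *
      (Complex.exp (Complex.I * ((‖x - y‖ ^ 2 : ℝ) : ℂ) / (4 * (τ : ℂ))) * f y)) hint]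
    congr 2; ext y
    unfold Zt
    rw [← integral_const_mul]
    congr 1; ext x; ring
  rw [e, enorm_mul, hcn]
  gcongr
  refine (enorm_integral_le_lintegral_enorm _).trans (le_of_eq ?_)
  simp_rw [enorm_mul]

lemma sch_holder (τ : ℝ) (hτ : 0 < τ) (f φ : E3 → ℂ) (hφ : Nice φ) (p q : ℝ)
    (hpq : p.HolderConjugate q) :
    ‖∫ x, φ x * schrod 3 τ f x‖ₑ ≤
      ENNReal.ofReal ((4 * π * τ) ^ (-(3 / 2) : ℝ)) * (∫⁻ y, ‖Zt φ τ y‖ₑ ^ q) ^ (1 / q) *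
        (∫⁻ y, ‖f y‖ₑ ^ p) ^ (1 / p) := by
  by_cases hf : Integrable f
  · refine (sch_bound τ hτ f φ hf hφ).trans ?_
    rw [mul_assoc (ENNReal.ofReal _)]
    refine mul_le_mul_right ?_ _
    rw [mul_comm (_ ^ (1 / q))]
    exact ENNReal.lintegral_mul_le_Lp_mul_Lq volume hpq hf.1.enorm
      (Zt_meas φ hφ.meas τ).enorm.aemeasurable
  · rw [schrod_zero τ hτ.ne' f hf]; simp

lemma eLp_w (c : ℝ) (hc : 0 ≤ c) (f : E3 → ℂ) (p : ℝ) (hp : 0 < p) :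
    eLpNorm (fun x => (c : ℂ) * f x) (ENNReal.ofReal p) volume =
      ENNReal.ofReal c * (∫⁻ y, ‖f y‖ₑ ^ p) ^ (1 / p) := by
  rw [eLpNorm_eq_lintegral_rpow_enorm_toReal (by simpa using hp) (by simp),
    ENNReal.toReal_ofReal hp.le]
  have : ∀ x, ‖(c : ℂ) * f x‖ₑ ^ p = ENNReal.ofReal c ^ p * ‖f x‖ₑ ^ p := by
    intro x
    rw [enorm_mul, ENNReal.mul_rpow_of_nonneg _ _ hp.le, ← ofReal_norm (c : ℂ),
      Complex.norm_real, Real.norm_of_nonneg hc]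
  simp_rw [this]
  rw [lintegral_const_mul' _ _ (ENNReal.rpow_ne_top_of_nonneg hp.le (by simp)),
    ENNReal.mul_rpow_of_nonneg _ _ (by positivity), ← ENNReal.rpow_mul, mul_one_div_cancel hp.ne',
    ENNReal.rpow_one]

/-- pointwise bound 1 -/
lemma pt1 (r : ℝ) (hr : 2 < r) (φ f : E3 → ℂ) (hφ : Nice φ) (τ : ℝ) (hτ : 0 < τ) :
    ‖∫ x, φ x * schrod 3 τ f x‖ₑ ≤
      ENNReal.ofReal (CH r) * (∫⁻ y, ‖φ y‖ₑ ^ (r / (r - 1))) ^ ((r - 1) / r) *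
      eLpNorm (fun x => ((|τ| ^ (-(3 * (1 / 2 - 1 / r))) : ℝ) : ℂ) * f x)
        (ENNReal.ofReal (r / (r - 1))) volume := by
  have hr1 : 0 < r - 1 := by linarith
  rw [eLp_w _ (by positivity) _ _ (by positivity), abs_of_pos hτ]
  have hpq : (r / (r - 1)).HolderConjugate r :=
    (Real.HolderConjugate.conjExponent (by linarith : 1 < r)).symm
  refine (sch_holder τ hτ f φ hφ _ _ hpq).trans ?_
  rw [← mul_assoc]
  refine mul_le_mul_left ((HY_est r hr φ hφ τ hτ).trans (le_of_eq ?_)) _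
  ring

/-- pointwise bound 2 -/
lemma pt2 (r : ℝ) (hr : 2 < r) (φ f : E3 → ℂ) (hφ : Nice φ) (τ : ℝ) (hτ : 0 < τ) :
    ‖∫ x, φ x * schrod 3 τ f x‖ₑ ≤
      eLpNorm (fun x => ((|τ| ^ (-(3 * (1 / 2 - 1 / r))) : ℝ) : ℂ) * f x)
        (ENNReal.ofReal (3 * r / (3 * r - 1))) volume * kf r φ τ := by
  have hr1 : 0 < 3 * r - 1 := by linarith
  rw [eLp_w _ (by positivity) _ _ (by positivity), abs_of_pos hτ]
  have hpq : (3 * r / (3 * r - 1)).HolderConjugate (3 * r) :=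
    (Real.HolderConjugate.conjExponent (by linarith : 1 < 3 * r)).symm
  refine (sch_holder τ hτ f φ hφ _ _ hpq).trans (le_of_eq ?_)
  rw [kf_eq r hr φ hφ τ hτ]
  ring

lemma est1 (r : ℝ) (hr : 2 < r) (φ : E3 → ℂ) (hφ : Nice φ) (t : ℝ) (I T : Set ℝ)
    (hTm : MeasurableSet T) (hTI : T ⊆ I) (hTt : ∀ s ∈ T, s < t) (F : ℝ → E3 → ℂ) :
    ∫⁻ s in T, ‖∫ x, φ x * schrod 3 (t - s) (F s) x‖ₑ ≤
      ENNReal.ofReal (CH r) * mixedNorm volume I 1 (ENNReal.ofReal (r / (r - 1)))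
        (fun s x => ((|t - s| ^ (-(3 * (1 / 2 - 1 / r))) : ℝ) : ℂ) * F s x) *
      (∫⁻ y, ‖φ y‖ₑ ^ (r / (r - 1))) ^ ((r - 1) / r) := by
  have hr1 : 0 < r - 1 := by linarith
  set P := ∫⁻ y, ‖φ y‖ₑ ^ (r / (r - 1)) with hP
  have hPf : P < ∞ := hφ.lint _ (by positivity)
  unfold mixedNorm
  rw [if_neg (by simp)]
  simp only [ENNReal.toReal_one, ENNReal.rpow_one, div_one]
  calc _ ≤ ∫⁻ s in T, ENNReal.ofReal (CH r) * P ^ ((r - 1) / r) *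
        eLpNorm (fun x => ((|t - s| ^ (-(3 * (1 / 2 - 1 / r))) : ℝ) : ℂ) * F s x)
        (ENNReal.ofReal (r / (r - 1))) volume :=
        setLIntegral_mono' hTm fun s hs => pt1 r hr φ (F s) hφ (t - s) (sub_pos.2 (hTt s hs))
    _ ≤ ∫⁻ s in I, ENNReal.ofReal (CH r) * P ^ ((r - 1) / r) *
        eLpNorm (fun x => ((|t - s| ^ (-(3 * (1 / 2 - 1 / r))) : ℝ) : ℂ) * F s x)
        (ENNReal.ofReal (r / (r - 1))) volume := lintegral_mono_set hTI
    _ = _ := by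
        rw [lintegral_const_mul' _ _ (ENNReal.mul_ne_top (by simp)
          (ENNReal.rpow_ne_top_of_nonneg (by positivity) hPf.ne))]
        ring

lemma est2 (r : ℝ) (hr : 2 < r) (φ : E3 → ℂ) (hφ : Nice φ) (t : ℝ) (I T : Set ℝ)
    (hTm : MeasurableSet T) (hTI : T ⊆ I) (hTt : ∀ s ∈ T, s < t) (F : ℝ → E3 → ℂ)
    (hb : AEMeasurable (fun s => ‖∫ x, φ x * schrod 3 (t - s) (F s) x‖ₑ) (volume.restrict T)) :
    ∫⁻ s in T, ‖∫ x, φ x * schrod 3 (t - s) (F s) x‖ₑ ≤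
      ENNReal.ofReal (CK r ^ (1 / r)) * mixedNorm volume I (ENNReal.ofReal (r / (r - 1)))
        (ENNReal.ofReal (3 * r / (3 * r - 1)))
        (fun s x => ((|t - s| ^ (-(3 * (1 / 2 - 1 / r))) : ℝ) : ℂ) * F s x) *
      (∫⁻ y, ‖φ y‖ₑ ^ (r / (r - 1))) ^ ((r - 1) / r) := by
  have hr0 : 0 < r := by linarith
  have hr1 : 0 < r - 1 := by linarith
  have hCK := CK_pos r hr
  have hki := kf_int r hr φ hφ
  set P := ∫⁻ y, ‖φ y‖ₑ ^ (r / (r - 1)) with hP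
  have hPf : P < ∞ := hφ.lint _ (by positivity)
  have hp : 0 < r / (r - 1) := by positivity
  unfold mixedNorm
  rw [if_neg (by simp), ENNReal.toReal_ofReal hp.le]
  set b : ℝ → ℝ≥0∞ := fun s => ‖∫ x, φ x * schrod 3 (t - s) (F s) x‖ₑ with hbd
  set g : ℝ → ℝ≥0∞ := fun s =>
    eLpNorm (fun x => ((|t - s| ^ (-(3 * (1 / 2 - 1 / r))) : ℝ) : ℂ) * F s x)
        (ENNReal.ofReal (3 * r / (3 * r - 1))) volume with hg
  set k : ℝ → ℝ≥0∞ := fun s => kf r φ (t - s) with hk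
  have hkm : Measurable k := (kf_meas r φ hφ).comp (by fun_prop)
  have hbgk : ∀ s ∈ T, b s ≤ g s * k s := fun s hs =>
    pt2 r hr φ (F s) hφ (t - s) (sub_pos.2 (hTt s hs))
  have hkI : ∫⁻ s in T, k s ^ r ≤ ENNReal.ofReal (CK r) * P ^ (r - 1) := by
    refine le_trans ?_ hki
    rw [← lintegral_indicator hTm, ← lintegral_indicator measurableSet_Ioi,
      ← lintegral_sub_left_eq_self ((Ioi (0 : ℝ)).indicator _) t]
    refine lintegral_mono fun s => ?_
    by_cases hs : s ∈ T
    · rw [indicator_of_mem hs, indicator_of_mem (show t - s ∈ Ioi (0 : ℝ) from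
        sub_pos.2 (hTt s hs))]
    · rw [indicator_of_notMem hs]; exact zero_le
  have hQf : ENNReal.ofReal (CK r) * P ^ (r - 1) ≠ ∞ := ENNReal.mul_ne_top (by simp)
          (ENNReal.rpow_ne_top_of_nonneg (by positivity) hPf.ne)
  have hkae : ∀ᵐ s ∂(volume.restrict T), k s < ∞ := by
    filter_upwards [ae_lt_top (hkm.pow_const r) (hkI.trans_lt hQf.lt_top).ne] with s hs
    exact (ENNReal.rpow_lt_top_iff_of_pos hr0).1 hs
  have hpq : (r / (r - 1)).HolderConjugate r :=
    (Real.HolderConjugate.conjExponent (by linarith : 1 < r)).symm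
  calc ∫⁻ s in T, b s ≤ ∫⁻ s in T, ((fun s => b s / k s) * k) s := by
        refine lintegral_mono_ae ?_
        filter_upwards [hkae, ae_restrict_mem hTm] with s hs hsT
        simp only [Pi.mul_apply]
        by_cases h0 : k s = 0
        · have := hbgk s hsT
          rw [h0, mul_zero] at this
          exact this.trans zero_le
        · rw [ENNReal.div_mul_cancel h0 hs.ne]
    _ ≤ (∫⁻ s in T, (b s / k s) ^ (r / (r - 1))) ^ (1 / (r / (r - 1))) *
          (∫⁻ s in T, k s ^ r) ^ (1 / r) :=
        ENNReal.lintegral_mul_le_Lp_mul_Lq _ hpq (hb.div hkm.aemeasurable) hkm.aemeasurable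
    _ ≤ (∫⁻ s in I, g s ^ (r / (r - 1))) ^ (1 / (r / (r - 1))) *
          (ENNReal.ofReal (CK r) * P ^ (r - 1)) ^ (1 / r) := by
        refine mul_le_mul' (ENNReal.rpow_le_rpow ?_ (by positivity))
          (ENNReal.rpow_le_rpow hkI (by positivity))
        refine (setLIntegral_mono' hTm fun s hs => ?_).trans (lintegral_mono_set hTI)
        exact ENNReal.rpow_le_rpow (ENNReal.div_le_of_le_mul (hbgk s hs)) hp.le
    _ = _ := by
        rw [ENNReal.mul_rpow_of_nonneg _ _ (by positivity), ← ENNReal.rpow_mul,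
          ENNReal.ofReal_rpow_of_pos hCK, mul_one_div]
        ring

/-- **Weighted linear estimates in three dimensions.**  Fix `2 < r < 6`.  For any `t ∈ ℝ`,
any interval `I ⊆ [0, t]`, and any spacetime `F : I × ℝ³ → ℂ`,
`‖∫_I e^{i(t-s)Δ} F(s) ds‖_{L^r_x(ℝ³)}` is bounded by `C` times the minimum of
`‖|t-s|^{-3(1/2-1/r)} F(s)‖_{L^1_s L^{r/(r-1)}_x(I×ℝ³)}` and
`‖|t-s|^{-3(1/2-1/r)} F(s)‖_{L^{r/(r-1)}_s L^{3r/(3r-1)}_x(I×ℝ³)}`, with `C = C(r)`. -/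
theorem weighted_linear_estimate_3d (r : ℝ) (hr : 2 < r) (hr6 : r < 6) :
    ∃ C : ℝ, 0 < C ∧
      ∀ (t : ℝ) (I : Set ℝ), MeasurableSet I → I.OrdConnected → I ⊆ Set.Icc 0 t →
        ∀ F : ℝ → EuclideanSpace ℝ (Fin 3) → ℂ,
          eLpNorm (fun x => ∫ s in I, schrod 3 (t - s) (F s) x) (ENNReal.ofReal r) volume ≤
            ENNReal.ofReal C *
              min
                (mixedNorm volume I 1 (ENNReal.ofReal (r / (r - 1)))
                  (fun s x => ((|t - s| ^ (-(3 * (1 / 2 - 1 / r))) : ℝ) : ℂ) * F s x))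
                (mixedNorm volume I (ENNReal.ofReal (r / (r - 1)))
                  (ENNReal.ofReal (3 * r / (3 * r - 1)))
                  (fun s x => ((|t - s| ^ (-(3 * (1 / 2 - 1 / r))) : ℝ) : ℂ) * F s x)) := by
  classical
  have hr0 : 0 < r := by linarith
  have hCK := CK_pos r hr
  have hCH := CH_pos r hr
  refine ⟨CH r + CK r ^ (1 / r), by positivity, ?_⟩
  intro t I hI _ hIt F
  obtain ⟨K, T, hTm, hTI, htT, hHm, hu⟩ := reg t I hI (fun s x => schrod 3 (t - s) (F s) x)
    (fun s _ hs => schrod_cont (t - s) (sub_ne_zero.2 (Ne.symm hs)) (F s))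
  have hTt : ∀ s ∈ T, s < t := fun s hs =>
    lt_of_le_of_ne (hIt (hTI hs)).2 fun h => htT (h ▸ hs)
  rw [eLpNorm_eq_lintegral_rpow_enorm_toReal (by simpa using hr0) (by simp),
    ENNReal.toReal_ofReal hr0.le]
  set H : E3 × ℝ → ℂ := fun p => if p.1 ∈ K ∧ p.2 ∈ T then schrod 3 (t - p.2) (F p.2) p.1 else 0
    with hH
  set u : E3 → ℂ := fun x => ∫ s in I, schrod 3 (t - s) (F s) x with hud
  have huK : ∀ x, x ∉ K → u x = 0 := by
    intro x hx
    simp only [hud]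
    rw [hu x]
    simp [hx]
  have hkey : ∀ φ : E3 → ℂ, (∀ x, u x = 0 → φ x = 0) → ∀ s, ∫ x, φ x * H (x, s) =
      T.indicator (fun s => ∫ x, φ x * schrod 3 (t - s) (F s) x) s := by
    intro φ hφ s
    by_cases hs : s ∈ T
    · rw [indicator_of_mem hs]
      congr 1; ext x
      by_cases hx : x ∈ K
      · simp [hH, hx, hs]
      · rw [hφ x (huK x hx)]; simp
    · rw [indicator_of_notMem hs]
      simp [hH, hs]
  have hkey2 : ∀ φ : E3 → ℂ, (∀ x, u x = 0 → φ x = 0) → ∫⁻ s, ‖∫ x, φ x * H (x, s)‖ₑ =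
      ∫⁻ s in T, ‖∫ x, φ x * schrod 3 (t - s) (F s) x‖ₑ := by
    intro φ hφ
    rw [← lintegral_indicator hTm]
    refine lintegral_congr fun s => ?_
    rw [hkey φ hφ s]
    by_cases hs : s ∈ T
    · rw [indicator_of_mem hs, indicator_of_mem hs]
    · rw [indicator_of_notMem hs, indicator_of_notMem hs]; simp
  have h1 := dual r hr H hHm u hu (ENNReal.ofReal (CH r) *
    mixedNorm volume I 1 (ENNReal.ofReal (r / (r - 1)))
        (fun s x => ((|t - s| ^ (-(3 * (1 / 2 - 1 / r))) : ℝ) : ℂ) * F s x))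
    (fun φ hφ h0 => by
      rw [hkey2 φ h0]
      exact est1 r hr φ hφ t I T hTm hTI hTt F)
  have h2 := dual r hr H hHm u hu (ENNReal.ofReal (CK r ^ (1 / r)) *
    mixedNorm volume I (ENNReal.ofReal (r / (r - 1)))
        (ENNReal.ofReal (3 * r / (3 * r - 1)))
        (fun s x => ((|t - s| ^ (-(3 * (1 / 2 - 1 / r))) : ℝ) : ℂ) * F s x))
    (fun φ hφ h0 => by
      rw [hkey2 φ h0]
      refine est2 r hr φ hφ t I T hTm hTI hTt F ?_
      have hm : Measurable (fun s => ‖∫ x, φ x * H (x, s)‖ₑ) := by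
        have : Measurable (fun p : E3 × ℝ => φ p.1 * H p) :=
          (hφ.meas.comp measurable_fst).mul hHm
        exact this.stronglyMeasurable.integral_prod_left'.measurable.enorm
      refine hm.aemeasurable.congr ?_
      filter_upwards [ae_restrict_mem hTm] with s hs
      rw [hkey φ h0 s, indicator_of_mem hs])
  rcases min_choice
    (mixedNorm volume I 1 (ENNReal.ofReal (r / (r - 1)))
        (fun s x => ((|t - s| ^ (-(3 * (1 / 2 - 1 / r))) : ℝ) : ℂ) * F s x))
    (mixedNorm volume I (ENNReal.ofReal (r / (r - 1)))
        (ENNReal.ofReal (3 * r / (3 * r - 1)))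
        (fun s x => ((|t - s| ^ (-(3 * (1 / 2 - 1 / r))) : ℝ) : ℂ) * F s x)) with h | h
  · rw [h]
    refine h1.trans (mul_le_mul_left (ENNReal.ofReal_le_ofReal ?_) _)
    have : 0 ≤ CK r ^ (1 / r) := by positivity
    linarith
  · rw [h]
    refine h2.trans (mul_le_mul_left (ENNReal.ofReal_le_ofReal ?_) _)
    linarith
end
end

section
/- Two-dimensional early-time Duhamel estimate: fix 2 < r < ∞ and set q = 2r/(r−2). For any t > 0, any measurable interval I ⊆ [0, t/2], and any measurable u : I × ℝ² → ℂ, one has ‖ ∫_I e^{i(t−s)Δ} (|u|²u)(s) ds ‖_{L^r_x(ℝ²)} ≤ C t^{−2(1/2−1/r)} ( sup_{s ∈ I} s^{2(1/2−1/r)} ‖u(s)‖_{L^r_x(ℝ²)} ) ‖u‖²_{L^{r,2}_s L^q_x(I×ℝ²)}, with C depending only on r. -/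
open MeasureTheory Set
open scoped ENNReal Real

noncomputable section

open scoped FourierTransform SchwartzMap ContDiff in
lemma plancherel_aux {E : Type*} [NormedAddCommGroup E] [InnerProductSpace ℝ E]
    [FiniteDimensional ℝ E] [MeasurableSpace E] [BorelSpace E]
    (f : E → ℂ) (h1 : Integrable f) (h2 : MemLp f 2) :
    eLpNorm (𝓕 f) 2 volume = eLpNorm f 2 volume := by
  set F : Lp ℂ 2 (volume : Measure E) := h2.toLp f with hF
  have hcont : Continuous (𝓕 f) :=
    VectorFourier.fourierIntegral_continuous Real.continuous_fourierChar
      (by exact continuous_inner) h1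
  have key : ∀ᵐ x, (𝓕 F : Lp ℂ 2 (volume : Measure E)) x = 𝓕 f x := by
    apply ae_eq_of_integral_contDiff_smul_eq
    · exact (Lp.memLp _).locallyIntegrable (by norm_num)
    · exact hcont.locallyIntegrable
    · intro g hg hgs
      have hgs' : HasCompactSupport (fun x => (g x : ℂ)) := hgs.comp_left (g := fun x : ℝ => (x : ℂ)) (by simp)
      have hg' : ContDiff ℝ ∞ (fun x => (g x : ℂ)) := Complex.ofRealCLM.contDiff.comp hg
      set φ : 𝓢(E, ℂ) := hgs'.toSchwartzMap hg' with hφ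
      have e1 := congrArg (fun T => T φ) (Lp.fourier_toTemperedDistribution_eq F)
      simp only [TemperedDistribution.fourier_apply, Lp.toTemperedDistribution_apply] at e1
      have e2 : ∫ x, (𝓕 φ) x • F x = ∫ x, (𝓕 φ) x • f x := by
        apply integral_congr_ae
        filter_upwards [h2.coeFn_toLp] with x hx
        rw [hF, hx]
      have e3 : ∫ x, (𝓕 φ) x • f x = ∫ x, φ x • 𝓕 f x := by
        have := VectorFourier.integral_fourierIntegral_smul_eq_flip (μ := (volume : Measure E)) (ν := (volume : Measure E))
          (L := innerₗ E) (f := φ) (g := f) Real.continuous_fourierChar (by exact continuous_inner)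
          φ.integrable h1
        rw [flip_innerₗ] at this
        exact this
      calc _ = ∫ x, φ x • (𝓕 F : Lp ℂ 2 (volume : Measure E)) x := by
            simp [hφ]
        _ = ∫ x, φ x • 𝓕 f x := by rw [← e1, e2, e3]
        _ = _ := by simp [hφ]
  rw [← eLpNorm_congr_ae key, ← eLpNorm_congr_ae h2.coeFn_toLp]
  have := Lp.norm_fourier_eq F
  rw [Lp.norm_def, Lp.norm_def] at this
  exact (ENNReal.toReal_eq_toReal_iff' (Lp.eLpNorm_ne_top _) (Lp.eLpNorm_ne_top _)).1 this

lemma lint_rpow (c L : ℝ) (hc : 0 < c) (hL : 0 ≤ L) :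
    ∫⁻ l in Ioc (0:ℝ) L, ENNReal.ofReal (l ^ (c - 1)) = ENNReal.ofReal (L ^ c / c) := by
  have hi : IntervalIntegrable (fun x : ℝ => x ^ (c-1)) volume 0 L :=
    intervalIntegral.intervalIntegrable_rpow' (by linarith)
  rw [← ofReal_integral_eq_lintegral_ofReal]
  · rw [← intervalIntegral.integral_of_le hL, integral_rpow (Or.inl (by linarith))]
    simp [Real.zero_rpow hc.ne']
  · exact (intervalIntegrable_iff_integrableOn_Ioc_of_le hL).1 hi
  · filter_upwards [self_mem_ae_restrict measurableSet_Ioc] with x hx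
    exact Real.rpow_nonneg hx.1.le _

open scoped FourierTransform in
lemma enorm_fourier_le {E : Type*} [NormedAddCommGroup E] [InnerProductSpace ℝ E]
    [FiniteDimensional ℝ E] [MeasurableSpace E] [BorelSpace E]
    (f : E → ℂ) (x : E) : ‖𝓕 f x‖ₑ ≤ ∫⁻ y, ‖f y‖ₑ := by
  rw [Real.fourier_eq]
  refine (enorm_integral_le_lintegral_enorm _).trans (le_of_eq ?_)
  congr 1; ext y
  rw [← ofReal_norm, ← ofReal_norm, Circle.norm_smul]

open scoped FourierTransform in
lemma hy_level {E : Type*} [NormedAddCommGroup E] [InnerProductSpace ℝ E]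
    [FiniteDimensional ℝ E] [MeasurableSpace E] [BorelSpace E]
    (r : ℝ) (hr : 2 < r) (f : E → ℂ) (hf : Measurable f) (h1 : Integrable f)
    (hN : ∫⁻ y, ENNReal.ofReal (‖f y‖ ^ (r / (r - 1))) ≤ 1) (l : ℝ) (hl : 0 < l) :
    volume {x | l < ‖𝓕 f x‖} ≤
      ENNReal.ofReal (4 * l ^ (-2 : ℝ)) *
        ∫⁻ y, {y | ‖f y‖ ≤ (2 / l) ^ (r - 1)}.indicator (fun y => ENNReal.ofReal (‖f y‖ ^ 2)) y := by
  set h : ℝ := (2 / l) ^ (r - 1) with hh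
  have hhpos : 0 < h := by positivity
  set S : Set E := {y | ‖f y‖ ≤ h} with hS
  have hSm : MeasurableSet S := measurableSet_le hf.norm measurable_const
  set f1 : E → ℂ := Sᶜ.indicator f
  set f2 : E → ℂ := S.indicator f
  have hf12 : f = f1 + f2 := by
    ext y; exact (congrFun (Set.indicator_compl_add_self S f) y).symm
  have i1 : Integrable f1 := h1.indicator hSm.compl
  have i2 : Integrable f2 := h1.indicator hSm
  have b2 : ∀ y, ‖f2 y‖ ≤ h := by
    intro y
    by_cases hy : y ∈ S
    · simp only [f2, indicator_of_mem hy]; exact hy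
    · simp only [f2, indicator_of_notMem hy]; simpa using hhpos.le
  have m2 : MemLp f2 2 := by
    rw [memLp_two_iff_integrable_sq_norm i2.1]
    refine (i2.norm.const_mul h).mono' (i2.1.norm.pow 2) (ae_of_all _ fun y => ?_)
    have := b2 y
    have := norm_nonneg (f2 y)
    rw [Real.norm_of_nonneg (by positivity)]
    nlinarith
  have n1 : ∫⁻ y, ‖f1 y‖ₑ ≤ ENNReal.ofReal (l / 2) := by
    calc ∫⁻ y, ‖f1 y‖ₑ ≤ ∫⁻ y, ENNReal.ofReal (l / 2) * ENNReal.ofReal (‖f y‖ ^ (r / (r - 1))) := by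
          apply lintegral_mono
          intro y
          by_cases hy : y ∈ Sᶜ
          · simp only [f1, indicator_of_mem hy]
            have hy' : h < ‖f y‖ := by simpa [hS] using hy
            rw [← ENNReal.ofReal_mul (by positivity), ← ofReal_norm]
            apply ENNReal.ofReal_le_ofReal
            have hp : 0 < ‖f y‖ := hhpos.trans hy'
            have e : r / (r - 1) = 1 + (r-1)⁻¹ := by
              have : r - 1 ≠ 0 := by linarith
              field_simp; ring
            rw [e, Real.rpow_add hp, Real.rpow_one]
            have : 2 / l ≤ ‖f y‖ ^ (r-1)⁻¹ := by
              have h3 := Real.rpow_le_rpow hhpos.le hy'.le (z := (r-1)⁻¹) (by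
                rw [inv_nonneg]; linarith)
              rwa [hh, Real.rpow_rpow_inv (by positivity) (by linarith)] at h3
            have h4 : 1 ≤ l / 2 * ‖f y‖ ^ (r-1)⁻¹ := by
              calc 1 = l / 2 * (2 / l) := by field_simp
                _ ≤ _ := by gcongr
            nlinarith
          · simp only [f1, indicator_of_notMem hy]; simp
      _ = ENNReal.ofReal (l / 2) * ∫⁻ y, ENNReal.ofReal (‖f y‖ ^ (r / (r - 1))) := by
          rw [lintegral_const_mul]
          fun_prop
      _ ≤ ENNReal.ofReal (l / 2) * 1 := by gcongr
      _ = _ := mul_one _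
  have sub : {x | l < ‖𝓕 f x‖} ⊆ {x | ENNReal.ofReal (l / 2) ≤ ‖𝓕 f2 x‖ₑ} := by
    intro x hx
    have hadd : 𝓕 f x = 𝓕 f1 x + 𝓕 f2 x := by
      have := VectorFourier.fourierIntegral_add (μ := (volume : Measure E)) (L := innerₗ E)
        Real.continuous_fourierChar (by exact continuous_inner) i1 i2
      rw [hf12]
      exact congrFun this x
    have hb : ‖𝓕 f1 x‖ ≤ l / 2 := by
      have := (enorm_fourier_le f1 x).trans n1
      rw [← ofReal_norm] at this
      exact (ENNReal.ofReal_le_ofReal_iff (by positivity)).1 this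
    simp only [mem_ofPred_eq] at hx ⊢
    rw [← ofReal_norm]
    apply ENNReal.ofReal_le_ofReal
    have := norm_add_le (𝓕 f1 x) (𝓕 f2 x)
    rw [← hadd] at this
    linarith
  refine (measure_mono sub).trans ?_
  have hcont : Continuous (𝓕 f2) :=
    VectorFourier.fourierIntegral_continuous Real.continuous_fourierChar
      (by exact continuous_inner) i2
  have ch := meas_ge_le_mul_pow_eLpNorm_enorm (volume : Measure E) (p := 2) (by norm_num) (by norm_num)
    hcont.aestronglyMeasurable (ε := ENNReal.ofReal (l / 2)) (by simpa using hl) (by simp)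
  refine ch.trans ?_
  rw [plancherel_aux f2 i2 m2]
  have e1 : eLpNorm f2 2 volume ^ (2 : ℝ≥0∞).toReal = 
      ∫⁻ y, S.indicator (fun y => ENNReal.ofReal (‖f y‖ ^ 2)) y := by
    rw [eLpNorm_eq_lintegral_rpow_enorm_toReal (by norm_num) (by norm_num), ← ENNReal.rpow_mul]
    simp only [ENNReal.toReal_ofNat]
    norm_num
    congr 1; ext y
    by_cases hy : y ∈ S
    · simp only [f2, indicator_of_mem hy]
    · simp only [f2, indicator_of_notMem hy]; simp
  rw [e1]
  gcongr
  rw [← ENNReal.ofReal_inv_of_pos (by positivity), ENNReal.ofReal_rpow_of_nonneg (by positivity) (by positivity)]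
  apply ENNReal.ofReal_le_ofReal
  rw [Real.rpow_neg hl.le]
  simp
  rw [div_pow]
  apply le_of_eq; ring

open scoped FourierTransform in
lemma hy_core {E : Type*} [NormedAddCommGroup E] [InnerProductSpace ℝ E]
    [FiniteDimensional ℝ E] [MeasurableSpace E] [BorelSpace E]
    (r : ℝ) (hr : 2 < r) (f : E → ℂ) (hf : Measurable f) (h1 : Integrable f)
    (hN : ∫⁻ y, ENNReal.ofReal (‖f y‖ ^ (r / (r - 1))) ≤ 1) :
    ∫⁻ x, ENNReal.ofReal (‖𝓕 f x‖ ^ r) ≤ ENNReal.ofReal (r * (4 * 2 ^ (r - 2) / (r - 2))) := by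
  have hcont : Continuous (𝓕 f) :=
    VectorFourier.fourierIntegral_continuous Real.continuous_fourierChar
      (by exact continuous_inner) h1
  rw [lintegral_rpow_eq_lintegral_meas_lt_mul volume (ae_of_all _ fun x => norm_nonneg _)
    hcont.norm.aemeasurable (by linarith), ENNReal.ofReal_mul (by linarith)]
  gcongr
  set G : ℝ → E → ℝ≥0∞ := fun l y =>
    {q : ℝ × E | ‖f q.2‖ ≤ (2 / q.1) ^ (r - 1)}.indicator
      (fun q => ENNReal.ofReal (4 * q.1 ^ (r - 3) * ‖f q.2‖ ^ 2)) (l, y) with hG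
  have hGm : Measurable (Function.uncurry G) := by
    have : Function.uncurry G = {q : ℝ × E | ‖f q.2‖ ≤ (2 / q.1) ^ (r - 1)}.indicator
      (fun q => ENNReal.ofReal (4 * q.1 ^ (r - 3) * ‖f q.2‖ ^ 2)) := by
      ext q; rfl
    rw [this]
    apply Measurable.indicator
    · fun_prop
    · apply measurableSet_le <;> fun_prop
  calc ∫⁻ l in Ioi (0:ℝ), volume {x | l < ‖𝓕 f x‖} * ENNReal.ofReal (l ^ (r - 1))
      ≤ ∫⁻ l in Ioi (0:ℝ), ∫⁻ y, G l y := by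
        apply setLIntegral_mono' measurableSet_Ioi
        intro l hl
        have hl : 0 < l := hl
        refine (mul_le_mul_left (hy_level r hr f hf h1 hN l hl) _).trans (le_of_eq ?_)
        rw [mul_right_comm, ← ENNReal.ofReal_mul (by positivity), ← lintegral_const_mul]
        · congr 1; ext y
          simp only [hG]
          by_cases hy : ‖f y‖ ≤ (2 / l) ^ (r - 1)
          · rw [indicator_of_mem (by exact hy), indicator_of_mem (by exact hy),
              ← ENNReal.ofReal_mul (by positivity), mul_assoc 4, ← Real.rpow_add hl]
            congr 4; ring
          · rw [indicator_of_notMem (by exact hy), indicator_of_notMem (by exact hy), mul_zero]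
        · apply Measurable.indicator
          · fun_prop
          · exact measurableSet_le (by fun_prop) (by fun_prop)
    _ = ∫⁻ y, ∫⁻ l in Ioi (0:ℝ), G l y := lintegral_lintegral_swap hGm.aemeasurable
    _ ≤ ∫⁻ y, ENNReal.ofReal (4 * 2 ^ (r - 2) / (r - 2)) * ENNReal.ofReal (‖f y‖ ^ (r / (r - 1))) := by
        apply lintegral_mono
        intro y
        by_cases hy0 : ‖f y‖ = 0
        · have : ∀ l, G l y = 0 := by
            intro l
            simp only [hG, indicator, hy0]
            simp
          simp [this]
        have hy : 0 < ‖f y‖ := lt_of_le_of_ne (norm_nonneg _) (Ne.symm hy0)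
        have hr1 : r - 1 ≠ 0 := by linarith
        set L : ℝ := 2 * ‖f y‖ ^ (-(r-1)⁻¹) with hL
        have hLp : 0 < L := by positivity
        calc ∫⁻ l in Ioi (0:ℝ), G l y ≤ ∫⁻ l in Ioi (0:ℝ), (Ioc 0 L).indicator
              (fun l => ENNReal.ofReal (4 * ‖f y‖ ^ 2) * ENNReal.ofReal (l ^ ((r - 2) - 1))) l := by
              apply setLIntegral_mono' measurableSet_Ioi
              intro l hl
              have hl : 0 < l := hl
              simp only [hG]
              by_cases hyl : ‖f y‖ ≤ (2 / l) ^ (r - 1)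
              · have hlL : l ≤ L := by
                  have h3 := Real.rpow_le_rpow hy.le hyl (z := (r-1)⁻¹) (by
                    rw [inv_nonneg]; linarith)
                  rw [Real.rpow_rpow_inv (by positivity) hr1, le_div_iff₀ hl] at h3
                  rw [hL, Real.rpow_neg hy.le, ← div_eq_mul_inv, le_div_iff₀ (by positivity)]
                  linarith
                rw [indicator_of_mem (by exact hyl), indicator_of_mem (by exact ⟨hl, hlL⟩),
                  ← ENNReal.ofReal_mul (by positivity)]
                apply le_of_eq; congr 1
                rw [show r - 2 - 1 = r - 3 by ring]; ring
              · rw [indicator_of_notMem (by exact hyl)]; exact zero_le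
          _ = ENNReal.ofReal (4 * ‖f y‖ ^ 2) * ENNReal.ofReal (L ^ (r - 2) / (r - 2)) := by
              rw [lintegral_indicator measurableSet_Ioc, Measure.restrict_restrict measurableSet_Ioc,
                inter_eq_left.2 Ioc_subset_Ioi_self, lintegral_const_mul _ (by fun_prop),
                lint_rpow _ _ (by linarith) hLp.le]
          _ ≤ _ := by
              beta_reduce
              rw [← ENNReal.ofReal_mul (by positivity), ← ENNReal.ofReal_mul (by 
                have : 0 < r - 2 := by linarith
                positivity)]
              apply ENNReal.ofReal_le_ofReal
              apply le_of_eq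
              rw [hL, Real.mul_rpow (by positivity) (by positivity), ← Real.rpow_mul hy.le]
              have e : ‖f y‖ ^ (r / (r-1)) = ‖f y‖ ^ 2 * ‖f y‖ ^ (-(r-1)⁻¹ * (r - 2)) := by
                rw [← Real.rpow_natCast, ← Real.rpow_add hy]
                congr 1
                field_simp; push_cast; ring
              rw [e]; ring
    _ = ENNReal.ofReal (4 * 2 ^ (r - 2) / (r - 2)) * ∫⁻ y, ENNReal.ofReal (‖f y‖ ^ (r / (r - 1))) := by
        rw [lintegral_const_mul]; fun_prop
    _ ≤ _ := (mul_le_mul_right hN _).trans (mul_one _).le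

open scoped FourierTransform in
lemma hy {E : Type*} [NormedAddCommGroup E] [InnerProductSpace ℝ E]
    [FiniteDimensional ℝ E] [MeasurableSpace E] [BorelSpace E]
    (r : ℝ) (hr : 2 < r) : ∃ C : ℝ, 0 < C ∧ ∀ f : E → ℂ, Measurable f → Integrable f → 
    eLpNorm (𝓕 f) (ENNReal.ofReal r) volume ≤ 
      ENNReal.ofReal C * eLpNorm f (ENNReal.ofReal (r / (r - 1))) volume := by
  have hr1 : 0 < r - 1 := by linarith
  have hr2 : 0 < r - 2 := by linarith
  have hr0 : 0 < r := by linarith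
  set K : ℝ := r * (4 * 2 ^ (r - 2) / (r - 2)) with hK
  have hKp : 0 < K := by positivity
  refine ⟨K ^ (1 / r), by positivity, fun f hf h1 => ?_⟩
  have hp : 0 < r / (r - 1) := by positivity
  have hpe : ENNReal.ofReal (r / (r - 1)) ≠ 0 := by simpa using hp
  have key : ∀ g : E → ℂ, ∀ p : ℝ, 0 < p → eLpNorm g (ENNReal.ofReal p) volume = 
      (∫⁻ y, ENNReal.ofReal (‖g y‖ ^ p)) ^ (1 / p) := by
    intro g p hp
    rw [eLpNorm_eq_lintegral_rpow_enorm_toReal (by simpa using hp) (by simp), ENNReal.toReal_ofReal hp.le]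
    simp_rw [← ofReal_norm, ENNReal.ofReal_rpow_of_nonneg (norm_nonneg _) hp.le]
  set N := eLpNorm f (ENNReal.ofReal (r / (r - 1))) volume with hNd
  by_cases hN0 : N = 0
  · have : f =ᵐ[volume] 0 := (eLpNorm_eq_zero_iff hf.aestronglyMeasurable hpe).1 hN0
    have h2 : 𝓕 f = 0 := by
      ext x
      rw [Real.fourier_congr_ae this, Real.fourier_eq]
      simp
    rw [h2]; simp
  by_cases hNt : N = ⊤
  · rw [hNt, ENNReal.mul_top (by simp; positivity)]; exact le_top
  set n := N.toReal with hn
  have hnp : 0 < n := ENNReal.toReal_pos hN0 hNt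
  have hNn : N = ENNReal.ofReal n := (ENNReal.ofReal_toReal hNt).symm
  set g : E → ℂ := ((n⁻¹ : ℝ) : ℂ) • f with hg
  have hfg : f = (n : ℂ) • g := by
    rw [hg, smul_smul]; simp [hnp.ne']
  have hgN : eLpNorm g (ENNReal.ofReal (r / (r - 1))) volume = 1 := by
    rw [hg, eLpNorm_const_smul, ← hNd, hNn, ← ofReal_norm, ← ENNReal.ofReal_mul (by positivity)]
    rw [Complex.norm_real, Real.norm_of_nonneg (by positivity), inv_mul_cancel₀ hnp.ne']; simp
  have hgr := hy_core r hr g (hf.const_smul _) (h1.smul _) (by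
    rw [key g _ hp] at hgN
    rw [one_div] at hgN
    rw [← ENNReal.rpow_inv_rpow hp.ne' (∫⁻ y, _), hgN, ENNReal.one_rpow])
  have hFf : 𝓕 f = (n : ℂ) • 𝓕 g := by
    rw [hfg]
    exact VectorFourier.fourierIntegral_const_smul _ _ _ _ _
  rw [hFf, eLpNorm_const_smul, key _ r hr0, hNn, mul_comm (ENNReal.ofReal _), ← ofReal_norm, Complex.norm_real,
    Real.norm_of_nonneg hnp.le]
  gcongr
  rw [← ENNReal.ofReal_rpow_of_nonneg hKp.le (by positivity)]
  gcongr

lemma eLpNorm_dilate (g : EuclideanSpace ℝ (Fin 2) → ℂ) (r : ℝ) (hr : 0 < r) (a : ℝ) (ha : 0 < a) :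
    eLpNorm (fun x => g (a • x)) (ENNReal.ofReal r) volume =
      ENNReal.ofReal (a ^ (-(2 / r))) * eLpNorm g (ENNReal.ofReal r) volume := by
  rw [eLpNorm_eq_lintegral_rpow_enorm_toReal (by simpa using hr) (by simp),
    eLpNorm_eq_lintegral_rpow_enorm_toReal (by simpa using hr) (by simp), ENNReal.toReal_ofReal hr.le]
  have hemb : MeasurableEmbedding (fun x : EuclideanSpace ℝ (Fin 2) => a • x) :=
    (Homeomorph.smulOfNeZero a ha.ne').measurableEmbedding
  have h : ∫⁻ x, ‖g (a • x)‖ₑ ^ r = ENNReal.ofReal (a ^ (-2 : ℝ)) * ∫⁻ x, ‖g x‖ₑ ^ r := by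
    rw [← hemb.lintegral_map (fun x => ‖g x‖ₑ ^ r), Measure.map_addHaar_smul _ ha.ne',
      lintegral_smul_measure, smul_eq_mul, finrank_euclideanSpace_fin, abs_of_pos (by positivity),
      Real.rpow_neg ha.le]
    simp
  rw [h, ENNReal.mul_rpow_of_nonneg _ _ (by positivity),
    ENNReal.ofReal_rpow_of_nonneg (by positivity) (by positivity), ← Real.rpow_mul ha.le]
  congr 3; ring

open scoped FourierTransform in
lemma schrod_eq (t : ℝ) (ht : 0 < t) (f : EuclideanSpace ℝ (Fin 2) → ℂ) (x : EuclideanSpace ℝ (Fin 2)) :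
    ‖schrod 2 t f x‖ = (4 * π * t)⁻¹ *
      ‖𝓕 (fun y => Complex.exp (Complex.I * ((‖y‖ ^ 2 : ℝ) : ℂ) / (4 * (t : ℂ))) * f y) ((4 * π * t)⁻¹ • x)‖ := by
  have htc : (t : ℂ) ≠ 0 := by exact_mod_cast ht.ne'
  rw [schrod, if_neg ht.ne', norm_mul]
  congr 1
  · have : -((2 : ℕ) : ℂ) / 2 = -1 := by norm_num
    rw [this, Complex.cpow_neg_one, norm_inv]
    simp [abs_of_pos ht, abs_of_pos Real.pi_pos]
  · rw [Real.fourier_eq']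
    have : ∀ y, Complex.exp (Complex.I * ((‖x - y‖ ^ 2 : ℝ) : ℂ) / (4 * (t : ℂ))) * f y =
      Complex.exp ((((‖x‖ ^ 2 / (4 * t)) : ℝ) : ℂ) * Complex.I) *
        (Complex.exp ((↑(-2 * π * inner ℝ y ((4 * π * t)⁻¹ • x)) * Complex.I)) • 
        (Complex.exp (Complex.I * ((‖y‖ ^ 2 : ℝ) : ℂ) / (4 * (t : ℂ))) * f y)) := by
      intro y
      rw [smul_eq_mul, ← mul_assoc, ← mul_assoc, ← Complex.exp_add, ← Complex.exp_add]
      congr 2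
      rw [norm_sub_sq_real, inner_smul_right, real_inner_comm]
      push_cast
      have : (π : ℂ) ≠ 0 := by exact_mod_cast Real.pi_ne_zero
      field_simp
      ring
    simp_rw [this]
    rw [integral_const_mul, norm_mul, Complex.norm_exp_ofReal_mul_I, one_mul]

lemma dispersive (r : ℝ) (hr : 2 < r) : ∃ C : ℝ, 0 < C ∧ ∀ t : ℝ, 0 < t →
    ∀ f : EuclideanSpace ℝ (Fin 2) → ℂ, Measurable f → 
    eLpNorm (schrod 2 t f) (ENNReal.ofReal r) volume ≤ 
      ENNReal.ofReal (C * t ^ (-(2 * (1 / 2 - 1 / r)))) * eLpNorm f (ENNReal.ofReal (r / (r - 1))) volume := by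
  obtain ⟨C, hC, h⟩ := hy (E := EuclideanSpace ℝ (Fin 2)) r hr
  refine ⟨C * (4 * π) ^ (-(2 * (1 / 2 - 1 / r))), by positivity, fun t ht f hf => ?_⟩
  set e : EuclideanSpace ℝ (Fin 2) → ℂ := fun y => Complex.exp (Complex.I * ((‖y‖ ^ 2 : ℝ) : ℂ) / (4 * (t : ℂ)))
  have he : ∀ y, ‖e y‖ = 1 := by
    intro y
    have : e y = Complex.exp (((‖y‖ ^ 2 / (4 * t) : ℝ) : ℂ) * Complex.I) := by
      simp only [e]; congr 1; push_cast; ring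
    rw [this, Complex.norm_exp_ofReal_mul_I]
  have hem : Measurable e := by fun_prop
  by_cases hi : Integrable f
  · have hei : Integrable (fun y => e y * f y) := 
      hi.bdd_mul (c := 1) hem.aestronglyMeasurable (ae_of_all _ fun y => (he y).le)
    have h1 := h (fun y => e y * f y) (hem.mul hf) hei
    have h2 : eLpNorm (fun y => e y * f y) (ENNReal.ofReal (r / (r - 1))) volume = 
        eLpNorm f (ENNReal.ofReal (r / (r - 1))) volume := 
      eLpNorm_congr_norm_ae (ae_of_all _ fun y => by rw [norm_mul, he, one_mul])
    rw [h2] at h1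
    set a : ℝ := (4 * π * t)⁻¹ with ha
    have hap : 0 < a := by positivity
    calc eLpNorm (schrod 2 t f) (ENNReal.ofReal r) volume 
        = eLpNorm ((a : ℂ) • fun x => FourierTransform.fourier (fun y => e y * f y) (a • x)) (ENNReal.ofReal r) volume := by
          apply eLpNorm_congr_norm_ae (ae_of_all _ fun x => ?_)
          rw [schrod_eq t ht f x, Pi.smul_apply, norm_smul, Complex.norm_real, Real.norm_of_nonneg hap.le]
      _ ≤ ENNReal.ofReal a * (ENNReal.ofReal (a ^ (-(2 / r))) * 
            (ENNReal.ofReal C * eLpNorm f (ENNReal.ofReal (r / (r - 1))) volume)) := by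
          rw [eLpNorm_const_smul, eLpNorm_dilate _ r (by linarith) a hap, ← ofReal_norm, Complex.norm_real, Real.norm_of_nonneg hap.le]
          gcongr
      _ = _ := by
          rw [← mul_assoc, ← mul_assoc, ← ENNReal.ofReal_mul (by positivity), ← ENNReal.ofReal_mul (by positivity)]
          congr 2
          rw [mul_assoc C, ← Real.mul_rpow (by positivity) (by positivity)]
          have : a * a ^ (-(2 / r)) = (4 * π * t) ^ (-(2 * (1 / 2 - 1 / r))) := by
            rw [ha, Real.inv_rpow (by positivity), ← Real.rpow_neg (by positivity), ← Real.rpow_neg_one (4 * π * t), ← Real.rpow_add (by positivity)]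
            congr 1; ring
          rw [this]; ring
  · have : schrod 2 t f = 0 := by
      ext x
      rw [schrod, if_neg ht.ne', integral_undef, mul_zero]; rfl
      intro hx
      apply hi
      refine hx.norm.mono' hf.aestronglyMeasurable (ae_of_all _ fun y => ?_)
      have h3 : Complex.exp (Complex.I * ((‖x - y‖ ^ 2 : ℝ) : ℂ) / (4 * (t : ℂ))) = e (x - y) := rfl
      rw [h3, norm_mul, he, one_mul]
    rw [this]; simp

lemma lint_weight (α : ℝ) (h0 : 0 < α) (h1 : α < 1) (A : Set ℝ) (hA : MeasurableSet A) (hA0 : A ⊆ Ici 0)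
    (hAf : volume A ≠ ⊤) :
    ∫⁻ s in A, ENNReal.ofReal (s ^ (-α)) ≤ ENNReal.ofReal (1 / (1 - α) + 1) * volume A ^ (1 - α) := by
  have h1' : 0 < 1 - α := by linarith
  by_cases hz : volume A = 0
  · rw [Measure.restrict_eq_zero.2 hz]; simp
  set δ := (volume A).toReal with hδ
  have hδp : 0 < δ := ENNReal.toReal_pos hz hAf
  have hAδ : volume A = ENNReal.ofReal δ := (ENNReal.ofReal_toReal hAf).symm
  calc ∫⁻ s in A, ENNReal.ofReal (s ^ (-α)) 
      ≤ ∫⁻ s in A, ((Ioc 0 δ).indicator (fun s => ENNReal.ofReal (s ^ ((1-α)-1))) s + ENNReal.ofReal (δ ^ (-α))) := by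
        apply setLIntegral_mono' hA
        intro s hs
        have hs0 : 0 ≤ s := hA0 hs
        rcases hs0.eq_or_lt with h | h
        · rw [← h, Real.zero_rpow (by linarith)]; simp
        by_cases hsd : s ≤ δ
        · rw [indicator_of_mem (by exact ⟨h, hsd⟩), show 1 - α - 1 = -α by ring]
          exact le_self_add
        · refine le_trans ?_ le_add_self
          apply ENNReal.ofReal_le_ofReal
          exact Real.rpow_le_rpow_of_nonpos hδp (not_le.1 hsd).le (by linarith)
    _ = (∫⁻ s in A, (Ioc 0 δ).indicator (fun s => ENNReal.ofReal (s ^ ((1-α)-1))) s) + ENNReal.ofReal (δ ^ (-α)) * volume A := by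
        rw [lintegral_add_right _ measurable_const, setLIntegral_const]
    _ ≤ (∫⁻ s, (Ioc 0 δ).indicator (fun s => ENNReal.ofReal (s ^ ((1-α)-1))) s) + ENNReal.ofReal (δ ^ (-α)) * volume A := by
        gcongr; exact Measure.restrict_le_self
    _ = ENNReal.ofReal (δ ^ (1 - α) / (1 - α)) + ENNReal.ofReal (δ ^ (-α)) * ENNReal.ofReal δ := by
        rw [lintegral_indicator measurableSet_Ioc, lint_rpow _ _ h1' hδp.le, hAδ]
    _ = _ := by
        rw [hAδ, ENNReal.ofReal_rpow_of_pos hδp, ← ENNReal.ofReal_mul (by positivity), ← ENNReal.ofReal_mul (by positivity),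
          ← ENNReal.ofReal_add (by positivity) (by positivity)]
        congr 1
        have : δ ^ (-α) * δ = δ ^ (1 - α) := by
          nth_rewrite 2 [← Real.rpow_one δ]
          rw [← Real.rpow_add hδp]; congr 1; ring
        rw [this]; ring

lemma ennreal_sq_layer (c : ℝ≥0∞) :
    c ^ 2 = ∫⁻ l in Ioi (0:ℝ), {l : ℝ | ENNReal.ofReal l < c}.indicator (fun l => ENNReal.ofReal (2 * l)) l := by
  have hm : MeasurableSet {l : ℝ | ENNReal.ofReal l < c} := measurableSet_lt (by fun_prop) (by fun_prop)
  have fin : ∀ b : ℝ, 0 ≤ b → ∫⁻ l in Ioc (0:ℝ) b, ENNReal.ofReal (2 * l) = ENNReal.ofReal b ^ 2 := by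
    intro b hb
    have := lint_rpow 2 b (by norm_num) hb
    simp_rw [ENNReal.ofReal_mul (show (0:ℝ) ≤ 2 by norm_num)]
    rw [lintegral_const_mul _ (by fun_prop)]
    norm_num at this
    rw [this, ENNReal.ofReal_div_of_pos (by norm_num), ENNReal.ofReal_pow hb, ENNReal.ofReal_ofNat]
    exact ENNReal.mul_div_cancel (by norm_num) (by norm_num)
  rw [lintegral_indicator hm, Measure.restrict_restrict hm]
  by_cases hc : c = ⊤
  · have : {l : ℝ | ENNReal.ofReal l < c} ∩ Ioi 0 = Ioi 0 := by
      ext l; simp [hc]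
    rw [this, hc]
    symm
    rw [ENNReal.top_pow (by norm_num), ← top_le_iff]
    refine ENNReal.le_of_forall_nnreal_lt fun b _ => ?_
    calc (b : ℝ≥0∞) ≤ ENNReal.ofReal ((b:ℝ) + 1) ^ 2 := by
          rw [← ENNReal.ofReal_pow (by positivity), ← ENNReal.ofReal_coe_nnreal]
          apply ENNReal.ofReal_le_ofReal
          have := b.2
          nlinarith [b.coe_nonneg]
      _ = ∫⁻ l in Ioc (0:ℝ) (b+1), ENNReal.ofReal (2 * l) := (fin _ (by positivity)).symm
      _ ≤ _ := lintegral_mono_set Ioc_subset_Ioi_self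
  · have : {l : ℝ | ENNReal.ofReal l < c} ∩ Ioi 0 = Ioo 0 c.toReal := by
      ext l
      simp only [mem_inter_iff, mem_ofPred_eq, mem_Ioi, mem_Ioo]
      constructor
      · rintro ⟨h1, h2⟩; exact ⟨h2, (ENNReal.ofReal_lt_iff_lt_toReal h2.le hc).1 h1⟩
      · rintro ⟨h1, h2⟩; exact ⟨(ENNReal.ofReal_lt_iff_lt_toReal h1.le hc).2 h2, h1⟩
    rw [this, setLIntegral_congr Ioo_ae_eq_Ioc, fin _ ENNReal.toReal_nonneg, ENNReal.ofReal_toReal hc]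

lemma lorentz_holder (r : ℝ) (hr : 2 < r) (I : Set ℝ) (hI : MeasurableSet I) (hI0 : I ⊆ Ici 0)
    (hIf : volume I ≠ ⊤) (g : ℝ → ℝ≥0∞) (hg : Measurable g) :
    ∫⁻ s in I, ENNReal.ofReal (s ^ (-(2 * (1 / 2 - 1 / r)))) * g s ^ 2 ≤ 
      ENNReal.ofReal (r / 2 + 1) * lorentzNorm (volume.restrict I) (ENNReal.ofReal r) 2 g ^ 2 := by
  set α := 2 * (1 / 2 - 1 / r) with hα
  have hα' : 1 - α = 2 / r := by rw [hα]; ring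
  have hα1 : α < 1 := by
    have : 0 < 2 / r := by positivity
    linarith
  have hα0 : 0 < α := by
    have : 2 / r < 1 := by rw [div_lt_one (by linarith)]; exact hr
    linarith
  have hmS : ∀ l : ℝ, MeasurableSet {s | ENNReal.ofReal l < g s} := fun l => measurableSet_lt measurable_const hg
  set G : ℝ → ℝ → ℝ≥0∞ := fun s l => {q : ℝ × ℝ | ENNReal.ofReal q.2 < g q.1}.indicator 
    (fun q => ENNReal.ofReal (2 * q.2) * ENNReal.ofReal (q.1 ^ (-α))) (s, l) with hG
  have hGm : Measurable (Function.uncurry G) := by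
    have : Function.uncurry G = {q : ℝ × ℝ | ENNReal.ofReal q.2 < g q.1}.indicator 
      (fun q => ENNReal.ofReal (2 * q.2) * ENNReal.ofReal (q.1 ^ (-α))) := by
      ext q; rfl
    rw [this]
    apply Measurable.indicator
    · fun_prop
    · apply measurableSet_lt <;> fun_prop
  calc ∫⁻ s in I, ENNReal.ofReal (s ^ (-α)) * g s ^ 2
      = ∫⁻ s in I, ∫⁻ l in Ioi (0:ℝ), G s l := by
        congr 1; ext s
        rw [ennreal_sq_layer, ← lintegral_const_mul]
        · congr 1; ext l
          simp only [hG]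
          by_cases h : ENNReal.ofReal l < g s
          · rw [indicator_of_mem (by exact h), indicator_of_mem (by exact h), mul_comm]
          · rw [indicator_of_notMem (by exact h), indicator_of_notMem (by exact h), mul_zero]
        · apply Measurable.indicator
          · fun_prop
          · exact measurableSet_lt (by fun_prop) (by fun_prop)
    _ = ∫⁻ l in Ioi (0:ℝ), ∫⁻ s in I, G s l := lintegral_lintegral_swap hGm.aemeasurable
    _ ≤ ∫⁻ l in Ioi (0:ℝ), ENNReal.ofReal (2 * (r / 2 + 1)) * 
        ((ENNReal.ofReal l * (volume.restrict I) {x | ENNReal.ofReal l < g x} ^ (ENNReal.ofReal r)⁻¹.toReal) ^ (2 : ℝ≥0∞).toReal /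
          ENNReal.ofReal l) := by
        apply setLIntegral_mono' measurableSet_Ioi
        intro l hl
        have hl : 0 < l := hl
        have e1 : ∀ s, G s l = ENNReal.ofReal (2 * l) * {s | ENNReal.ofReal l < g s}.indicator 
            (fun s => ENNReal.ofReal (s ^ (-α))) s := by
          intro s
          simp only [hG]
          by_cases h : ENNReal.ofReal l < g s
          · rw [indicator_of_mem (by exact h), indicator_of_mem (by exact h)]
          · rw [indicator_of_notMem (by exact h), indicator_of_notMem (by exact h), mul_zero]
        simp_rw [e1]
        rw [lintegral_const_mul _ ((by fun_prop : Measurable fun s : ℝ => ENNReal.ofReal (s ^ (-α))).indicator (hmS l)),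
          lintegral_indicator (hmS l), Measure.restrict_restrict (hmS l), Measure.restrict_apply (hmS l)]
        set A := {s | ENNReal.ofReal l < g s} ∩ I
        have hw := lint_weight α hα0 hα1 A ((hmS l).inter hI) (inter_subset_right.trans hI0) 
          (measure_ne_top_of_subset inter_subset_right hIf)
        refine (mul_le_mul_right hw _).trans (le_of_eq ?_)
        have hl0 : ENNReal.ofReal l ≠ 0 := by simpa using hl
        have e2 : (ENNReal.ofReal l * volume A ^ (ENNReal.ofReal r)⁻¹.toReal) ^ (2 : ℝ≥0∞).toReal / ENNReal.ofReal l =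
            ENNReal.ofReal l * volume A ^ (1 - α) := by
          rw [hα', ENNReal.toReal_inv, ENNReal.toReal_ofReal (by linarith), ENNReal.toReal_ofNat,
            ENNReal.mul_rpow_of_nonneg _ _ (by norm_num), ← ENNReal.rpow_mul, ENNReal.rpow_ofNat, pow_two]
          rw [mul_assoc, mul_comm, ENNReal.mul_div_cancel_right hl0 ENNReal.ofReal_ne_top]
          congr 2; ring
        rw [e2, hα', one_div_div, ENNReal.ofReal_mul (by norm_num), ENNReal.ofReal_mul (by norm_num)]
        ring
    _ = ENNReal.ofReal (2 * (r / 2 + 1)) * ∫⁻ l in Ioi (0:ℝ),  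
        ((ENNReal.ofReal l * (volume.restrict I) {x | ENNReal.ofReal l < g x} ^ (ENNReal.ofReal r)⁻¹.toReal) ^ (2 : ℝ≥0∞).toReal /
          ENNReal.ofReal l) := by
        rw [lintegral_const_mul' _ _ ENNReal.ofReal_ne_top]
    _ ≤ _ := by
        rw [lorentzNorm, if_neg (by norm_num), ← ENNReal.rpow_natCast, ← ENNReal.rpow_mul]
        norm_num
        rw [← mul_assoc]
        refine mul_le_mul_left ?_ _
        rw [mul_comm]
        gcongr
        rw [← ENNReal.ofReal_ofNat]
        exact ENNReal.ofReal_le_ofReal hr.le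

lemma minkowski_aux {X : Type*} [MeasurableSpace X] (ν : Measure X) [SFinite ν] (μ : Measure ℝ) [SFinite μ]
    (r : ℝ) (hr : 2 < r) (G : ℝ → X → ℂ)
    (hG : Measurable (Function.uncurry G)) (a : ℝ → ℝ≥0∞) (ha : Measurable a)
    (hGa : ∀ᵐ s ∂μ, eLpNorm (G s) (ENNReal.ofReal r) ν ≤ a s) :
    eLpNorm (fun x => ∫ s, G s x ∂μ) (ENNReal.ofReal r) ν ≤ ∫⁻ s, a s ∂μ := by
  have hr0 : 0 < r := by linarith
  have hr1 : 0 < r - 1 := by linarith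
  by_cases htop : ∫⁻ s, a s ∂μ = ⊤
  · rw [htop]; exact le_top
  have hafin : ∀ᵐ s ∂μ, a s < ⊤ := ae_lt_top ha htop
  have hGs : ∀ s, Measurable (G s) := fun s => hG.comp measurable_prodMk_left
  have hGx : ∀ x, Measurable (fun s => G s x) := fun x => hG.comp measurable_prodMk_right
  have hz : ∀ᵐ x ∂ν, ∀ᵐ s ∂μ, a s = 0 → G s x = 0 := by
    rw [Measure.ae_ae_comm (p := fun x s => a s = 0 → G s x = 0)]
    · filter_upwards [hGa] with s hs
      by_cases h : a s = 0
      · rw [h, nonpos_iff_eq_zero, eLpNorm_eq_zero_iff (hGs s).aestronglyMeasurable (by simpa using hr0)] at hs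
        filter_upwards [hs] with x hx _ using hx
      · exact ae_of_all _ fun x hx => absurd hx h
    · have m1 : MeasurableSet {q : X × ℝ | a q.2 = 0} :=
        measurableSet_eq_fun (by fun_prop) measurable_const
      have m2 : MeasurableSet {q : X × ℝ | G q.2 q.1 = 0} :=
        measurableSet_eq_fun (hG.comp measurable_swap) measurable_const
      exact m1.imp m2
  have key : ∫⁻ x, ‖∫ s, G s x ∂μ‖ₑ ^ r ∂ν ≤ (∫⁻ s, a s ∂μ) ^ r := by
    have hpq : r.HolderConjugate (r / (r - 1)) := Real.HolderConjugate.conjExponent (by linarith)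
    calc ∫⁻ x, ‖∫ s, G s x ∂μ‖ₑ ^ r ∂ν 
        ≤ ∫⁻ x, (∫⁻ s, ‖G s x‖ₑ ^ r * a s ^ (-(r - 1)) ∂μ) * (∫⁻ s, a s ∂μ) ^ (r - 1) ∂ν := by
          apply lintegral_mono_ae
          filter_upwards [hz] with x hx
          have h1 : ‖∫ s, G s x ∂μ‖ₑ ≤ ∫⁻ s, (‖G s x‖ₑ * a s ^ (-((r - 1)/r))) * a s ^ ((r-1)/r) ∂μ := by
            refine (enorm_integral_le_lintegral_enorm _).trans ?_
            apply lintegral_mono_ae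
            filter_upwards [hx, hafin] with s hs hs2
            by_cases h : a s = 0
            · simp [hs h]
            · rw [mul_assoc, ← ENNReal.rpow_add _ _ h hs2.ne]
              simp
          have h2 := ENNReal.lintegral_mul_le_Lp_mul_Lq μ hpq 
            (f := fun s => ‖G s x‖ₑ * a s ^ (-((r - 1)/r))) (g := fun s => a s ^ ((r-1)/r))
            (((hGx x).enorm.mul (ha.pow_const _)).aemeasurable) (ha.pow_const _).aemeasurable
          have h3 := ENNReal.rpow_le_rpow (h1.trans h2) hr0.le
          refine h3.trans (le_of_eq ?_)
          rw [ENNReal.mul_rpow_of_nonneg _ _ hr0.le, ← ENNReal.rpow_mul, ← ENNReal.rpow_mul,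
            one_div_mul_cancel hr0.ne', ENNReal.rpow_one]
          congr 1
          · congr 1; ext s
            rw [ENNReal.mul_rpow_of_nonneg _ _ hr0.le, ← ENNReal.rpow_mul]
            congr 2; field_simp
          · congr 1
            · congr 1; ext s
              rw [← ENNReal.rpow_mul, div_mul_div_cancel₀' (by positivity), div_self hr0.ne', ENNReal.rpow_one] 
            · field_simp
      _ = (∫⁻ x, ∫⁻ s, ‖G s x‖ₑ ^ r * a s ^ (-(r - 1)) ∂μ ∂ν) * (∫⁻ s, a s ∂μ) ^ (r - 1) := by
          rw [lintegral_mul_const']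
          exact ENNReal.rpow_ne_top_of_nonneg hr1.le htop
      _ = (∫⁻ s, ∫⁻ x, ‖G s x‖ₑ ^ r * a s ^ (-(r - 1)) ∂ν ∂μ) * (∫⁻ s, a s ∂μ) ^ (r - 1) := by
          rw [lintegral_lintegral_swap]
          have : Measurable (fun q : X × ℝ => G q.2 q.1) := hG.comp measurable_swap
          exact ((this.enorm.pow_const _).mul ((ha.comp measurable_snd).pow_const _)).aemeasurable
      _ ≤ (∫⁻ s, a s ∂μ) * (∫⁻ s, a s ∂μ) ^ (r - 1) := by
          gcongr ?_ * _
          apply lintegral_mono_ae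
          filter_upwards [hGa] with s hs
          rw [lintegral_mul_const _ ((hGs s).enorm.pow_const _)]
          have h4 : ∫⁻ x, ‖G s x‖ₑ ^ r ∂ν ≤ a s ^ r := by
            rw [eLpNorm_eq_lintegral_rpow_enorm_toReal (by simpa using hr0) (by simp), ENNReal.toReal_ofReal hr0.le, one_div] at hs
            have := ENNReal.rpow_le_rpow hs hr0.le
            rwa [ENNReal.rpow_inv_rpow hr0.ne'] at this
          refine (mul_le_mul_left h4 _).trans ?_
          by_cases h : a s = 0
          · simp [h, hr0]
          by_cases h' : a s = ⊤
          · simp [h', hr0]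
          · rw [← ENNReal.rpow_add _ _ h h']; simp
      _ = _ := by
          nth_rewrite 1 [← ENNReal.rpow_one (∫⁻ s, a s ∂μ)]
          rw [← ENNReal.rpow_add_of_nonneg _ _ (by norm_num) hr1.le]
          congr 1; ring
  rw [eLpNorm_eq_lintegral_rpow_enorm_toReal (by simpa using hr0) (by simp), ENNReal.toReal_ofReal hr0.le, one_div]
  have := ENNReal.rpow_le_rpow key (inv_pos.2 hr0).le
  rwa [ENNReal.rpow_rpow_inv hr0.ne'] at this

lemma nonlin_holder (r : ℝ) (hr : 2 < r) (f : EuclideanSpace ℝ (Fin 2) → ℂ) (hf : Measurable f) :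
    eLpNorm (nonlin 2 f) (ENNReal.ofReal (r / (r - 1))) volume ≤ 
      eLpNorm f (ENNReal.ofReal r) volume * eLpNorm f (ENNReal.ofReal (2 * r / (r - 2))) volume ^ 2 := by
  have hr0 : 0 < r := by linarith
  have hr1 : 0 < r - 1 := by linarith
  have hr2 : 0 < r - 2 := by linarith
  have e : eLpNorm (nonlin 2 f) (ENNReal.ofReal (r / (r - 1))) volume = 
      eLpNorm (f • (f • f)) (ENNReal.ofReal (r / (r - 1))) volume := by
    apply eLpNorm_congr_norm_ae (ae_of_all _ fun x => ?_)
    change ‖((‖f x‖ ^ (2:ℝ) : ℝ) : ℂ) * f x‖ = ‖f x * (f x * f x)‖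
    simp only [norm_mul, Complex.norm_real]
    rw [Real.norm_of_nonneg (by positivity), Real.rpow_ofNat]; ring
  have t1 : ENNReal.HolderTriple (ENNReal.ofReal r) (ENNReal.ofReal (r / (r - 2))) (ENNReal.ofReal (r / (r - 1))) := ⟨by
    rw [← ENNReal.ofReal_inv_of_pos (by positivity), ← ENNReal.ofReal_inv_of_pos (by positivity), ← ENNReal.ofReal_inv_of_pos (by positivity),
      ← ENNReal.ofReal_add (by positivity) (by positivity)]
    congr 1; field_simp; ring⟩
  have t2 : ENNReal.HolderTriple (ENNReal.ofReal (2 * r / (r - 2))) (ENNReal.ofReal (2 * r / (r - 2))) (ENNReal.ofReal (r / (r - 2))) := ⟨by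
    rw [← ENNReal.ofReal_inv_of_pos (by positivity), ← ENNReal.ofReal_inv_of_pos (by positivity), 
      ← ENNReal.ofReal_add (by positivity) (by positivity)]
    congr 1; field_simp; norm_num⟩
  rw [e, pow_two]
  refine (eLpNorm_smul_le_mul_eLpNorm (p := ENNReal.ofReal r) (q := ENNReal.ofReal (r / (r - 2)))
    (hf.smul hf).aestronglyMeasurable hf.aestronglyMeasurable).trans ?_
  gcongr
  exact eLpNorm_smul_le_mul_eLpNorm hf.aestronglyMeasurable hf.aestronglyMeasurable

lemma schrod_measurable (t : ℝ) (v : ℝ → EuclideanSpace ℝ (Fin 2) → ℂ) (hv : Measurable (Function.uncurry v)) :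
    Measurable (Function.uncurry fun s x => schrod 2 (t - s) (v s) x) := by
  have e : (Function.uncurry fun s x => schrod 2 (t - s) (v s) x) = fun q : ℝ × EuclideanSpace ℝ (Fin 2) =>
      if t - q.1 = 0 then v q.1 q.2 else
      (4 * (Real.pi : ℂ) * Complex.I * ((t - q.1 : ℝ) : ℂ)) ^ (-((2 : ℕ) : ℂ) / 2) *
      ∫ y, Complex.exp (Complex.I * ((‖q.2 - y‖ ^ 2 : ℝ) : ℂ) / (4 * ((t - q.1 : ℝ) : ℂ))) * v q.1 y := by
    ext q
    simp only [Function.uncurry, schrod]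
    split_ifs <;> rfl
  rw [e]
  apply Measurable.ite
  · exact measurableSet_eq_fun (by fun_prop) measurable_const
  · exact hv
  · apply Measurable.mul
    · fun_prop
    · apply StronglyMeasurable.measurable
      apply StronglyMeasurable.integral_prod_right
      apply Measurable.stronglyMeasurable
      apply Measurable.mul
      · fun_prop
      · exact hv.comp (by fun_prop : Measurable fun q : (ℝ × EuclideanSpace ℝ (Fin 2)) × EuclideanSpace ℝ (Fin 2) => (q.1.1, q.2))

/-- **Two-dimensional early-time Duhamel estimate.**  Fix `2 < r < ∞` and set `q = 2r/(r-2)`.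
For any `t > 0`, any measurable interval `I ⊆ [0, t/2]`, and any measurable `u` on `I × ℝ²`,
`‖∫_I e^{i(t-s)Δ}(|u|²u)(s) ds‖_{L^r_x} ≤ C t^{-2(1/2-1/r)}
  (sup_{s∈I} s^{2(1/2-1/r)} ‖u(s)‖_{L^r_x}) ‖u‖²_{L^{r,2}_s L^q_x(I×ℝ²)}`, with `C = C(r)`. -/
theorem early_time_duhamel_2d (r : ℝ) (hr : 2 < r) :
    ∃ C : ℝ, 0 < C ∧
      ∀ t : ℝ, 0 < t →
        ∀ I : Set ℝ, MeasurableSet I → I.OrdConnected → I ⊆ Set.Icc 0 (t / 2) →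
          ∀ u : ℝ → EuclideanSpace ℝ (Fin 2) → ℂ, Measurable (Function.uncurry u) →
            eLpNorm (fun x => ∫ s in I, schrod 2 (t - s) (nonlin 2 (u s)) x)
                (ENNReal.ofReal r) volume ≤
              ENNReal.ofReal (C * t ^ (-(2 * (1 / 2 - 1 / r)))) *
                (⨆ s ∈ I, ENNReal.ofReal (s ^ (2 * (1 / 2 - 1 / r))) *
                  eLpNorm (u s) (ENNReal.ofReal r) volume) *
                lorentzMixedNorm volume I (ENNReal.ofReal r) 2
                    (ENNReal.ofReal (2 * r / (r - 2))) u ^ 2 := by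
  obtain ⟨C, hC, hdisp⟩ := dispersive r hr
  have hr0 : 0 < r := by linarith
  have hr2 : 0 < r - 2 := by linarith
  set α := 2 * (1 / 2 - 1 / r) with hα
  have hα0 : 0 < α := by
    have h1 : 2 / r < 1 := by rw [div_lt_one (by linarith)]; exact hr
    have h2 : α = 1 - 2 / r := by rw [hα]; ring
    linarith
  refine ⟨C * 2 ^ α * (r / 2 + 1), by positivity, fun t ht I hI _ hIt u hu => ?_⟩
  set A := ⨆ s ∈ I, ENNReal.ofReal (s ^ α) * eLpNorm (u s) (ENNReal.ofReal r) volume with hA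
  set q : ℝ := 2 * r / (r - 2) with hq
  have hqp : 0 < q := by positivity
  set g : ℝ → ℝ≥0∞ := fun s => eLpNorm (u s) (ENNReal.ofReal q) volume with hg
  have hus : ∀ s, Measurable (u s) := fun s => hu.comp measurable_prodMk_left
  have hgm : Measurable g := by
    have : g = fun s => (∫⁻ y, ‖u s y‖ₑ ^ q) ^ (1 / q) := by
      ext s
      simp only [hg]
      rw [eLpNorm_eq_lintegral_rpow_enorm_toReal (by simpa using hqp) (by simp), ENNReal.toReal_ofReal hqp.le]
    rw [this]
    apply Measurable.pow_const
    exact Measurable.lintegral_prod_right (hu.enorm.pow_const q)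
  have hnl : Measurable (Function.uncurry fun s => nonlin 2 (u s)) := by
    have : (Function.uncurry fun s => nonlin 2 (u s)) = fun q => 
      ((‖Function.uncurry u q‖ ^ (2:ℝ) : ℝ) : ℂ) * Function.uncurry u q := rfl
    rw [this]
    fun_prop
  have hnls : ∀ s, Measurable (nonlin 2 (u s)) := fun s => by
    have h := hus s
    change Measurable fun x => ((‖u s x‖ ^ (2:ℝ) : ℝ) : ℂ) * u s x
    fun_prop
  have hI0 : I ⊆ Ici 0 := fun s hs => (hIt hs).1
  have hIf : volume I ≠ ⊤ := measure_ne_top_of_subset hIt (by simp)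
  set K : ℝ := C * 2 ^ α * t ^ (-α) with hK
  have hKp : 0 < K := by positivity
  set a : ℝ → ℝ≥0∞ := fun s => (ENNReal.ofReal K * A) * (ENNReal.ofReal (s ^ (-α)) * g s ^ 2) with ha
  have ham : Measurable a := by fun_prop
  have hbound : ∀ᵐ s ∂(volume.restrict I), 
      eLpNorm (fun x => schrod 2 (t - s) (nonlin 2 (u s)) x) (ENNReal.ofReal r) volume ≤ a s := by
    have hne : ∀ᵐ s ∂(volume.restrict I), s ≠ 0 := ae_restrict_of_ae (Measure.ae_ne volume 0)
    filter_upwards [self_mem_ae_restrict hI, hne] with s hs hs0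
    have hsp : 0 < s := lt_of_le_of_ne (hIt hs).1 hs0.symm
    have hst : t / 2 ≤ t - s := by have := (hIt hs).2; linarith
    refine (hdisp (t - s) (by linarith) (nonlin 2 (u s)) (hnls s)).trans ?_
    refine (mul_le_mul_right (nonlin_holder r hr (u s) (hus s)) _).trans ?_
    have hur : eLpNorm (u s) (ENNReal.ofReal r) volume ≤ ENNReal.ofReal (s ^ (-α)) * A := by
      have h1 : ENNReal.ofReal (s ^ α) * eLpNorm (u s) (ENNReal.ofReal r) volume ≤ A :=
        le_iSup₂ (f := fun s (_ : s ∈ I) => ENNReal.ofReal (s ^ α) * eLpNorm (u s) (ENNReal.ofReal r) volume) s hs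
      calc eLpNorm (u s) (ENNReal.ofReal r) volume = 
          ENNReal.ofReal (s ^ (-α)) * (ENNReal.ofReal (s ^ α) * eLpNorm (u s) (ENNReal.ofReal r) volume) := by
            rw [← mul_assoc, ← ENNReal.ofReal_mul (by positivity), ← Real.rpow_add hsp]; simp
        _ ≤ _ := by gcongr
    have hKt : C * (t - s) ^ (-α) ≤ K := by
      rw [hK, mul_assoc]
      gcongr
      calc (t - s) ^ (-α) ≤ (t / 2) ^ (-α) := 
            Real.rpow_le_rpow_of_nonpos (by positivity) hst (by linarith)
        _ = 2 ^ α * t ^ (-α) := by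
            rw [Real.div_rpow ht.le (by norm_num), Real.rpow_neg (by norm_num : (0:ℝ) ≤ 2), div_inv_eq_mul, mul_comm]
    calc _ ≤ ENNReal.ofReal K * ((ENNReal.ofReal (s ^ (-α)) * A) * g s ^ 2) :=
          mul_le_mul' (ENNReal.ofReal_le_ofReal hKt) (mul_le_mul' hur le_rfl)
      _ = a s := by simp only [ha]; ring
  calc _ ≤ ∫⁻ s in I, a s := minkowski_aux volume (volume.restrict I) r hr _ 
          (schrod_measurable t (fun s => nonlin 2 (u s)) hnl) a ham hbound
    _ = (ENNReal.ofReal K * A) * ∫⁻ s in I, ENNReal.ofReal (s ^ (-α)) * g s ^ 2 := by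
        rw [lintegral_const_mul _ (by fun_prop)]
    _ ≤ (ENNReal.ofReal K * A) * (ENNReal.ofReal (r / 2 + 1) * lorentzNorm (volume.restrict I) (ENNReal.ofReal r) 2 g ^ 2) := by
        gcongr
        exact lorentz_holder r hr I hI hI0 hIf g hgm
    _ = _ := by
        have : C * 2 ^ α * (r / 2 + 1) * t ^ (-α) = K * (r / 2 + 1) := by rw [hK]; ring
        rw [this, ENNReal.ofReal_mul hKp.le, lorentzMixedNorm]
        ring
end
end
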